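/- arXiv:0709.0854 — 2 statements merged into one kernel-verified Lean document; each statement's English description precedes it below -/
import Mathlib

section
/- Let ψ : ℤ_{≥0} → ℝ_{>0} be non-increasing and 1 ≤ ℓ ≤ n. If ∑_{h=1}^∞ h^{n-1} ψ(h) = ∞, then the set ℒ_{n,ℓ}(ψ) of α ∈ ℝⁿ such that ‖x₁α₁ + ⋯ + xₙαₙ‖ ≤ ψ(H(x)) for infinitely many x ∈ ℤⁿ with max{|x_{ℓ+1}|,...,|xₙ|} < max{|x₁|,...,|x_ℓ|} has full Lebesgue measure (its complement has measure zero). -/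
open Finset MeasureTheory

/-- Distance to the nearest integer. -/
noncomputable def dnint (r : ℝ) : ℝ := |r - round r|

/-- Height of an integer vector: maximum of absolute values of coordinates. -/
def Hgt {n : ℕ} (x : Fin n → ℤ) : ℕ := Finset.univ.sup fun i => (x i).natAbs

/-- The cone condition: the height is attained among the first `ℓ` coordinates. -/
def cone {n : ℕ} (ℓ : ℕ) (x : Fin n → ℤ) : Prop :=
  ((Finset.univ.filter fun i : Fin n => ℓ ≤ (i : ℕ)).sup fun i => (x i).natAbs) <
  ((Finset.univ.filter fun i : Fin n => (i : ℕ) < ℓ).sup fun i => (x i).natAbs)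

/-- The restricted Diophantine exponent `μ_{n,ℓ}(α)`. -/
noncomputable def mu (n ℓ : ℕ) (α : Fin n → ℝ) : ℝ :=
  sSup {m : ℝ | 0 ≤ m ∧ {x : Fin n → ℤ | cone ℓ x ∧
    0 < dnint (∑ i, (x i : ℝ) * α i) ∧
    dnint (∑ i, (x i : ℝ) * α i) ≤ (Hgt x : ℝ) ^ (-m)}.Infinite}


lemma ks_union {Ω ι : Type*} [MeasurableSpace Ω] (μ : Measure Ω) [IsProbabilityMeasure μ]
    (E : ι → Set Ω) (hE : ∀ i, MeasurableSet (E i)) (F : Finset ι) :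
    (∑ i ∈ F, μ.real (E i)) ^ 2 ≤
      (∑ i ∈ F, ∑ j ∈ F, μ.real (E i ∩ E j)) * μ.real (⋃ i ∈ F, E i) := by
  classical
  set U : Set Ω := ⋃ i ∈ F, E i with hU
  have hUm : MeasurableSet U := F.measurableSet_biUnion fun i _ => hE i
  set f : Ω → ℝ := fun ω => ∑ i ∈ F, (E i).indicator 1 ω with hf
  have hInd : ∀ i, Integrable ((E i).indicator (1 : Ω → ℝ)) μ := fun i =>
    (integrable_const (1:ℝ)).indicator (hE i)
  have hfi : Integrable f μ := integrable_finsetSum _ fun i _ => hInd i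
  have h1 : ∫ ω, f ω ∂μ = ∑ i ∈ F, μ.real (E i) := by
    rw [hf, integral_finsetSum _ fun i _ => hInd i]
    exact Finset.sum_congr rfl fun i _ => integral_indicator_one (hE i)
  have hff : ∀ ω, f ω ^ 2 = ∑ i ∈ F, ∑ j ∈ F, (E i ∩ E j).indicator (1 : Ω → ℝ) ω := by
    intro ω
    rw [hf, sq, Finset.sum_mul_sum]
    refine Finset.sum_congr rfl fun i _ => Finset.sum_congr rfl fun j _ => ?_
    by_cases hi : ω ∈ E i <;> by_cases hj : ω ∈ E j <;> simp [hi, hj]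
  have hInd2 : ∀ i j, Integrable ((E i ∩ E j).indicator (1 : Ω → ℝ)) μ := fun i j =>
    (integrable_const (1:ℝ)).indicator ((hE i).inter (hE j))
  have hf2i : Integrable (fun ω => f ω ^ 2) μ := by
    simp_rw [hff]
    exact integrable_finsetSum _ fun i _ => integrable_finsetSum _ fun j _ => hInd2 i j
  have h2 : ∫ ω, f ω ^ 2 ∂μ = ∑ i ∈ F, ∑ j ∈ F, μ.real (E i ∩ E j) := by
    simp_rw [hff]
    rw [integral_finsetSum _ fun i _ => integrable_finsetSum _ fun j _ => hInd2 i j]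
    refine Finset.sum_congr rfl fun i _ => ?_
    rw [integral_finsetSum _ fun j _ => hInd2 i j]
    exact Finset.sum_congr rfl fun j _ => integral_indicator_one ((hE i).inter (hE j))
  have hui : Integrable (U.indicator (1 : Ω → ℝ)) μ := (integrable_const (1:ℝ)).indicator hUm
  -- quadratic in t
  have key : ∀ t : ℝ, 0 ≤ μ.real U * (t * t) + (-2 * ∑ i ∈ F, μ.real (E i)) * t
      + ∑ i ∈ F, ∑ j ∈ F, μ.real (E i ∩ E j) := by
    intro t
    have h3 : ∫ ω, (f ω - t * U.indicator (1 : Ω → ℝ) ω) ^ 2 ∂μ =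
      μ.real U * (t * t) + (-2 * ∑ i ∈ F, μ.real (E i)) * t
      + ∑ i ∈ F, ∑ j ∈ F, μ.real (E i ∩ E j) := by
      have : ∀ ω, (f ω - t * U.indicator (1 : Ω → ℝ) ω) ^ 2 =
          (t * t) * U.indicator (1 : Ω → ℝ) ω + (-2 * t) * f ω + f ω ^ 2 := by
        intro ω
        by_cases h : ω ∈ U
        · simp [h]; ring
        · have : f ω = 0 := by
            rw [hf]
            refine Finset.sum_eq_zero fun i hi => ?_
            have : ω ∉ E i := fun h' => h (Set.mem_biUnion hi h')
            simp [this]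
          simp [h, this]
      simp_rw [this]
      have e1 : Integrable (fun ω => (t * t) * U.indicator (1 : Ω → ℝ) ω + (-2 * t) * f ω) μ :=
        (hui.const_mul _).add (hfi.const_mul _)
      rw [integral_add e1 hf2i, integral_add (hui.const_mul _) (hfi.const_mul _), integral_const_mul, integral_const_mul,
        h1, h2, integral_indicator_one hUm]
      ring
    rw [← h3]
    exact integral_nonneg fun ω => sq_nonneg _
  have := discrim_le_zero key
  rw [discrim] at this
  nlinarith

lemma ks {Ω ι : Type*} [Countable ι] [MeasurableSpace Ω] (μ : Measure Ω) [IsProbabilityMeasure μ]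
    (E : ι → Set Ω) (hE : ∀ i, MeasurableSet (E i)) (C : ℝ) (hC : 0 < C)
    (h : ∀ F₀ : Finset ι, ∀ M : ℝ, ∃ F : Finset ι, Disjoint F F₀ ∧ M ≤ ∑ i ∈ F, μ.real (E i) ∧
      ∑ i ∈ F, ∑ j ∈ F, μ.real (E i ∩ E j) ≤
        ∑ i ∈ F, μ.real (E i) + C * (∑ i ∈ F, μ.real (E i)) ^ 2) :
    1 / C ≤ μ.real {ω | {i | ω ∈ E i}.Infinite} := by
  classical
  set U : Finset ι → Set Ω := fun F₀ => ⋃ i ∈ {i | i ∉ F₀}, E i with hU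
  have hUm : ∀ F, MeasurableSet (U F) := fun F =>
    MeasurableSet.biUnion (Set.to_countable _) fun i _ => hE i
  have hU1 : ∀ F₀, 1 / C ≤ μ.real (U F₀) := by
    intro F₀
    have : ∀ M : ℝ, 0 < M → 1 ≤ (1 / M + C) * μ.real (U F₀) := by
      intro M hM
      obtain ⟨F, hd, hS, hh⟩ := h F₀ M
      have h1 := ks_union μ E hE F
      set S := ∑ i ∈ F, μ.real (E i)
      have hsub : (⋃ i ∈ F, E i) ⊆ U F₀ := by
        refine Set.iUnion₂_subset fun i hi => ?_
        exact Set.subset_biUnion_of_mem (u := E) (Finset.disjoint_left.1 hd hi)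
      have h2 : μ.real (⋃ i ∈ F, E i) ≤ μ.real (U F₀) :=
        measureReal_mono hsub (measure_ne_top _ _)
      have hSpos : 0 < S := hM.trans_le hS
      have h0 : 0 ≤ μ.real (⋃ i ∈ F, E i) := measureReal_nonneg
      have h3 : S ^ 2 ≤ (S + C * S ^ 2) * μ.real (U F₀) := by
        refine h1.trans ?_
        gcongr
      have h4 : 1 ≤ (1 / S + C) * μ.real (U F₀) := by
        have : (S + C * S ^ 2) * μ.real (U F₀) = S ^ 2 * ((1 / S + C) * μ.real (U F₀)) := by
          field_simp
        rw [this] at h3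
        exact le_of_mul_le_mul_left (by simpa using h3) (by positivity)
      refine h4.trans ?_
      gcongr
    have hlim : Filter.Tendsto (fun M : ℝ => (1 / M + C) * μ.real (U F₀)) Filter.atTop
        (nhds ((0 + C) * μ.real (U F₀))) := by
      refine Filter.Tendsto.mul_const _ (Filter.Tendsto.add_const _ ?_)
      exact (tendsto_inv_atTop_zero (𝕜 := ℝ)).congr fun x => (one_div x).symm
    have := ge_of_tendsto hlim (Filter.eventually_atTop.2 ⟨1, fun M hM => this M (by linarith)⟩)
    rw [div_le_iff₀ hC]; linarith
  have hset : {ω | {i | ω ∈ E i}.Infinite} = ⋂ F₀, U F₀ := by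
    ext ω
    simp only [Set.mem_ofPred_eq, hU, Set.mem_iInter, Set.mem_iUnion, exists_prop]
    constructor
    · intro hi F₀
      obtain ⟨i, hi1, hi2⟩ := hi.exists_notMem_finset F₀
      exact ⟨i, hi2, hi1⟩
    · intro hh hfin
      obtain ⟨i, hi1, hi2⟩ := hh hfin.toFinset
      exact hi1 (by simpa using hi2)
  have hdir : Directed (· ⊇ ·) U := by
    intro A B
    refine ⟨A ∪ B, ?_, ?_⟩ <;>
    · refine Set.biUnion_subset_biUnion_left ?_
      intro i hi
      simp only [Set.mem_ofPred_eq, Finset.mem_union, not_or] at hi ⊢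
      tauto
  have hm := hdir.measure_iInter (μ := μ) (fun F => (hUm F).nullMeasurableSet) ⟨∅, measure_ne_top _ _⟩
  rw [hset, measureReal_def, hm, ← ENNReal.ofReal_le_iff_le_toReal]
  · refine le_iInf fun F => ?_
    rw [ENNReal.ofReal_le_iff_le_toReal (measure_ne_top _ _)]
    exact hU1 F
  · rw [← hm]; exact measure_ne_top _ _

/-- non-coprime pairs are few -/
lemma totient_ge (q : ℕ) (hq : 0 < q) : (q : ℝ) - ∑ d ∈ (Icc 2 q).filter (· ∣ q), (q : ℝ) / d ≤ q.totient := by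
  have h1 : range q ⊆ (range q).filter (fun a => q.Coprime a) ∪
      ((Icc 2 q).filter (· ∣ q)).biUnion (fun d => (range q).filter (fun a => d ∣ a)) := by
    intro a ha
    simp only [mem_union, mem_filter, mem_biUnion, mem_Icc]
    by_cases h : q.Coprime a
    · exact Or.inl ⟨ha, h⟩
    · right
      have h0 : 0 < q.gcd a := Nat.gcd_pos_of_pos_left _ hq
      refine ⟨q.gcd a, ⟨⟨?_, Nat.gcd_le_left _ hq⟩, Nat.gcd_dvd_left _ _⟩, ha, Nat.gcd_dvd_right _ _⟩
      have : q.gcd a ≠ 1 := h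
      omega
  have h2 := (card_le_card h1).trans (card_union_le _ _)
  rw [card_range] at h2
  have h3 : #(((Icc 2 q).filter (· ∣ q)).biUnion (fun d => (range q).filter (fun a => d ∣ a))) ≤
      ∑ d ∈ (Icc 2 q).filter (· ∣ q), q / d := by
    refine card_biUnion_le.trans (sum_le_sum fun d hd => ?_)
    simp only [mem_filter, mem_Icc] at hd
    obtain ⟨⟨hd2, _⟩, k, rfl⟩ := hd
    have hd0 : 0 < d := by omega
    rw [Nat.mul_div_cancel_left _ hd0]
    calc _ ≤ #((range k).image (fun j => d * j)) := by
          refine card_le_card fun a ha => ?_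
          simp only [mem_filter, mem_range] at ha
          obtain ⟨ha, j, rfl⟩ := ha
          exact mem_image_of_mem _ (mem_range.2 (Nat.lt_of_mul_lt_mul_left ha))
      _ ≤ _ := card_image_le.trans (by simp)
  have h4 : q ≤ q.totient + ∑ d ∈ (Icc 2 q).filter (· ∣ q), q / d := by
    have : #((range q).filter (fun a => q.Coprime a)) = q.totient := rfl
    omega
  have h5 : (q : ℝ) ≤ q.totient + ∑ d ∈ (Icc 2 q).filter (· ∣ q), (q : ℝ) / d := by
    calc (q : ℝ) ≤ ((q.totient + ∑ d ∈ (Icc 2 q).filter (· ∣ q), q / d : ℕ) : ℝ) := by exact_mod_cast h4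
      _ ≤ _ := by
        push_cast
        gcongr
        exact Nat.cast_div_le
  linarith

lemma sum_inv_sq (N : ℕ) : ∑ d ∈ Icc 2 (N + 2), (1 : ℝ) / d ^ 2 ≤ 3 / 4 - 1 / (N + 2) := by
  induction N with
  | zero => norm_num
  | succ N ih =>
    rw [show N + 1 + 2 = N + 2 + 1 by ring, sum_Icc_succ_top (by omega)]
    have : (1 : ℝ) / ((N + 2 + 1 : ℕ) : ℝ) ^ 2 ≤ 1 / (N + 2) - 1 / (N + 1 + 2) := by
      push_cast
      rw [div_sub_div _ _ (by positivity) (by positivity), div_le_div_iff₀ (by positivity) (by positivity)]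
      ring_nf; nlinarith [(Nat.cast_nonneg N : (0:ℝ) ≤ N)]
    push_cast at *
    linarith

lemma sum_totient_div (N : ℕ) : (N : ℝ) / 4 ≤ ∑ q ∈ Icc 1 N, (q.totient : ℝ) / q := by
  have h1 : ∀ q ∈ Icc 1 N, (1 : ℝ) - ∑ d ∈ (Icc 2 N).filter (· ∣ q), (1 : ℝ) / d ≤ (q.totient : ℝ) / q := by
    intro q hq
    have hq := mem_Icc.1 hq
    have hq0 : (0:ℝ) < q := by exact_mod_cast hq.1
    rw [le_div_iff₀ hq0]
    refine le_trans ?_ (totient_ge q hq.1)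
    have : (Icc 2 N).filter (· ∣ q) = (Icc 2 q).filter (· ∣ q) := by
      ext d
      simp only [mem_filter, mem_Icc]
      constructor
      · rintro ⟨⟨a, b⟩, c⟩; exact ⟨⟨a, Nat.le_of_dvd hq.1 c⟩, c⟩
      · rintro ⟨⟨a, b⟩, c⟩; exact ⟨⟨a, b.trans hq.2⟩, c⟩
    rw [this, sub_mul, sum_mul]
    apply le_of_eq; congr 1
    · ring
    · exact sum_congr rfl fun d _ => by ring
  refine le_trans ?_ (sum_le_sum h1)
  rw [sum_sub_distrib]
  simp_rw [sum_filter]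
  rw [sum_comm]
  have h2 : ∀ d ∈ Icc 2 N, ∑ q ∈ Icc 1 N, (if d ∣ q then (1:ℝ) / d else 0) ≤ N * (1 / d ^ 2) := by
    intro d hd
    have hd := mem_Icc.1 hd
    have hd0 : (0:ℝ) < d := by exact_mod_cast (by omega : 0 < d)
    rw [← sum_filter, sum_const, nsmul_eq_mul]
    have : #((Icc 1 N).filter (d ∣ ·)) = N / d := by
      have := Nat.Ioc_filter_dvd_card_eq_div N d
      convert this using 3
      ext; simp only [mem_Icc, mem_Ioc]; omega
    rw [this]
    calc ((N / d : ℕ) : ℝ) * (1 / d) ≤ (N / d : ℝ) * (1 / d) := by gcongr; exact Nat.cast_div_le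
      _ = _ := by field_simp
  have h3 := sum_le_sum h2
  rw [← mul_sum] at h3
  have h4 : ∑ d ∈ Icc 2 N, (1 : ℝ) / d ^ 2 ≤ 3 / 4 := by
    rcases lt_or_ge N 2 with h | h
    · rw [Icc_eq_empty (by omega)]; norm_num
    · obtain ⟨k, rfl⟩ := Nat.exists_eq_add_of_le' h
      exact (sum_inv_sq k).trans (by simp; positivity)
  have h5 : (N : ℝ) * ∑ d ∈ Icc 2 N, (1 : ℝ) / d ^ 2 ≤ N * (3 / 4) := by gcongr
  simp only [sum_const, Nat.card_Icc, nsmul_eq_mul, mul_one, Nat.add_sub_cancel]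
  linarith

/-- power-weighted version -/
lemma sum_totient_pow (m N : ℕ) : (1 / 8 : ℝ) ^ (m + 1) * N ^ (m + 1) ≤
    ∑ q ∈ Icc 1 N, (q.totient : ℝ) / q * q ^ m := by
  have hle : ∀ q : ℕ, (q.totient : ℝ) / q ≤ 1 := fun q =>
    div_le_one_of_le₀ (by exact_mod_cast Nat.totient_le q) (by positivity)
  have h0 : ∀ q : ℕ, (0:ℝ) ≤ (q.totient : ℝ) / q := fun q => by positivity
  have h1 := sum_totient_div N
  have h2 : ∑ q ∈ Icc 1 N, ((q.totient : ℝ) / q - if (q : ℝ) ≤ N / 8 then 1 else 0) * (N / 8) ^ m ≤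
      ∑ q ∈ Icc 1 N, (q.totient : ℝ) / q * q ^ m := by
    refine sum_le_sum fun q _ => ?_
    split_ifs with h
    · have : ((q.totient : ℝ) / q - 1) * ((N : ℝ) / 8) ^ m ≤ 0 :=
        mul_nonpos_of_nonpos_of_nonneg (by linarith [hle q]) (by positivity)
      exact this.trans (by positivity)
    · rw [sub_zero]
      push Not at h
      gcongr
  refine le_trans ?_ h2
  rw [← sum_mul, sum_sub_distrib]
  have h3 : ∑ q ∈ Icc 1 N, (if (q : ℝ) ≤ N / 8 then (1:ℝ) else 0) ≤ N / 8 := by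
    rw [← sum_filter, sum_const, nsmul_eq_mul, mul_one]
    have : (Icc 1 N).filter (fun q : ℕ => (q : ℝ) ≤ N / 8) ⊆ Icc 1 (N / 8) := by
      intro q hq
      simp only [mem_filter, mem_Icc] at hq ⊢
      refine ⟨hq.1.1, ?_⟩
      rw [Nat.le_div_iff_mul_le (by norm_num)]
      have := hq.2
      rw [le_div_iff₀ (by norm_num)] at this
      exact_mod_cast this
    calc _ ≤ ((#(Icc 1 (N / 8)) : ℕ) : ℝ) := by exact_mod_cast card_le_card this
      _ = ((N / 8 : ℕ) : ℝ) := by simp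
      _ ≤ _ := by simpa using (Nat.cast_div_le (m := N) (n := 8) (α := ℝ))
  calc (1 / 8 : ℝ) ^ (m + 1) * N ^ (m + 1) = (N / 8) * (N / 8) ^ m := by rw [← mul_pow]; ring
    _ ≤ _ := by gcongr; linarith

/-- Abel summation comparison -/
lemma abel_compare (a b ψ : ℕ → ℝ) (hpos : ∀ h, 0 ≤ ψ h) (hmono : Antitone ψ)
    (hab : ∀ N, ∑ q ∈ Icc 1 N, a q ≤ ∑ q ∈ Icc 1 N, b q) (N : ℕ) :
    ∑ q ∈ Icc 1 N, a q * ψ q ≤ ∑ q ∈ Icc 1 N, b q * ψ q := by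
  have key : ∀ N, (∑ q ∈ Icc 1 N, (b q - a q)) * ψ N ≤ ∑ q ∈ Icc 1 N, (b q - a q) * ψ q := by
    intro N
    induction N with
    | zero => simp
    | succ N ih =>
      rw [sum_Icc_succ_top (by omega), sum_Icc_succ_top (by omega), add_mul]
      gcongr
      refine le_trans ?_ ih
      have : 0 ≤ ∑ q ∈ Icc 1 N, (b q - a q) := by rw [sum_sub_distrib]; linarith [hab N]
      gcongr
      exact hmono (Nat.le_succ _)
  have h1 := key N
  have h2 : 0 ≤ (∑ q ∈ Icc 1 N, (b q - a q)) * ψ N :=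
    mul_nonneg (by rw [sum_sub_distrib]; linarith [hab N]) (hpos _)
  simp_rw [sub_mul, sum_sub_distrib] at h1 h2
  simp_rw [sub_mul] at h2
  linarith

lemma sum_totient_psi (m : ℕ) (ψ : ℕ → ℝ) (hpos : ∀ h, 0 ≤ ψ h) (hmono : Antitone ψ) (N : ℕ) :
    (1 / 8 : ℝ) ^ (m + 1) * ∑ q ∈ Icc 1 N, (q : ℝ) ^ m * ψ q ≤
    ∑ q ∈ Icc 1 N, (q.totient : ℝ) / q * q ^ m * ψ q := by
  rw [mul_sum]
  simp_rw [← mul_assoc]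
  refine abel_compare (fun q => (1 / 8 : ℝ) ^ (m + 1) * (q : ℝ) ^ m) _ ψ hpos hmono (fun N => ?_) N
  refine le_trans ?_ (sum_totient_pow m N)
  rw [← mul_sum]
  gcongr
  calc ∑ q ∈ Icc 1 N, (q : ℝ) ^ m ≤ ∑ q ∈ Icc 1 N, (N : ℝ) ^ m := by
        refine sum_le_sum fun q hq => ?_
        have := (mem_Icc.1 hq).2
        gcongr
    _ = _ := by simp; ring

lemma diverge (m : ℕ) (ψ : ℕ → ℝ) (hpos : ∀ h, 0 ≤ ψ h) 
    (hdiv : ¬ Summable fun h : ℕ => (h : ℝ) ^ m * ψ h) (M : ℝ) :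
    ∃ N : ℕ, M ≤ ∑ q ∈ Icc 1 N, (q : ℝ) ^ m * ψ q := by
  rw [not_summable_iff_tendsto_nat_atTop_of_nonneg (fun h => by have := hpos h; positivity)] at hdiv
  obtain ⟨N, hN⟩ := (hdiv.eventually (Filter.eventually_ge_atTop (M + (0:ℝ) ^ m * ψ 0))).exists
  refine ⟨N, ?_⟩
  have : ∑ i ∈ range N, (i : ℝ) ^ m * ψ i ≤ ∑ i ∈ insert 0 (Icc 1 N), (i : ℝ) ^ m * ψ i := by
    refine sum_le_sum_of_subset_of_nonneg ?_ fun i _ _ => by have := hpos i; positivity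
    intro i hi
    simp only [mem_insert, mem_Icc, mem_range] at *
    omega
  rw [sum_insert (by simp)] at this
  push_cast at this
  linarith

lemma wlog_half (m : ℕ) (ψ : ℕ → ℝ) (hmono : Antitone ψ)
    (hdiv : ¬ Summable fun h : ℕ => (h : ℝ) ^ m * ψ h) :
    ¬ Summable fun h : ℕ => (h : ℝ) ^ m * min (ψ h) (1 / 2) := by
  intro hs
  by_cases h : ∃ h₀, ψ h₀ ≤ 1 / 2
  · obtain ⟨h₀, hh⟩ := h
    apply hdiv
    rw [← summable_nat_add_iff h₀] at hs ⊢
    convert hs using 3 with k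
    rw [min_eq_left]
    exact (hmono (by omega)).trans hh
  · push Not at h
    have := hs.tendsto_atTop_zero
    have h1 := this.eventually (gt_mem_nhds (show (0:ℝ) < 1 / 2 by norm_num))
    obtain ⟨k, hk, hk1⟩ := (h1.and (Filter.eventually_ge_atTop 1)).exists
    rw [min_eq_right (h k).le] at hk
    have : (1:ℝ) ≤ (k:ℝ) ^ m := one_le_pow₀ (by exact_mod_cast hk1)
    linarith

noncomputable def lf {n : ℕ} (x : Fin n → ℤ) : (Fin n → UnitAddCircle) →+ UnitAddCircle where
  toFun α := ∑ i, x i • α i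
  map_zero' := by simp
  map_add' a b := by simp [smul_add, sum_add_distrib]

lemma lf_apply {n : ℕ} (x : Fin n → ℤ) (α : Fin n → UnitAddCircle) : lf x α = ∑ i, x i • α i := rfl

lemma lf_cont {n : ℕ} (x : Fin n → ℤ) : Continuous (lf x) := by
  change Continuous fun α : Fin n → UnitAddCircle => ∑ i, x i • α i
  fun_prop

lemma vol_univ : (volume : Measure UnitAddCircle) Set.univ = 1 := by
  rw [AddCircle.measure_univ]; simp

instance instProbCircle : IsProbabilityMeasure (volume : Measure UnitAddCircle) := ⟨vol_univ⟩

lemma lf_pair {n : ℕ} (x y : Fin n → ℤ) (i j : Fin n) (h : x i * y j - x j * y i ≠ 0) :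
    MeasurePreserving (fun α : Fin n → UnitAddCircle => (lf x α, lf y α)) volume
      (volume.prod volume) := by
  have hij : i ≠ j := by rintro rfl; apply h; ring
  refine AddMonoidHom.measurePreserving (f := (lf x).prod (lf y)) ?_ ?_ ?_
  · exact (lf_cont x).prodMk (lf_cont y)
  · rintro ⟨s, t⟩
    obtain ⟨s, rfl⟩ := QuotientAddGroup.mk_surjective s
    obtain ⟨t, rfl⟩ := QuotientAddGroup.mk_surjective t
    set D : ℝ := x i * y j - x j * y i with hD
    have hD0 : D ≠ 0 := by rw [hD]; exact_mod_cast h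
    set a : ℝ := (s * y j - t * x j) / D with ha
    set b : ℝ := (t * x i - s * y i) / D with hb
    refine ⟨Function.update (Function.update 0 i (a : UnitAddCircle)) j (b : UnitAddCircle), ?_⟩
    have key : ∀ z : Fin n → ℤ, lf z (Function.update (Function.update 0 i (a : UnitAddCircle)) j
        (b : UnitAddCircle)) = ((z i * a + z j * b : ℝ) : UnitAddCircle) := by
      intro z
      rw [lf_apply, Finset.sum_eq_add i j hij]
      · rw [Function.update_of_ne hij, Function.update_self, Function.update_self]
        rw [AddCircle.coe_add, ← zsmul_eq_mul, ← zsmul_eq_mul, AddCircle.coe_zsmul, AddCircle.coe_zsmul]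
      · intro k _ hk
        simp [Function.update_of_ne hk.1, Function.update_of_ne hk.2]
      · simp
      · simp
    change (lf x _, lf y _) = _
    rw [key, key]
    congr 2
    · rw [ha, hb]; field_simp; rw [hD]; ring
    · rw [ha, hb]; field_simp; rw [hD]; ring
  · simp

lemma lf_single {n : ℕ} (x : Fin n → ℤ) (i : Fin n) (h : x i ≠ 0) :
    MeasurePreserving (fun α : Fin n → UnitAddCircle => lf x α) volume volume := by
  refine AddMonoidHom.measurePreserving (f := lf x) (lf_cont x) ?_ (by simp)
  intro s
  obtain ⟨s, rfl⟩ := QuotientAddGroup.mk_surjective s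
  have h' : (x i : ℝ) ≠ 0 := by exact_mod_cast h
  refine ⟨Function.update 0 i ((s / x i : ℝ) : UnitAddCircle), ?_⟩
  rw [lf_apply, Finset.sum_eq_single i]
  · rw [Function.update_self, ← AddCircle.coe_zsmul, zsmul_eq_mul, mul_div_cancel₀ _ h']
  · intro k _ hk
    simp [Function.update_of_ne hk]
  · simp

lemma vol_E {n : ℕ} (x : Fin n → ℤ) (i : Fin n) (h : x i ≠ 0) (r : ℝ) (hr0 : 0 ≤ r) (hr : r ≤ 1 / 2) :
    (volume : Measure (Fin n → UnitAddCircle)).real {α | ‖lf x α‖ ≤ r} = 2 * r := by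
  have : {α | ‖lf x α‖ ≤ r} = (fun α => lf x α) ⁻¹' (Metric.closedBall 0 r) := by
    ext; simp
  rw [this, measureReal_def, (lf_single x i h).measure_preimage
    Metric.isClosed_closedBall.measurableSet.nullMeasurableSet, AddCircle.volume_closedBall,
    min_eq_right (by linarith), ENNReal.toReal_ofReal (by linarith)]

lemma vol_EE {n : ℕ} (x y : Fin n → ℤ) (i j : Fin n) (h : x i * y j - x j * y i ≠ 0)
    (r s : ℝ) (hr0 : 0 ≤ r) (hr : r ≤ 1 / 2)  (hs0 : 0 ≤ s) (hs : s ≤ 1 / 2) :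
    (volume : Measure (Fin n → UnitAddCircle)).real ({α | ‖lf x α‖ ≤ r} ∩ {α | ‖lf y α‖ ≤ s}) =
     (2 * r) * (2 * s) := by
  have : {α | ‖lf x α‖ ≤ r} ∩ {α | ‖lf y α‖ ≤ s} =
      (fun α => (lf x α, lf y α)) ⁻¹' (Metric.closedBall 0 r ×ˢ Metric.closedBall 0 s) := by
    ext; simp
  rw [this, measureReal_def, (lf_pair x y i j h).measure_preimage
    (Metric.isClosed_closedBall.measurableSet.prod
      Metric.isClosed_closedBall.measurableSet).nullMeasurableSet, Measure.prod_prod,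
    AddCircle.volume_closedBall, AddCircle.volume_closedBall,
    min_eq_right (by linarith), min_eq_right (by linarith), ENNReal.toReal_mul,
    ENNReal.toReal_ofReal (by linarith), ENNReal.toReal_ofReal (by linarith)]

lemma ae_lift {n : ℕ} (P : (Fin n → UnitAddCircle) → Prop) (h : ∀ᵐ a, P a) :
    ∀ᵐ α : Fin n → ℝ, P (fun i => (α i : UnitAddCircle)) := by
  have hc : (⋃ k : Fin n → ℤ, Set.univ.pi fun i => Set.Ioc (k i : ℝ) (k i + 1)) = Set.univ := by
    refine Set.eq_univ_of_forall fun α => Set.mem_iUnion.2 ⟨fun i => ⌈α i⌉ - 1, ?_⟩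
    intro i _
    have h1 := Int.le_ceil (α i)
    have h2 := Int.ceil_lt_add_one (α i)
    constructor <;> push_cast <;> linarith
  rw [← Measure.restrict_univ (μ := (volume : Measure (Fin n → ℝ))), ← hc, ae_restrict_iUnion_iff]
  intro k
  rw [volume_pi, Measure.restrict_pi_pi]
  have := measurePreserving_pi (fun i : Fin n => volume.restrict (Set.Ioc (k i : ℝ) (k i + 1)))
    (fun _ => (volume : Measure UnitAddCircle)) (fun i => AddCircle.measurePreserving_mk 1 (k i : ℝ))
  exact this.quasiMeasurePreserving.ae h

lemma ae_lift1 (P : UnitAddCircle → Prop) (h : ∀ᵐ a, P a) :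
    ∀ᵐ α : Fin 1 → ℝ, P (α 0 : UnitAddCircle) := by
  refine ae_lift (fun α : Fin 1 → UnitAddCircle => P (α 0)) ?_
  exact (measurePreserving_eval (fun _ : Fin 1 => (volume : Measure UnitAddCircle)) 0).quasiMeasurePreserving.ae h

lemma torsion_rep (L : ℕ) (hL : 0 < L) (w : UnitAddCircle) (hw : L • w = 0) :
    ∃ m : ℤ, w = ((m / L : ℝ) : UnitAddCircle) ∧ ‖w‖ = |(m : ℝ)| / L := by
  obtain ⟨k, -, rfl⟩ := (AddCircle.nsmul_eq_zero_iff hL).1 hw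
  have hL' : (L : ℝ) ≠ 0 := by positivity
  refine ⟨k - L * round ((k : ℝ) / L), ?_, ?_⟩
  · have : (((k - L * round ((k : ℝ) / L) : ℤ) : ℝ) / L) = (k : ℝ) / L * 1 - round ((k : ℝ) / L) := by
      push_cast; field_simp
    rw [this, AddCircle.coe_sub]
    have h0 : ((round ((k : ℝ) / L) : ℝ) : UnitAddCircle) = 0 :=
      (AddCircle.coe_eq_zero_iff 1).2 ⟨round ((k : ℝ) / L), by simp⟩
    rw [h0, sub_zero]
  · rw [mul_one, UnitAddCircle.norm_eq]
    rw [← abs_of_pos (show (0:ℝ) < L by positivity), ← abs_div]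
    rw [abs_of_pos (show (0:ℝ) < L by positivity)]
    congr 1
    push_cast; field_simp

lemma count_torsion (L : ℕ) (hL : 0 < L) (ε : ℝ) (hε : 0 ≤ ε) (W : Finset UnitAddCircle)
    (hW : ∀ w ∈ W, L • w = 0 ∧ w ≠ 0 ∧ ‖w‖ < ε) : (#W : ℝ) ≤ 2 * ε * L := by
  choose! m hm1 hm2 using fun w (hw : w ∈ W) => torsion_rep L hL w (hW w hw).1
  set k := ⌊ε * L⌋₊ with hk
  have hsub : W ⊆ (Icc (1 : ℤ) k ∪ Icc (-k : ℤ) (-1)).image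
      (fun m : ℤ => ((m / L : ℝ) : UnitAddCircle)) := by
    intro w hw
    rw [mem_image]
    refine ⟨m w, ?_, (hm1 w hw).symm⟩
    have h0 : m w ≠ 0 := by
      intro h
      apply (hW w hw).2.1
      rw [hm1 w hw, h]; simp
    have h1 : (m w).natAbs ≤ k := by
      rw [hk]
      apply Nat.le_floor
      have := (hW w hw).2.2
      rw [hm2 w hw, div_lt_iff₀ (by positivity)] at this
      rw [Nat.cast_natAbs]
      push_cast
      exact this.le
    simp only [mem_union, mem_Icc]
    omega
  have h1 : #W ≤ 2 * k := by
    refine (card_le_card hsub).trans (card_image_le.trans ((card_union_le _ _).trans ?_))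
    simp only [Int.card_Icc]; omega
  calc (#W : ℝ) ≤ ((2 * k : ℕ) : ℝ) := by exact_mod_cast h1
    _ = 2 * (k : ℝ) := by push_cast; ring
    _ ≤ 2 * (ε * L) := by gcongr; exact Nat.floor_le (by positivity)
    _ = _ := by ring

lemma card_tors (d : ℕ) (hd : 0 < d) (W : Finset UnitAddCircle) (hW : ∀ w ∈ W, d • w = 0) :
    #W ≤ d := by
  have : W ⊆ (range d).image (fun m : ℕ => (((m : ℝ) / d * 1 : ℝ) : UnitAddCircle)) := by
    intro w hw
    obtain ⟨k, hk, rfl⟩ := (AddCircle.nsmul_eq_zero_iff hd).1 (hW w hw)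
    exact mem_image.2 ⟨k, mem_range.2 hk, rfl⟩
  exact (card_le_card this).trans (card_image_le.trans (by simp))

noncomputable def Pset (q : ℕ) : Finset UnitAddCircle :=
  if h : 0 < q then (AddCircle.finite_setOfPred_addOrderOf_eq (1:ℝ) h).toFinset else ∅

lemma mem_Pset {q : ℕ} (hq : 0 < q) (u : UnitAddCircle) : u ∈ Pset q ↔ addOrderOf u = q := by
  simp [Pset, hq]

lemma card_Pset {q : ℕ} (hq : 0 < q) : #(Pset q) = q.totient := by
  rw [← AddCircle.card_addOrderOf_eq_totient (p := (1:ℝ))]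
  exact (Nat.subtype_card (Pset q) (fun u => mem_Pset hq u)).symm

lemma E_eq {q : ℕ} (hq : 0 < q) (δ : ℝ) :
    approxAddOrderOf UnitAddCircle q δ = ⋃ u ∈ Pset q, Metric.ball u δ := by
  ext x
  rw [mem_approx_add_orderOf_iff]
  simp [mem_Pset hq]

lemma vol_ball (u : UnitAddCircle) (ε : ℝ) (h0 : 0 ≤ ε) :
    (volume : Measure UnitAddCircle).real (Metric.ball u ε) = min 1 (2 * ε) := by
  rw [measureReal_def, ← measure_congr (AddCircle.closedBall_ae_eq_ball (x := u) (ε := ε)),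
    AddCircle.volume_closedBall, ENNReal.toReal_ofReal (by positivity)]

lemma vol_Eq {q : ℕ} (hq : 0 < q) (δ : ℝ) (h0 : 0 ≤ δ) (hδ : δ * q ≤ 1 / 2) :
    (volume : Measure UnitAddCircle).real (approxAddOrderOf UnitAddCircle q δ) =
      q.totient * (2 * δ) := by
  rw [E_eq hq, measureReal_biUnion_finset]
  · have hq1 : (1:ℝ) ≤ q := by exact_mod_cast hq
    have : 2 * δ ≤ 1 := by nlinarith
    rw [sum_congr rfl fun u _ => vol_ball u δ h0, sum_const, card_Pset hq, nsmul_eq_mul, min_eq_right this]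
  · intro u hu v hv huv
    refine Metric.ball_disjoint_ball ?_
    rw [dist_eq_norm]
    have hu := (mem_Pset hq u).1 hu
    have hv := (mem_Pset hq v).1 hv
    have hz : q • (u - v) = 0 := by
      rw [smul_sub, ← hu, addOrderOf_nsmul_eq_zero, hu, ← hv, addOrderOf_nsmul_eq_zero, sub_zero]
    obtain ⟨m, hm1, hm2⟩ := torsion_rep q hq _ hz
    have hm0 : m ≠ 0 := by
      rintro rfl
      apply huv
      rw [← sub_eq_zero, hm1]; simp
    have : (1:ℝ) ≤ |(m:ℝ)| := by exact_mod_cast Int.one_le_abs hm0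
    rw [hm2, le_div_iff₀ (by positivity)]
    linarith
  · exact fun u _ => Metric.isOpen_ball.measurableSet

lemma pair_count {q r : ℕ} (hq : 0 < q) (hr : 0 < r) (hqr : q ≠ r) (ε : ℝ) (hε : 0 ≤ ε) :
    (#((Pset q ×ˢ Pset r).filter (fun p => ‖p.1 - p.2‖ < ε)) : ℝ) ≤ 2 * ε * (q * r) := by
  classical
  set Q := (Pset q ×ˢ Pset r).filter (fun p => ‖p.1 - p.2‖ < ε) with hQ
  have hmem : ∀ p ∈ Q, addOrderOf p.1 = q ∧ addOrderOf p.2 = r ∧ ‖p.1 - p.2‖ < ε := by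
    intro p hp
    rw [hQ, mem_filter, mem_product, mem_Pset hq, mem_Pset hr] at hp
    exact ⟨hp.1.1, hp.1.2, hp.2⟩
  have hd : 0 < q.gcd r := Nat.gcd_pos_of_pos_left _ hq
  have hL : 0 < q.lcm r := Nat.lcm_pos hq hr
  have h1 : #Q ≤ q.gcd r * #(Q.image (fun p => p.1 - p.2)) := by
    refine card_le_mul_card_image _ _ fun a ha => ?_
    obtain ⟨p₀, hp₀, rfl⟩ := mem_image.1 ha
    have hinj : Set.InjOn (fun p : UnitAddCircle × UnitAddCircle => p.1 - p₀.1)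
        ({x ∈ Q | x.1 - x.2 = p₀.1 - p₀.2} : Finset _) := by
      intro p hp p' hp' h
      simp only [coe_filter, Set.mem_ofPred_eq] at hp hp'
      have e1 : p.1 = p'.1 := by simpa using h
      have e2 : p.2 = p'.2 := by
        have := hp.2.trans hp'.2.symm
        rw [e1] at this
        simpa using this
      exact Prod.ext e1 e2
    rw [← card_image_of_injOn hinj]
    refine card_tors _ hd _ fun w hw => ?_
    obtain ⟨p, hp, rfl⟩ := mem_image.1 hw
    rw [mem_filter] at hp
    have e : p.1 - p₀.1 = p.2 - p₀.2 := by
      have := hp.2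
      rw [sub_eq_sub_iff_add_eq_add] at this ⊢
      rw [this, add_comm]
    obtain ⟨a1, a2, -⟩ := hmem p hp.1
    obtain ⟨b1, b2, -⟩ := hmem p₀ hp₀
    rw [← addOrderOf_dvd_iff_nsmul_eq_zero]
    apply Nat.dvd_gcd
    · rw [addOrderOf_dvd_iff_nsmul_eq_zero, smul_sub, ← a1, addOrderOf_nsmul_eq_zero, a1, ← b1,
        addOrderOf_nsmul_eq_zero, sub_zero]
    · rw [addOrderOf_dvd_iff_nsmul_eq_zero, e, smul_sub, ← a2, addOrderOf_nsmul_eq_zero, a2, ← b2,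
        addOrderOf_nsmul_eq_zero, sub_zero]
  have h2 : (#(Q.image (fun p => p.1 - p.2)) : ℝ) ≤ 2 * ε * (q.lcm r : ℕ) := by
    refine count_torsion _ hL _ hε _ fun w hw => ?_
    obtain ⟨p, hp, rfl⟩ := mem_image.1 hw
    obtain ⟨a1, a2, a3⟩ := hmem p hp
    refine ⟨?_, ?_, a3⟩
    · rw [smul_sub, addOrderOf_dvd_iff_nsmul_eq_zero.1 (a1.dvd.trans (Nat.dvd_lcm_left q r)),
        addOrderOf_dvd_iff_nsmul_eq_zero.1 (a2.dvd.trans (Nat.dvd_lcm_right q r)), sub_zero]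
    · intro h
      apply hqr
      rw [← a1, ← a2, sub_eq_zero.1 h]
  have h3 : ((q.gcd r : ℕ) : ℝ) * (q.lcm r : ℕ) = q * r := by
    exact_mod_cast Nat.gcd_mul_lcm q r
  calc (#Q : ℝ) ≤ (q.gcd r : ℕ) * (#(Q.image (fun p => p.1 - p.2)) : ℝ) := by exact_mod_cast h1
    _ ≤ (q.gcd r : ℕ) * (2 * ε * (q.lcm r : ℕ)) := by gcongr
    _ = 2 * ε * ((q.gcd r : ℕ) * (q.lcm r : ℕ)) := by ring
    _ = _ := by rw [h3]

lemma vol_EqEr {q r : ℕ} (hq : 0 < q) (hr : 0 < r) (hqr : q ≠ r) (δ η : ℝ) (h0 : 0 ≤ δ) (h1 : 0 ≤ η) :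
    (volume : Measure UnitAddCircle).real
      (approxAddOrderOf UnitAddCircle q δ ∩ approxAddOrderOf UnitAddCircle r η) ≤
      8 * (q * δ) * (r * η) := by
  classical
  set Q := (Pset q ×ˢ Pset r).filter (fun p => ‖p.1 - p.2‖ < δ + η) with hQ
  have hsub : approxAddOrderOf UnitAddCircle q δ ∩ approxAddOrderOf UnitAddCircle r η ⊆
      ⋃ p ∈ Q, (Metric.ball p.1 δ ∩ Metric.ball p.2 η) := by
    rw [E_eq hq, E_eq hr]
    rintro x ⟨hx, hy⟩
    simp only [Set.mem_iUnion, exists_prop] at hx hy ⊢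
    obtain ⟨u, hu, hxu⟩ := hx
    obtain ⟨v, hv, hxv⟩ := hy
    refine ⟨(u, v), ?_, hxu, hxv⟩
    rw [hQ, mem_filter, mem_product]
    refine ⟨⟨hu, hv⟩, ?_⟩
    rw [← dist_eq_norm]
    rw [Metric.mem_ball] at hxu hxv
    calc dist u v ≤ dist x u + dist x v := dist_triangle_left _ _ _
      _ < _ := by linarith
  have hb : ∀ p ∈ Q, (volume : Measure UnitAddCircle).real (Metric.ball p.1 δ ∩ Metric.ball p.2 η) ≤
      2 * min δ η := by
    intro p _
    rw [mul_min_of_nonneg _ _ (by norm_num : (0:ℝ) ≤ 2)]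
    refine le_min ?_ ?_
    · refine (measureReal_mono Set.inter_subset_left (measure_ne_top _ _)).trans ?_
      rw [vol_ball _ _ h0]; exact min_le_right _ _
    · refine (measureReal_mono Set.inter_subset_right (measure_ne_top _ _)).trans ?_
      rw [vol_ball _ _ h1]; exact min_le_right _ _
  calc _ ≤ (volume : Measure UnitAddCircle).real (⋃ p ∈ Q, (Metric.ball p.1 δ ∩ Metric.ball p.2 η)) :=
        measureReal_mono hsub (measure_ne_top _ _)
    _ ≤ ∑ p ∈ Q, (volume : Measure UnitAddCircle).real (Metric.ball p.1 δ ∩ Metric.ball p.2 η) :=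
        measureReal_biUnion_finset_le _ _
    _ ≤ ∑ p ∈ Q, 2 * min δ η := sum_le_sum hb
    _ = #Q * (2 * min δ η) := by rw [sum_const, nsmul_eq_mul]
    _ ≤ (2 * (δ + η) * (q * r)) * (2 * min δ η) := by
        have : 0 ≤ min δ η := le_min h0 h1
        gcongr
        exact pair_count hq hr hqr _ (by linarith)
    _ = 4 * (q * r) * ((δ + η) * min δ η) := by ring
    _ ≤ 4 * (q * r) * (2 * (δ * η)) := by
        refine mul_le_mul_of_nonneg_left ?_ (by positivity)
        rcases le_total δ η with h | h
        · rw [min_eq_left h]; nlinarith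
        · rw [min_eq_right h]; nlinarith
    _ = _ := by ring

lemma double_sum {ι : Type*} (F : Finset ι) (m : ι → ι → ℝ) (s w : ι → ℝ) (c : ℝ)
    (hc : 0 ≤ c) (hw : ∀ i ∈ F, 0 ≤ w i)
    (hdiag : ∀ i ∈ F, m i i ≤ s i)
    (hoff : ∀ i ∈ F, ∀ j ∈ F, i ≠ j → m i j ≤ c * (w i * w j)) :
    ∑ i ∈ F, ∑ j ∈ F, m i j ≤ ∑ i ∈ F, s i + c * (∑ i ∈ F, w i) ^ 2 := by
  classical
  have h1 : ∀ i ∈ F, ∑ j ∈ F, m i j ≤ s i + ∑ j ∈ F, c * (w i * w j) := by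
    intro i hi
    calc ∑ j ∈ F, m i j ≤ ∑ j ∈ F, ((if i = j then s i else 0) + c * (w i * w j)) := by
          refine sum_le_sum fun j hj => ?_
          split_ifs with h
          · subst h
            have := hdiag i hi
            have := mul_nonneg hc (mul_nonneg (hw i hi) (hw i hi))
            linarith
          · rw [zero_add]; exact hoff i hi j hj h
      _ = _ := by rw [sum_add_distrib, sum_ite_eq, if_pos hi]
  refine (sum_le_sum h1).trans (le_of_eq ?_)
  rw [sum_add_distrib, sq, sum_mul_sum, mul_sum]
  simp_rw [mul_sum]

lemma sum_sdiff_bound {ι : Type*} [DecidableEq ι] (A B : Finset ι) (f : ι → ℝ) (hf : ∀ i, 0 ≤ f i) :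
    ∑ i ∈ A, f i ≤ ∑ i ∈ A \ B, f i + ∑ i ∈ B, f i := by
  rw [← sum_union sdiff_disjoint]
  refine sum_le_sum_of_subset_of_nonneg ?_ fun i _ _ => hf i
  intro i hi
  simp only [mem_union, mem_sdiff]; tauto

lemma case_one (ψ : ℕ → ℝ) (hpos : ∀ h, 0 ≤ ψ h) (hmono : Antitone ψ) (hhalf : ∀ h, ψ h ≤ 1 / 2)
    (hdiv : ¬ Summable fun h : ℕ => (h : ℝ) ^ 0 * ψ h) :
    ∀ᵐ a : UnitAddCircle, {q : ℕ | 0 < q ∧ ‖q • a‖ ≤ ψ q}.Infinite := by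
  classical
  set δ : ℕ → ℝ := fun q => ψ q / q with hδ
  have hδ0 : ∀ q, 0 ≤ δ q := fun q => div_nonneg (hpos q) (by positivity)
  set E : ℕ → Set UnitAddCircle := fun q => approxAddOrderOf UnitAddCircle q (δ q) with hE
  have hEm : ∀ q, MeasurableSet (E q) := fun q => Metric.isOpen_thickening.measurableSet
  have hqδ : ∀ q : ℕ, 0 < q → (q : ℝ) * δ q = ψ q := by
    intro q hq
    have : (q : ℝ) ≠ 0 := by positivity
    rw [hδ]; field_simp
  have hvol : ∀ q : ℕ, 0 < q → (volume : Measure UnitAddCircle).real (E q) = 2 * ((q.totient : ℝ) / q * q ^ 0 * ψ q) := by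
    intro q hq
    rw [hE]
    simp only
    rw [vol_Eq hq (δ q) (hδ0 q) (by rw [mul_comm, hqδ q hq]; exact hhalf q), hδ]
    ring
  have hks := ks (volume : Measure UnitAddCircle) E hEm 512 (by norm_num) (by
    intro F₀ M
    set K := ∑ q ∈ F₀, (volume : Measure UnitAddCircle).real (E q) with hK
    have hK0 : 0 ≤ K := sum_nonneg fun _ _ => measureReal_nonneg
    obtain ⟨N, hN⟩ := diverge 0 ψ hpos hdiv (max (8 * M) (8 * K))
    simp only [pow_zero, one_mul] at hN
    have hN1 := (le_max_left _ _).trans hN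
    have hN2 := (le_max_right _ _).trans hN
    set w := ∑ q ∈ Icc 1 N, ψ q with hw
    have hw0 : 0 ≤ w := sum_nonneg fun _ _ => hpos _
    have hS : w / 4 ≤ ∑ q ∈ Icc 1 N, (volume : Measure UnitAddCircle).real (E q) := by
      rw [sum_congr rfl fun q hq => hvol q (mem_Icc.1 hq).1, ← mul_sum]
      have := sum_totient_psi 0 ψ hpos hmono N
      simp only [pow_zero, one_mul, zero_add, pow_one] at this
      simp only [pow_zero]
      linarith
    have hS2 : ∑ q ∈ Icc 1 N, (volume : Measure UnitAddCircle).real (E q) ≤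
        ∑ q ∈ Icc 1 N \ F₀, (volume : Measure UnitAddCircle).real (E q) + K := 
      sum_sdiff_bound _ _ _ fun _ => measureReal_nonneg
    have hS3 : w / 8 ≤ ∑ q ∈ Icc 1 N \ F₀, (volume : Measure UnitAddCircle).real (E q) := by linarith
    refine ⟨Icc 1 N \ F₀, sdiff_disjoint, by linarith, ?_⟩
    refine (double_sum (Icc 1 N \ F₀) _ (fun q => (volume : Measure UnitAddCircle).real (E q)) ψ 8
      (by norm_num) (fun _ _ => hpos _) (fun q _ => by rw [Set.inter_self]) ?_).trans ?_
    · intro q hq r hr hqr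
      have hq := (mem_Icc.1 (mem_sdiff.1 hq).1).1
      have hr := (mem_Icc.1 (mem_sdiff.1 hr).1).1
      have := vol_EqEr hq hr hqr (δ q) (δ r) (hδ0 q) (hδ0 r)
      rw [hqδ q hq, hqδ r hr] at this
      linarith
    · have h1 : ∑ q ∈ Icc 1 N \ F₀, ψ q ≤ w :=
        sum_le_sum_of_subset_of_nonneg sdiff_subset fun _ _ _ => hpos _
      have h2 : 0 ≤ ∑ q ∈ Icc 1 N \ F₀, ψ q := sum_nonneg fun _ _ => hpos _
      have h3 : (∑ q ∈ Icc 1 N \ F₀, ψ q) ≤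
        8 * ∑ q ∈ Icc 1 N \ F₀, (volume : Measure UnitAddCircle).real (E q) := by linarith
      have h4 := pow_le_pow_left₀ h2 h3 2
      rw [mul_pow] at h4
      linarith)
  have hlim : Filter.Tendsto δ Filter.atTop (nhds 0) := by
    refine squeeze_zero hδ0 (fun q => ?_) (tendsto_const_div_atTop_nhds_zero_nat (1 / 2 : ℝ))
    exact div_le_div_of_nonneg_right (hhalf q) (by positivity)
  have hset : ∀ a : UnitAddCircle, a ∈ addWellApproximable UnitAddCircle δ ↔
      {q : ℕ | a ∈ E q}.Infinite := by
    intro a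
    simp only [mem_add_wellApproximable_iff, ← Nat.cofinite_eq_atTop, Filter.cofinite.blimsup_set_eq,
      Set.mem_ofPred_eq]
    have : {q : ℕ | a ∈ E q} = {n : ℕ | 0 < n ∧ a ∈ approxAddOrderOf UnitAddCircle n (δ n)} := by
      ext q
      simp only [Set.mem_ofPred_eq, hE]
      constructor
      · intro h
        refine ⟨Nat.pos_of_ne_zero ?_, h⟩
        rintro rfl
        rw [mem_approx_add_orderOf_iff] at h
        obtain ⟨b, _, hb⟩ := h
        simp [hδ] at hb
      · exact fun h => h.2
    rw [this]
  rcases AddCircle.addWellApproximable_ae_empty_or_univ (T := (1 : ℝ)) δ hlim with h | h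
  · exfalso
    have : (volume : Measure UnitAddCircle) {a | {q : ℕ | a ∈ E q}.Infinite} = 0 := by
      rw [ae_iff] at h
      convert h using 3
      funext a
      rw [not_not]
      exact propext (hset a).symm
    rw [measureReal_def, this] at hks
    norm_num at hks
  · filter_upwards [h] with a ha
    rw [mem_add_wellApproximable_iff, ← Nat.cofinite_eq_atTop, Filter.cofinite.blimsup_set_eq] at ha
    refine Set.Infinite.mono ?_ ha
    rintro q ⟨hq, h⟩
    refine ⟨hq, ?_⟩
    rw [mem_approx_add_orderOf_iff] at h
    obtain ⟨b, hb, hab⟩ := h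
    have hb : addOrderOf b = q := hb
    rw [Metric.mem_ball, dist_eq_norm] at hab
    have : q • a = q • (a - b) := by
      rw [smul_sub, ← hb, addOrderOf_nsmul_eq_zero, sub_zero]
    rw [this, ← hqδ q hq]
    refine (norm_nsmul_le).trans ?_
    gcongr

/-- the family of vectors of height `h` used for `n = m + 2` -/
noncomputable def Afam (m h : ℕ) : Finset (Fin (m + 2) → ℤ) :=
  Fintype.piFinset (Fin.cons (α := fun _ => Finset ℤ) {(h : ℤ)}
    (Fin.cons (α := fun _ => Finset ℤ) (((range h).filter (fun a => h.Coprime a)).map Nat.castEmbedding)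
      (fun _ => (range h).map Nat.castEmbedding)))

lemma card_Afam (m h : ℕ) : #(Afam m h) = h.totient * h ^ m := by
  rw [Afam, Fintype.card_piFinset, Fin.prod_univ_succ, Fin.prod_univ_succ]
  simp [Nat.totient]

lemma mem_Afam {m h : ℕ} {x : Fin (m + 2) → ℤ} (hx : x ∈ Afam m h) :
    x 0 = h ∧ IsCoprime (x 0) (x 1) ∧ ∀ i, i ≠ 0 → (x i).natAbs < h := by
  rw [Afam, Fintype.mem_piFinset] at hx
  have h0 : x 0 = h := by simpa using hx 0
  have h1 := hx (Fin.succ 0)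
  rw [Fin.cons_succ, Fin.cons_zero, mem_map] at h1
  obtain ⟨a, ha, hxa⟩ := h1
  rw [mem_filter, mem_range] at ha
  have hxa : x 1 = a := hxa.symm
  refine ⟨h0, ?_, fun i => ?_⟩
  · rw [h0, hxa]; exact Nat.isCoprime_iff_coprime.2 ha.2
  · refine Fin.cases (fun h => absurd rfl h) (fun i => ?_) i
    refine Fin.cases (fun _ => ?_) (fun i _ => ?_) i
    · change (x 1).natAbs < h
      rw [hxa]; simpa using ha.1
    · have h2 := hx i.succ.succ
      rw [Fin.cons_succ, Fin.cons_succ, mem_map] at h2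
      obtain ⟨b, hb, hxb⟩ := h2
      rw [← hxb]; simpa using hb

lemma Afam_det {m h k : ℕ} (hh : 0 < h) (hk : 0 < k) {x y : Fin (m + 2) → ℤ} (hx : x ∈ Afam m h)
    (hy : y ∈ Afam m k) (hxy : x ≠ y) : ∃ j, x 0 * y j - x j * y 0 ≠ 0 := by
  by_contra hcon
  push Not at hcon
  obtain ⟨x0, xc, -⟩ := mem_Afam hx
  obtain ⟨y0, yc, -⟩ := mem_Afam hy
  have h1 : x 0 * y 1 = x 1 * y 0 := sub_eq_zero.1 (hcon 1)
  have d1 : x 0 ∣ y 0 := xc.dvd_of_dvd_mul_left ⟨y 1, h1.symm⟩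
  have d2 : y 0 ∣ x 0 := yc.dvd_of_dvd_mul_left ⟨x 1, by rw [mul_comm, h1, mul_comm]⟩
  have e : x 0 = y 0 := Int.dvd_antisymm (by rw [x0]; positivity) (by rw [y0]; positivity) d1 d2
  apply hxy
  funext j
  have := sub_eq_zero.1 (hcon j)
  rw [← e, mul_comm] at this
  exact (mul_right_cancel₀ (by rw [x0]; positivity) this).symm

lemma case_two (m : ℕ) (ψ : ℕ → ℝ) (hpos : ∀ h, 0 ≤ ψ h) (hmono : Antitone ψ)
    (hhalf : ∀ h, ψ h ≤ 1 / 2)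
    (hdiv : ¬ Summable fun h : ℕ => (h : ℝ) ^ (m + 1) * ψ h) :
    ∀ᵐ α : Fin (m + 2) → UnitAddCircle,
      {x : Fin (m + 2) → ℤ | (∃ h, 0 < h ∧ x ∈ Afam m h) ∧ ‖lf x α‖ ≤ ψ (x 0).natAbs}.Infinite := by
  classical
  set μ : Measure (Fin (m + 2) → UnitAddCircle) := volume with hμ
  set E : (Fin (m + 2) → ℤ) → Set (Fin (m + 2) → UnitAddCircle) := fun x =>
    {α | (∃ h, 0 < h ∧ x ∈ Afam m h) ∧ ‖lf x α‖ ≤ ψ (x 0).natAbs} with hE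
  have hE1 : ∀ x h, 0 < h → x ∈ Afam m h → E x = {α | ‖lf x α‖ ≤ ψ h} := by
    intro x h hh hx
    ext α
    simp only [hE, Set.mem_ofPred_eq]
    rw [(mem_Afam hx).1, Int.natAbs_natCast]
    exact ⟨fun h => h.2, fun h' => ⟨⟨h, hh, hx⟩, h'⟩⟩
  have hEm : ∀ x, MeasurableSet (E x) := by
    intro x
    by_cases hx : ∃ h, 0 < h ∧ x ∈ Afam m h
    · obtain ⟨h, hh, hx⟩ := hx
      rw [hE1 x h hh hx]
      exact (isClosed_le (lf_cont x).norm continuous_const).measurableSet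
    · have : E x = ∅ := by
        ext α; simp only [hE, Set.mem_ofPred_eq, Set.mem_empty_iff_false, iff_false]
        exact fun h => hx h.1
      rw [this]; exact MeasurableSet.empty
  have hx0 : ∀ x h, 0 < h → x ∈ Afam m h → x 0 ≠ 0 := by
    intro x h hh hx
    rw [(mem_Afam hx).1]; positivity
  have hvol : ∀ x h, 0 < h → x ∈ Afam m h → μ.real (E x) = 2 * ψ h := by
    intro x h hh hx
    rw [hE1 x h hh hx]
    exact vol_E x 0 (hx0 x h hh hx) _ (hpos h) (hhalf h)
  have hvol2 : ∀ x h y k, 0 < h → x ∈ Afam m h → 0 < k → y ∈ Afam m k → x ≠ y →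
      μ.real (E x ∩ E y) = μ.real (E x) * μ.real (E y) := by
    intro x h y k hh hx hk hy hxy
    rw [hvol x h hh hx, hvol y k hk hy, hE1 x h hh hx, hE1 y k hk hy]
    obtain ⟨j, hj⟩ := Afam_det hh hk hx hy hxy
    exact vol_EE x y 0 j hj _ _ (hpos h) (hhalf h) (hpos k) (hhalf k)
  have hks := ks μ E hEm 1 (by norm_num) (by
    intro F₀ M
    set K := ∑ x ∈ F₀, μ.real (E x) with hK
    set c : ℝ := 2 * (1 / 8 : ℝ) ^ (m + 1 + 1) with hc
    have hc0 : 0 < c := by positivity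
    obtain ⟨N, hN⟩ := diverge (m + 1) ψ hpos hdiv ((M + K) / c)
    rw [div_le_iff₀ hc0] at hN
    set FN := (Icc 1 N).biUnion (Afam m) with hFN
    have hS : ∑ x ∈ FN, μ.real (E x) = ∑ h ∈ Icc 1 N, 2 * ((h.totient : ℝ) / h * h ^ (m + 1) * ψ h) := by
      rw [hFN, sum_biUnion]
      · refine sum_congr rfl fun h hh => ?_
        have hh := (mem_Icc.1 hh).1
        rw [sum_congr rfl fun x hx => hvol x h hh hx, sum_const, card_Afam, nsmul_eq_mul]
        have : (h : ℝ) ≠ 0 := by positivity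
        push_cast
        field_simp
        ring
      · intro h _ k _ hhk
        refine Finset.disjoint_left.2 fun x hx hx' => hhk ?_
        have := (mem_Afam hx).1.symm.trans (mem_Afam hx').1
        exact_mod_cast this
    have hS1 : M + K ≤ ∑ x ∈ FN, μ.real (E x) := by
      rw [hS, ← mul_sum]
      have := sum_totient_psi (m + 1) ψ hpos hmono N
      rw [hc] at hN
      linarith
    have hS2 : ∑ q ∈ FN, μ.real (E q) ≤ ∑ q ∈ FN \ F₀, μ.real (E q) + K := sum_sdiff_bound _ _ _ fun _ => measureReal_nonneg
    refine ⟨FN \ F₀, sdiff_disjoint, by linarith, ?_⟩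
    refine (double_sum (FN \ F₀) _ (fun q => μ.real (E q)) (fun q => μ.real (E q)) 1
      (by norm_num) (fun _ _ => measureReal_nonneg) (fun q _ => by rw [Set.inter_self]) ?_)
    intro x hx y hy hxy
    obtain ⟨h, hh, hx⟩ := mem_biUnion.1 (mem_sdiff.1 hx).1
    obtain ⟨k, hk, hy⟩ := mem_biUnion.1 (mem_sdiff.1 hy).1
    rw [one_mul, hvol2 x h y k (mem_Icc.1 hh).1 hx (mem_Icc.1 hk).1 hy hxy])
  have hm : NullMeasurableSet {α | {x | α ∈ E x}.Infinite} μ := by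
    have : {α | {x | α ∈ E x}.Infinite} =
        ⋂ F₀ : Finset (Fin (m + 2) → ℤ), ⋃ x ∈ {x | x ∉ F₀}, E x := by
      ext ω
      simp only [Set.mem_ofPred_eq, Set.mem_iInter, Set.mem_iUnion, exists_prop]
      constructor
      · intro hi F₀
        obtain ⟨i, hi1, hi2⟩ := hi.exists_notMem_finset F₀
        exact ⟨i, hi2, hi1⟩
      · intro hh hfin
        obtain ⟨i, hi1, hi2⟩ := hh hfin.toFinset
        exact hi1 (by simpa using hi2)
    rw [this]
    exact (MeasurableSet.iInter fun F => MeasurableSet.biUnion (Set.to_countable _)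
      fun i _ => hEm i).nullMeasurableSet
  have h1 : μ {α | {x | α ∈ E x}.Infinite} = 1 := by
    refine le_antisymm prob_le_one ?_
    rw [measureReal_def, ← ENNReal.ofReal_le_iff_le_toReal (measure_ne_top _ _)] at hks
    simpa using hks
  have h2 := (prob_compl_eq_zero_iff₀ hm).2 h1
  exact h2

lemma cone_of {n : ℕ} (ℓ : ℕ) (hℓ : 1 ≤ ℓ) (x : Fin n → ℤ) (i₀ : Fin n) (hi₀ : (i₀ : ℕ) = 0)
    (h0 : 0 < (x i₀).natAbs) (h : ∀ i, i ≠ i₀ → (x i).natAbs < (x i₀).natAbs) :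
    cone ℓ x ∧ Hgt x = (x i₀).natAbs := by
  constructor
  · have h1 : (x i₀).natAbs ≤ (Finset.univ.filter fun i : Fin n => (i : ℕ) < ℓ).sup fun i => (x i).natAbs :=
      Finset.le_sup (f := fun i => (x i).natAbs) (by simp; omega)
    refine lt_of_lt_of_le ?_ h1
    rw [Finset.sup_lt_iff (by simpa using h0)]
    intro i hi
    refine h i ?_
    rintro rfl
    simp at hi; omega
  · apply le_antisymm
    · refine Finset.sup_le fun i _ => ?_
      by_cases hi : i = i₀
      · rw [hi]
      · exact (h i hi).le
    · exact Finset.le_sup (f := fun i => (x i).natAbs) (mem_univ i₀)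

lemma dnint_eq {n : ℕ} (x : Fin n → ℤ) (α : Fin n → ℝ) :
    dnint (∑ i, (x i : ℝ) * α i) = ‖lf x (fun i => (α i : UnitAddCircle))‖ := by
  have : lf x (fun i => (α i : UnitAddCircle)) = ((∑ i, (x i : ℝ) * α i : ℝ) : UnitAddCircle) := by
    rw [lf_apply]
    have := map_sum (QuotientAddGroup.mk' (AddSubgroup.zmultiples (1:ℝ))) (fun i => (x i : ℝ) * α i) univ
    refine Eq.trans ?_ this.symm
    refine sum_congr rfl fun i _ => ?_
    rw [← zsmul_eq_mul, map_zsmul]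
    rfl
  rw [this, UnitAddCircle.norm_eq, dnint]

theorem khintchine_groshev_restricted_divergence (n ℓ : ℕ) (hℓ : 1 ≤ ℓ) (hn : ℓ ≤ n)
    (ψ : ℕ → ℝ) (hpos : ∀ h, 0 < ψ h) (hmono : Antitone ψ)
    (hdiv : ¬ Summable fun h : ℕ => (h : ℝ) ^ (n - 1) * ψ h) :
    volume {α : Fin n → ℝ | {x : Fin n → ℤ | cone ℓ x ∧
      dnint (∑ i, (x i : ℝ) * α i) ≤ ψ (Hgt x)}.Infinite}ᶜ = 0 := by
  have hdiv' := wlog_half (n - 1) ψ hmono hdiv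
  set φ : ℕ → ℝ := fun h => min (ψ h) (1 / 2) with hφ
  have hφpos : ∀ h, 0 ≤ φ h := fun h => le_min (hpos h).le (by norm_num)
  have hφmono : Antitone φ := fun a b hab => min_le_min_right _ (hmono hab)
  have hφhalf : ∀ h, φ h ≤ 1 / 2 := fun h => min_le_right _ _
  have hφψ : ∀ h, φ h ≤ ψ h := fun h => min_le_left _ _
  change ∀ᵐ α : Fin n → ℝ, {x : Fin n → ℤ | cone ℓ x ∧
      dnint (∑ i, (x i : ℝ) * α i) ≤ ψ (Hgt x)}.Infinite
  obtain rfl | ⟨m, rfl⟩ : n = 1 ∨ ∃ m, n = m + 2 := by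
    rcases n with _ | _ | m
    · omega
    · exact Or.inl rfl
    · exact Or.inr ⟨m, rfl⟩
  · have h1 := ae_lift1 _ (case_one φ hφpos hφmono hφhalf hdiv')
    filter_upwards [h1] with α hα
    have hinj : Function.Injective (fun (q : ℕ) (_ : Fin 1) => (q : ℤ)) := by
      intro a b hab
      have : (a : ℤ) = (b : ℤ) := congrFun hab 0
      exact_mod_cast this
    refine (hα.image hinj.injOn).mono ?_
    rintro _ ⟨q, ⟨hq, hqα⟩, rfl⟩
    obtain ⟨c1, c2⟩ := cone_of ℓ hℓ (fun _ : Fin 1 => (q : ℤ)) 0 rfl (by simpa using hq)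
      (fun i hi => absurd (Subsingleton.elim _ _) hi)
    refine ⟨c1, ?_⟩
    rw [c2, dnint_eq, lf_apply]
    refine le_trans ?_ (hφψ _)
    simpa using hqα
  · have h1 := ae_lift _ (case_two m φ hφpos hφmono hφhalf hdiv')
    filter_upwards [h1] with α hα
    refine hα.mono ?_
    rintro x ⟨⟨h, hh, hx⟩, hxα⟩
    obtain ⟨x0, -, x2⟩ := mem_Afam hx
    have e : (x 0).natAbs = h := by rw [x0]; simp
    obtain ⟨c1, c2⟩ := cone_of ℓ hℓ x 0 rfl (by omega) (fun i hi => by rw [e]; exact x2 i hi)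
    refine ⟨c1, ?_⟩
    rw [c2, dnint_eq]
    exact hxα.trans (hφψ _)
end

section
/- For every real μ > n and integers 1 ≤ ℓ ≤ n, the set {α ∈ ℝⁿ : μ_{n,ℓ}(α) = μ} has Hausdorff dimension n − 1 + (n+1)/(μ+1). In particular, μ_{n,ℓ} attains every value in (n, ∞). -/
open Finset MeasureTheory

open Filter Topology in
lemma hausdorff_limsup_zero {X ι : Type*} [MetricSpace X] [MeasurableSpace X] [BorelSpace X]
    [Countable ι] (T : ι → Set X) {d : ℝ} (hd : 0 < d)
    (hsum : ∑' i, Metric.ediam (T i) ^ d ≠ ⊤) :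
    Measure.hausdorffMeasure d {x | {i | x ∈ T i}.Infinite} = 0 := by
  have h0 := ENNReal.tendsto_tsum_compl_atTop_zero hsum
  have h1 := Measure.hausdorffMeasure_le_liminf_tsum (ι := fun F : Finset ι => {i // i ∉ F}) d
    {x | {i | x ∈ T i}.Infinite} (l := atTop)
    (fun F => (∑' i : {i // i ∉ F}, Metric.ediam (T i) ^ d) ^ (1 / d)) (by
      have := (ENNReal.continuous_rpow_const (y := 1 / d)).tendsto 0 |>.comp h0
      simpa [Function.comp_def, ENNReal.zero_rpow_of_pos (show 0 < d⁻¹ by positivity)] using this)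
    (fun F i => T i) (by
      refine Eventually.of_forall fun F i => ?_
      have : Metric.ediam (T i) ^ d ≤ ∑' i : {i // i ∉ F}, Metric.ediam (T i) ^ d :=
        ENNReal.le_tsum (f := fun i : {i // i ∉ F} => Metric.ediam (T i) ^ d) i
      calc Metric.ediam (T i) = (Metric.ediam (T i) ^ d) ^ (1 / d) := by
            rw [← ENNReal.rpow_mul, mul_one_div_cancel hd.ne', ENNReal.rpow_one]
        _ ≤ _ := ENNReal.rpow_le_rpow this (by positivity))
    (by
      refine Eventually.of_forall fun F x hx => ?_
      obtain ⟨i, hi, hiF⟩ := Set.Infinite.exists_notMem_finset hx F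
      exact Set.mem_iUnion.2 ⟨⟨i, hiF⟩, hi⟩)
  rw [h0.liminf_eq] at h1
  exact le_antisymm h1 bot_le

lemma Hgt_le {n : ℕ} (x : Fin n → ℤ) (i : Fin n) : (x i).natAbs ≤ Hgt x :=
  Finset.le_sup (f := fun i => (x i).natAbs) (Finset.mem_univ i)

lemma abs_le_Hgt {n : ℕ} (x : Fin n → ℤ) (i : Fin n) : |(x i : ℝ)| ≤ Hgt x := by
  have := Hgt_le x i
  rw [← Int.cast_abs, Int.abs_eq_natAbs]
  exact_mod_cast this

lemma Hgt_pos_of_cone {n ℓ : ℕ} {x : Fin n → ℤ} (h : cone ℓ x) : 1 ≤ Hgt x := by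
  have h1 : ((Finset.univ.filter fun i : Fin n => (i : ℕ) < ℓ).sup fun i => (x i).natAbs) ≤ Hgt x :=
    Finset.sup_mono (Finset.filter_subset _ _)
  unfold cone at h
  omega

lemma Hgt_eq_norm {n : ℕ} (x : Fin n → ℤ) : (Hgt x : ℝ) = ‖(fun i => (x i : ℝ))‖ := by
  apply le_antisymm
  · rcases Nat.eq_zero_or_pos n with h | h
    · subst h; simp [Hgt]
    · have : Nonempty (Fin n) := ⟨⟨0, h⟩⟩
      obtain ⟨i, _, hi⟩ := Finset.exists_mem_eq_sup (Finset.univ : Finset (Fin n))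
        Finset.univ_nonempty (fun i => (x i).natAbs)
      have : (Hgt x : ℝ) = |(x i : ℝ)| := by
        unfold Hgt; rw [hi, ← Int.cast_abs, Int.abs_eq_natAbs]; simp
      rw [this]
      exact norm_le_pi_norm (fun i => (x i : ℝ)) i
  · rw [pi_norm_le_iff_of_nonneg (by positivity)]
    intro i
    exact abs_le_Hgt x i

lemma summable_Hgt {n : ℕ} {r : ℝ} (hr : r < -n) :
    Summable fun x : Fin n → ℤ => (Hgt x : ℝ) ^ r := by
  let L := Submodule.span ℤ (Set.range (Pi.basisFun ℝ (Fin n)))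
  have hfin : Module.finrank ℤ L = n := by
    rw [ZLattice.rank ℝ L]; simp
  have h := ZLattice.summable_norm_rpow L r (by rw [hfin]; exact hr)
  have hmem : ∀ x : Fin n → ℤ, (fun i => (x i : ℝ)) ∈ L := by
    intro x
    rw [(Pi.basisFun ℝ (Fin n)).mem_span_iff_repr_mem ℤ]
    intro i
    exact ⟨x i, by simp⟩
  let φ : (Fin n → ℤ) → L := fun x => ⟨_, hmem x⟩
  have hφ : Function.Injective φ := by
    intro x y hxy
    have := congrArg Subtype.val hxy
    funext i
    have h2 : (x i : ℝ) = y i := congrFun this i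
    exact_mod_cast h2
  refine (h.comp_injective hφ).congr fun x => ?_
  simp only [Function.comp, Hgt_eq_norm]
  rfl

/-- the set of points with infinitely many good approximations of order `M`. -/
def EM (n ℓ : ℕ) (M : ℝ) : Set (Fin n → ℝ) :=
  {α | {x : Fin n → ℤ | cone ℓ x ∧ 0 < dnint (∑ i, (x i : ℝ) * α i) ∧
    dnint (∑ i, (x i : ℝ) * α i) ≤ (Hgt x : ℝ) ^ (-M)}.Infinite}

/-- cells covering a slab -/
def cell {n : ℕ} (M : ℝ) (x : Fin n → ℤ) (i₀ : Fin n) (p : ℤ) (c : Fin n → ℤ) :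
    Set (Fin n → ℝ) :=
  {α | |(∑ i, (x i : ℝ) * α i) - p| ≤ (Hgt x : ℝ) ^ (-M) ∧
    ∀ j, j ≠ i₀ → ⌊α j * (Hgt x : ℝ) ^ (1 + M)⌋ = c j}

lemma cell_diam {n : ℕ} (M : ℝ) (x : Fin n → ℤ) (hx : 1 ≤ Hgt x) (i₀ : Fin n)
    (hi : (x i₀).natAbs = Hgt x) (p : ℤ) (c : Fin n → ℤ) :
    Metric.ediam (cell M x i₀ p c) ≤ ENNReal.ofReal ((n + 2) * (Hgt x : ℝ) ^ (-(1 + M))) := by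
  have hH : (1 : ℝ) ≤ Hgt x := by exact_mod_cast hx
  set H : ℝ := (Hgt x : ℝ) with hHdef
  have hH0 : 0 < H := by linarith
  set δ : ℝ := H ^ (-(1 + M)) with hδ
  have hδ0 : 0 < δ := Real.rpow_pos_of_pos hH0 _
  have hδi : δ * H ^ (1 + M) = 1 := by
    rw [hδ, ← Real.rpow_add hH0]; simp
  have hδH : H ^ (-M) = H * δ := by
    rw [hδ, show -M = 1 + (-(1 + M)) by ring, Real.rpow_add hH0, Real.rpow_one]
  apply Metric.ediam_le
  intro α hα β hβ
  rw [edist_dist]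
  apply ENNReal.ofReal_le_ofReal
  have hj : ∀ j, j ≠ i₀ → |α j - β j| ≤ δ := by
    intro j hj
    have h1 := Int.abs_sub_lt_one_of_floor_eq_floor ((hα.2 j hj).trans (hβ.2 j hj).symm)
    have h2 : |α j - β j| = δ * |α j * H ^ (1 + M) - β j * H ^ (1 + M)| := by
      rw [← sub_mul, abs_mul, abs_of_pos (Real.rpow_pos_of_pos hH0 _)]
      rw [mul_comm (|α j - β j|), ← mul_assoc, hδi, one_mul]
    rw [h2]
    calc _ ≤ δ * 1 := by gcongr
      _ = δ := mul_one _
  rw [dist_pi_le_iff (by positivity)]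
  intro j
  rw [Real.dist_eq]
  by_cases hj0 : j = i₀
  · subst hj0
    have hxj : |(x j : ℝ)| = H := by
      rw [← Int.cast_abs, Int.abs_eq_natAbs, hi]; simp [hHdef]
    have key : (x j : ℝ) * (α j - β j) = ((∑ i, (x i : ℝ) * α i) - p) - ((∑ i, (x i : ℝ) * β i) - p)
        - ∑ i ∈ univ.erase j, (x i : ℝ) * (α i - β i) := by
      have e1 := Finset.add_sum_erase univ (fun i => (x i : ℝ) * α i) (mem_univ j)
      have e2 := Finset.add_sum_erase univ (fun i => (x i : ℝ) * β i) (mem_univ j)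
      simp only [mul_sub, Finset.sum_sub_distrib]
      linarith
    have hs : |∑ i ∈ univ.erase j, (x i : ℝ) * (α i - β i)| ≤ n * (H * δ) := by
      calc _ ≤ ∑ i ∈ univ.erase j, |(x i : ℝ) * (α i - β i)| := Finset.abs_sum_le_sum_abs _ _
        _ ≤ ∑ i ∈ univ.erase j, H * δ := by
          apply Finset.sum_le_sum
          intro i hi'
          rw [abs_mul]
          exact mul_le_mul (abs_le_Hgt x i) (hj i (Finset.ne_of_mem_erase hi')) (abs_nonneg _) hH0.le
        _ ≤ ∑ i : Fin n, H * δ := by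
          apply Finset.sum_le_sum_of_subset_of_nonneg (Finset.erase_subset _ _)
          intros; positivity
        _ = n * (H * δ) := by simp
    have ha := hα.1
    have hb := hβ.1
    rw [hδH] at ha hb
    have h3 : H * |α j - β j| ≤ H * ((n + 2) * δ) := by
      rw [← hxj, ← abs_mul, key, hxj]
      calc _ ≤ |(∑ i, (x i : ℝ) * α i) - p| + |(∑ i, (x i : ℝ) * β i) - p| +
          |∑ i ∈ univ.erase j, (x i : ℝ) * (α i - β i)| := by
            refine (abs_sub _ _).trans ?_
            gcongr
            exact abs_sub _ _
        _ ≤ _ := by linarith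
    exact le_of_mul_le_mul_left h3 hH0
  · have := hj j hj0
    nlinarith [Nat.cast_nonneg (α := ℝ) n]

/-- index set for the cells -/
noncomputable def cellIdx {n : ℕ} (R : ℕ) (M : ℝ) (x : Fin n → ℤ) (i₀ : Fin n) : Finset (ℤ × (Fin n → ℤ)) :=
  Finset.Icc (-((n * Hgt x * R + 1 : ℕ) : ℤ)) ((n * Hgt x * R + 1 : ℕ) : ℤ) ×ˢ
    Fintype.piFinset (fun j => if j = i₀ then {0} else
      Finset.Icc (-(⌈(R : ℝ) * (Hgt x : ℝ) ^ (1 + M)⌉ + 1)) (⌈(R : ℝ) * (Hgt x : ℝ) ^ (1 + M)⌉ + 1))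

lemma cell_cover {n : ℕ} (R : ℕ) (M : ℝ) (x : Fin n → ℤ) (hx : 1 ≤ Hgt x) (i₀ : Fin n)
    (α : Fin n → ℝ) (hα : ‖α‖ ≤ R) (h : dnint (∑ i, (x i : ℝ) * α i) ≤ (Hgt x : ℝ) ^ (-M)) :
    ∃ pc ∈ cellIdx R M x i₀, α ∈ cell M x i₀ pc.1 pc.2 := by
  have hH : (1 : ℝ) ≤ Hgt x := by exact_mod_cast hx
  have hαj : ∀ j, |α j| ≤ R := fun j => (norm_le_pi_norm α j).trans hα
  refine ⟨(round (∑ i, (x i : ℝ) * α i), fun j => if j = i₀ then 0 else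
    ⌊α j * (Hgt x : ℝ) ^ (1 + M)⌋), ?_, ?_, ?_⟩
  · simp only [cellIdx, Finset.mem_product, Fintype.mem_piFinset]
    constructor
    · have h1 : |∑ i, (x i : ℝ) * α i| ≤ n * Hgt x * R := by
        calc _ ≤ ∑ i, |(x i : ℝ) * α i| := Finset.abs_sum_le_sum_abs _ _
          _ ≤ ∑ i : Fin n, (Hgt x : ℝ) * R := by
            apply Finset.sum_le_sum
            intro i _
            rw [abs_mul]
            exact mul_le_mul (abs_le_Hgt x i) (hαj i) (abs_nonneg _) (by linarith)
          _ = _ := by simp; ring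
      have h2 := abs_sub_round (∑ i, (x i : ℝ) * α i)
      rw [abs_le] at h1 h2
      rw [Finset.mem_Icc]
      constructor
      · have : (-((n * Hgt x * R + 1 : ℕ) : ℝ)) ≤ (round (∑ i, (x i : ℝ) * α i) : ℝ) := by
          push_cast; linarith
        exact_mod_cast this
      · have : (round (∑ i, (x i : ℝ) * α i) : ℝ) ≤ ((n * Hgt x * R + 1 : ℕ) : ℝ) := by
          push_cast; linarith
        exact_mod_cast this
    · intro j
      by_cases hj : j = i₀
      · simp [hj]
      · simp only [hj, if_false, Finset.mem_Icc]
        have hP : 0 < (Hgt x : ℝ) ^ (1 + M) := Real.rpow_pos_of_pos (by linarith) _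
        have := abs_le.1 (hαj j)
        have h4 := Int.le_ceil ((R : ℝ) * (Hgt x : ℝ) ^ (1 + M))
        constructor
        · rw [Int.le_floor]
          push_cast
          nlinarith
        · have h5 := Int.floor_le (α j * (Hgt x : ℝ) ^ (1 + M))
          have : (⌊α j * (Hgt x : ℝ) ^ (1 + M)⌋ : ℝ) ≤
            ((⌈(R : ℝ) * (Hgt x : ℝ) ^ (1 + M)⌉ + 1 : ℤ) : ℝ) := by
            push_cast; nlinarith
          exact_mod_cast this
  · exact h
  · intro j hj
    simp [hj]

lemma cellIdx_card {n : ℕ} (R : ℕ) (M : ℝ) (hM : 0 ≤ M) : ∃ C : ℝ, 0 ≤ C ∧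
    ∀ (x : Fin n → ℤ) (_ : 1 ≤ Hgt x) (i₀ : Fin n),
    ((cellIdx R M x i₀).card : ℝ) ≤ C * Hgt x * ((Hgt x : ℝ) ^ (1 + M)) ^ (n - 1) := by
  refine ⟨(2 * n * R + 3) * (2 * R + 5) ^ (n - 1), by positivity, ?_⟩
  intro x hx i₀
  have hH : (1 : ℝ) ≤ Hgt x := by exact_mod_cast hx
  have hP : 1 ≤ (Hgt x : ℝ) ^ (1 + M) := Real.one_le_rpow hH (by linarith)
  set D := ⌈(R : ℝ) * (Hgt x : ℝ) ^ (1 + M)⌉ with hD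
  have hD0 : 0 ≤ D := by positivity
  have hD1 : (D : ℝ) < (R : ℝ) * (Hgt x : ℝ) ^ (1 + M) + 1 := Int.ceil_lt_add_one _
  have hcard : (cellIdx R M x i₀).card = (2 * (n * Hgt x * R + 1) + 1) * (2 * (D + 1) + 1).toNat ^ (n - 1) := by
    unfold cellIdx
    rw [Finset.card_product, Fintype.card_piFinset]
    congr 1
    · rw [Int.card_Icc]; omega
    · rw [← Finset.mul_prod_erase univ _ (mem_univ i₀)]
      simp only [if_true, card_singleton, one_mul]
      rw [Finset.prod_congr rfl (g := fun _ => (2 * (D + 1) + 1).toNat)]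
      · simp
      · intro j hj
        rw [if_neg (Finset.ne_of_mem_erase hj), Int.card_Icc]
        congr 1
        ring
  rw [hcard]
  push_cast
  have h1 : (((2 * (D + 1) + 1).toNat : ℕ) : ℝ) = 2 * (D + 1) + 1 := by
    have : (((2 * (D + 1) + 1).toNat : ℤ)) = 2 * (D + 1) + 1 := Int.toNat_of_nonneg (by omega)
    exact_mod_cast this
  rw [h1]
  have hRn : (0:ℝ) ≤ R := by positivity
  calc _ ≤ ((2 * n * R + 3) * Hgt x) * ((2 * R + 5) * (Hgt x : ℝ) ^ (1 + M)) ^ (n - 1) := by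
        have hD0' : (0 : ℝ) ≤ D := by exact_mod_cast hD0
        gcongr
        · nlinarith
        · nlinarith
    _ = _ := by rw [mul_pow]; ring

lemma EM_box_null {n ℓ : ℕ} (hn : 0 < n) (R : ℕ) {M d : ℝ} (hM : 0 ≤ M)
    (hd : (n : ℝ) - 1 + (n + 1) / (M + 1) < d) :
    Measure.hausdorffMeasure d (EM n ℓ M ∩ {α | ‖α‖ ≤ R}) = 0 := by
  have : Nonempty (Fin n) := ⟨⟨0, hn⟩⟩
  have hn1 : (1 : ℝ) ≤ n := by exact_mod_cast hn
  have hd0 : 0 < d := by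
    have : 0 < ((n : ℝ) + 1) / (M + 1) := by positivity
    linarith
  have hex : ∀ x : Fin n → ℤ, ∃ i, (x i).natAbs = Hgt x := by
    intro x
    obtain ⟨i, _, hi⟩ := Finset.exists_mem_eq_sup (Finset.univ : Finset (Fin n))
        Finset.univ_nonempty (fun i => (x i).natAbs)
    exact ⟨i, hi.symm⟩
  choose i₀ hi₀ using hex
  let ι := Σ x : {x : Fin n → ℤ // 1 ≤ Hgt x}, {pc // pc ∈ cellIdx R M x.1 (i₀ x.1)}
  let T : ι → Set (Fin n → ℝ) := fun i => cell M i.1.1 (i₀ i.1.1) i.2.1.1 i.2.1.2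
  obtain ⟨C, hC0, hC⟩ := cellIdx_card (n := n) R M hM
  set r : ℝ := 1 - (1 + M) * (d - (n - 1)) with hr
  have hrn : r < -n := by
    have h1 : ((n : ℝ) + 1) / (M + 1) < d - (n - 1) := by linarith
    rw [div_lt_iff₀ (by linarith)] at h1
    rw [hr]; nlinarith
  have hsum : ∑' i, Metric.ediam (T i) ^ d ≠ ⊤ := by
    rw [ENNReal.tsum_sigma']
    have hb : ∀ x : {x : Fin n → ℤ // 1 ≤ Hgt x},
        ∑' b : {pc // pc ∈ cellIdx R M x.1 (i₀ x.1)}, Metric.ediam (T ⟨x, b⟩) ^ d ≤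
        ENNReal.ofReal (C * (n + 2) ^ d * (Hgt x.1 : ℝ) ^ r) := by
      intro x
      have hH : (1 : ℝ) ≤ Hgt x.1 := by exact_mod_cast x.2
      have hH0 : (0 : ℝ) < Hgt x.1 := by linarith
      calc _ ≤ ∑' b : {pc // pc ∈ cellIdx R M x.1 (i₀ x.1)},
            ENNReal.ofReal (((n + 2) * (Hgt x.1 : ℝ) ^ (-(1 + M))) ^ d) := by
            apply ENNReal.tsum_le_tsum
            intro b
            rw [← ENNReal.ofReal_rpow_of_nonneg (by positivity) hd0.le]
            apply ENNReal.rpow_le_rpow _ hd0.le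
            exact cell_diam M x.1 x.2 (i₀ x.1) (hi₀ x.1) _ _
        _ = ENNReal.ofReal ((cellIdx R M x.1 (i₀ x.1)).card * (((n + 2) * (Hgt x.1 : ℝ) ^ (-(1 + M))) ^ d)) := by
            rw [tsum_fintype, Finset.sum_const, nsmul_eq_mul, ENNReal.ofReal_mul (by positivity)]
            simp
        _ ≤ _ := by
            apply ENNReal.ofReal_le_ofReal
            calc _ ≤ (C * Hgt x.1 * ((Hgt x.1 : ℝ) ^ (1 + M)) ^ (n - 1)) * (((n + 2) * (Hgt x.1 : ℝ) ^ (-(1 + M))) ^ d) := by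
                  gcongr
                  exact hC x.1 x.2 _
              _ = _ := by
                  rw [Real.mul_rpow (by positivity) (by positivity), ← Real.rpow_mul hH0.le,
                    ← Real.rpow_natCast, ← Real.rpow_mul hH0.le]
                  have : (Hgt x.1 : ℝ) ^ r = Hgt x.1 * (Hgt x.1 : ℝ) ^ ((1 + M) * ((n - 1 : ℕ) : ℝ)) * (Hgt x.1 : ℝ) ^ (-(1 + M) * d) := by
                    rw [← Real.rpow_one_add' hH0.le, ← Real.rpow_add hH0]
                    · congr 1
                      rw [hr, Nat.cast_sub hn]; push_cast; ring
                    · positivity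
                  rw [this]; ring
    have hs : Summable fun x : {x : Fin n → ℤ // 1 ≤ Hgt x} => C * (n + 2) ^ d * (Hgt x.1 : ℝ) ^ r :=
      ((summable_Hgt hrn).comp_injective Subtype.val_injective).mul_left _
    refine ne_top_of_le_ne_top ?_ (ENNReal.tsum_le_tsum hb)
    exact hs.tsum_ofReal_ne_top
  refine measure_mono_null ?_ (hausdorff_limsup_zero T hd0 hsum)
  intro α ⟨hα, hαR⟩ hfin
  apply hα
  have : (fun i : ι => i.1.1) '' {i | α ∈ T i} |>.Finite := Set.Finite.image _ hfin
  refine this.subset ?_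
  rintro x ⟨hx1, -, hx2⟩
  have hx := Hgt_pos_of_cone hx1
  obtain ⟨pc, hpc, hmem⟩ := cell_cover R M x hx (i₀ x) α hαR hx2
  exact ⟨⟨⟨x, hx⟩, ⟨pc, hpc⟩⟩, hmem, rfl⟩

lemma EM_null {n ℓ : ℕ} (hn : 0 < n) {M d : ℝ} (hM : 0 ≤ M)
    (hd : (n : ℝ) - 1 + (n + 1) / (M + 1) < d) :
    Measure.hausdorffMeasure d (EM n ℓ M) = 0 := by
  refine measure_mono_null (t := ⋃ R : ℕ, EM n ℓ M ∩ {α | ‖α‖ ≤ R}) ?_ ?_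
  · intro α hα
    obtain ⟨R, hR⟩ := exists_nat_ge ‖α‖
    exact Set.mem_iUnion.2 ⟨R, hα, hR⟩
  · exact measure_iUnion_null fun R => EM_box_null hn R hM hd

/-- rational hyperplanes are null in dimension larger than `n - 1`. -/
lemma hyperplane_null {n : ℕ} {d : ℝ} (hd : (n : ℝ) - 1 < d) (x : Fin n → ℤ) (hx : x ≠ 0) (p : ℤ) :
    Measure.hausdorffMeasure d {α : Fin n → ℝ | ∑ i, (x i : ℝ) * α i = p} = 0 := by
  set S := {α : Fin n → ℝ | ∑ i, (x i : ℝ) * α i = p} with hS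
  rcases S.eq_empty_or_nonempty with h | hne
  · rw [h]; simp
  obtain ⟨i, hi⟩ : ∃ i, x i ≠ 0 := by
    by_contra hcon
    push Not at hcon
    exact hx (funext hcon)
  have hn : 0 < n := i.pos
  have hn1 : (1 : ℝ) ≤ n := by exact_mod_cast hn
  let φ : (Fin n → ℝ) →ₗ[ℝ] ℝ := ∑ i, (x i : ℝ) • LinearMap.proj i
  have hφ : ∀ α, φ α = ∑ i, (x i : ℝ) * α i := by
    intro α; simp [φ]
  have hconv : Convex ℝ S := by
    have : S = φ ⁻¹' {(p : ℝ)} := by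
      ext α; simp [hS, hφ]
    rw [this]
    exact (convex_singleton _).linear_preimage φ
  have hspan : vectorSpan ℝ S ≤ LinearMap.ker φ := by
    rw [vectorSpan_def, Submodule.span_le]
    rintro _ ⟨a, ha, b, hb, rfl⟩
    have ha' : φ a = p := (hφ a).trans ha
    have hb' : φ b = p := (hφ b).trans hb
    simp [ha', hb']
  have hlt : LinearMap.ker φ < ⊤ := by
    rw [lt_top_iff_ne_top]
    intro h
    have : φ (Pi.single i 1) = 0 := by
      have : Pi.single i 1 ∈ LinearMap.ker φ := by rw [h]; trivial
      exact this
    rw [hφ] at this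
    simp [Pi.single_apply] at this
    exact hi this
  have hfr : Module.finrank ℝ (vectorSpan ℝ S) < n := by
    refine (Submodule.finrank_mono hspan).trans_lt ?_
    simpa using Submodule.finrank_lt hlt.ne
  have hdim := Real.Convex.dimH_eq_finrank_vectorSpan hconv hne
  have hd0 : 0 ≤ d := by linarith
  lift d to NNReal using hd0
  apply hausdorffMeasure_of_dimH_lt
  rw [hdim]
  have h1 : (Module.finrank ℝ (vectorSpan ℝ S) : ℝ) + 1 ≤ n := by exact_mod_cast hfr
  have h2 : ((Module.finrank ℝ (vectorSpan ℝ S) : NNReal) : ℝ) < d := by push_cast; linarith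
  exact_mod_cast h2

/-- A system of sets containing many well distributed intervals at arbitrarily small scale. -/
def Sys (t A : ℝ) (U : ℕ → Set ℝ) : Prop :=
  ∀ j a b, 0 ≤ a → a < b → b ≤ 1 → ∀ η > 0, ∃ (F : Finset ℝ) (ρ : ℝ), F.Nonempty ∧ 0 < ρ ∧ ρ ≤ η ∧
    (∀ P ∈ F, a ≤ P - ρ ∧ P + ρ ≤ b ∧ Set.Icc (P - ρ) (P + ρ) ⊆ U j) ∧
    ∀ z r, ρ ≤ r → (((F.filter fun P => |P - z| ≤ r).card : ℕ) : ℝ) ≤ F.card * (A * r / (b - a) + η * r ^ t)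

/-- total weight of the intervals meeting `[a,b]`. -/
noncomputable def wt {ι : Type*} (t : ℝ) (z r : ι → ℝ) (a b : ℝ) : ENNReal :=
  ∑' i, if a - r i ≤ z i ∧ z i ≤ b + r i then ENNReal.ofReal (r i ^ t) else 0

lemma le_wt {ι : Type*} (t : ℝ) (z r : ι → ℝ) (a b : ℝ) (i : ι)
    (hi : a - r i ≤ z i ∧ z i ≤ b + r i) : ENNReal.ofReal (r i ^ t) ≤ wt t z r a b := by
  calc ENNReal.ofReal (r i ^ t)
      = (if a - r i ≤ z i ∧ z i ≤ b + r i then ENNReal.ofReal (r i ^ t) else 0) := (if_pos hi).symm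
    _ ≤ _ := ENNReal.le_tsum (f := fun i => if a - r i ≤ z i ∧ z i ≤ b + r i then
        ENNReal.ofReal (r i ^ t) else 0) i

lemma real_step {t A L c θ r ρ η : ℝ} (ht : 0 < t) (ht1 : t < 1) (hA : 0 < A) (hL : 0 < L) (hL1 : L ≤ 1)
    (hθ : θ = (1 / (8 * A)) ^ (1 / (1 - t))) (hc : c = θ ^ t) (hr : 0 < r) (hρ : 0 < ρ)
    (hrL : r ^ t ≤ c * L ^ t) (hρη : ρ ≤ η) (hη : η ≤ 1 / 8) (hηθ : η ≤ θ * L) :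
    min r ρ ^ t * (A * (r + ρ) / L + η * (r + ρ) ^ t) ≤ (ρ ^ t / (2 * L ^ t)) * r ^ t := by
  have h1t : 0 < 1 - t := by linarith
  have hθ0 : 0 < θ := by rw [hθ]; positivity
  have hη0 : 0 < η := by linarith
  set m := max r ρ with hm
  have hm0 : 0 < m := lt_max_of_lt_left hr
  have hmL : m ≤ θ * L := by
    apply max_le
    · rw [hc, ← Real.mul_rpow hθ0.le hL.le] at hrL
      exact (Real.rpow_le_rpow_iff hr.le (by positivity) ht).1 hrL
    · linarith
  have hmin0 : 0 < min r ρ := lt_min hr hρ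
  have hmm : min r ρ ^ t * m ^ t = r ^ t * ρ ^ t := by
    rw [← Real.mul_rpow hmin0.le hm0.le, ← Real.mul_rpow hr.le hρ.le, hm, min_mul_max]
  have hsum : r + ρ ≤ 2 * m := by
    have := le_max_left r ρ
    have := le_max_right r ρ
    linarith
  have h2 : (r + ρ) ^ t ≤ 2 * m ^ t := by
    calc (r + ρ) ^ t ≤ (2 * m) ^ t := by gcongr
      _ = 2 ^ t * m ^ t := Real.mul_rpow (by norm_num) hm0.le
      _ ≤ 2 ^ (1 : ℝ) * m ^ t := by gcongr; norm_num
      _ = _ := by simp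
  have h3 : m = m ^ t * m ^ (1 - t) := by
    rw [← Real.rpow_add hm0]; simp
  have h4 : m ^ (1 - t) ≤ 1 / (8 * A) * L ^ (1 - t) := by
    calc m ^ (1 - t) ≤ (θ * L) ^ (1 - t) := by gcongr
      _ = θ ^ (1 - t) * L ^ (1 - t) := Real.mul_rpow hθ0.le hL.le
      _ = _ := by
        rw [hθ, ← Real.rpow_mul (by positivity), one_div_mul_cancel h1t.ne', Real.rpow_one]
  have hLt : L ^ t ≤ 1 := Real.rpow_le_one hL.le hL1 ht.le
  have hLt0 : 0 < L ^ t := by positivity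
  have hLL : L = L ^ t * L ^ (1 - t) := by
    rw [← Real.rpow_add hL]; simp
  have h5 : A * (r + ρ) / L ≤ m ^ t * (1 / (4 * L ^ t)) := by
    calc A * (r + ρ) / L ≤ A * (2 * m) / L := by gcongr
      _ = m ^ t * (2 * A * m ^ (1 - t) / L) := by
        nth_rewrite 1 [h3]; ring
      _ ≤ m ^ t * (2 * A * (1 / (8 * A) * L ^ (1 - t)) / L) := by gcongr
      _ = _ := by
        congr 1
        have : 0 < L ^ (1 - t) := by positivity
        nth_rewrite 2 [hLL]
        field_simp
        norm_num
  have h6 : η * (r + ρ) ^ t ≤ m ^ t * (1 / (4 * L ^ t)) := by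
    calc η * (r + ρ) ^ t ≤ 1 / 8 * (2 * m ^ t) := by gcongr
      _ = m ^ t * (1 / 4) := by ring
      _ ≤ _ := by
        gcongr
        linarith
  calc _ ≤ min r ρ ^ t * (m ^ t * (1 / (4 * L ^ t)) + m ^ t * (1 / (4 * L ^ t))) := by gcongr
    _ = (min r ρ ^ t * m ^ t) * (1 / (2 * L ^ t)) := by field_simp; norm_num
    _ = _ := by rw [hmm]; ring

lemma step1 {ι : Type*} {t A θ c : ℝ} {U : ℕ → Set ℝ} (hU : Sys t A U) (ht : 0 < t) (ht1 : t < 1)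
    (hA : 1 ≤ A) (hθ : θ = (1 / (8 * A)) ^ (1 / (1 - t))) (hc : c = θ ^ t) (z r : ι → ℝ)
    (hr : ∀ i, 0 < r i) (j : ℕ) (a b : ℝ) (ha : 0 ≤ a) (hab : a < b) (hb : b ≤ 1)
    (hw : wt t z r a b ≤ ENNReal.ofReal (c * (b - a) ^ t)) :
    ∃ a' b', a ≤ a' ∧ a' < b' ∧ b' ≤ b ∧ b' - a' ≤ 1 / (j + 1) ∧ Set.Icc a' b' ⊆ U j ∧
      wt t z r a' b' ≤ ENNReal.ofReal (c * (b' - a') ^ t) := by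
  have hθ0 : 0 < θ := by rw [hθ]; positivity
  have hθ1 : θ ≤ 1 := by
    rw [hθ]; apply Real.rpow_le_one (by positivity) _ (by apply div_nonneg <;> linarith)
    rw [div_le_one (by positivity)]; linarith
  have hc0 : 0 < c := by rw [hc]; positivity
  have hc1 : c ≤ 1 := by rw [hc]; exact Real.rpow_le_one hθ0.le hθ1 ht.le
  set L := b - a with hLdef
  have hL : 0 < L := by linarith
  have hL1 : L ≤ 1 := by linarith
  set η : ℝ := min (min (1 / 8) (θ * L)) (1 / (2 * (j + 1))) with hη
  have hη0 : 0 < η := by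
    rw [hη]; refine lt_min (lt_min (by norm_num) (by positivity)) (by positivity)
  obtain ⟨F, ρ, hF, hρ, hρη, hFU, hcount⟩ := hU j a b ha hab hb η hη0
  have hη1 : η ≤ 1 / 8 := (min_le_left _ _).trans (min_le_left _ _)
  have hη2 : η ≤ θ * L := (min_le_left _ _).trans (min_le_right _ _)
  have hη3 : η ≤ 1 / (2 * (j + 1)) := min_le_right _ _
  have hri : ∀ i, (a - r i ≤ z i ∧ z i ≤ b + r i) → r i ^ t ≤ c * L ^ t := by
    intro i hi
    have h1 : ENNReal.ofReal (r i ^ t) ≤ wt t z r a b := by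
      exact le_wt t z r a b i hi
    exact (ENNReal.ofReal_le_ofReal_iff (by positivity)).1 (h1.trans hw)
  -- the averaged weight
  let W : ℝ → ENNReal := fun P => ∑' i, if |P - z i| ≤ r i + ρ then
    ENNReal.ofReal (min (r i) ρ ^ t) else 0
  have hWsum : ∑ P ∈ F, W P ≤ ∑ P ∈ F, ENNReal.ofReal (c * ρ ^ t / 2) := by
    calc ∑ P ∈ F, W P = ∑' i, ∑ P ∈ F, if |P - z i| ≤ r i + ρ then
          ENNReal.ofReal (min (r i) ρ ^ t) else 0 := by
          rw [Summable.tsum_finsetSum]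
          intro _ _; exact ENNReal.summable
      _ ≤ ∑' i, ENNReal.ofReal (F.card * (ρ ^ t / (2 * L ^ t))) *
          (if a - r i ≤ z i ∧ z i ≤ b + r i then ENNReal.ofReal (r i ^ t) else 0) := by
          apply ENNReal.tsum_le_tsum
          intro i
          by_cases hi : a - r i ≤ z i ∧ z i ≤ b + r i
          · rw [if_pos hi, ← Finset.sum_filter, Finset.sum_const, nsmul_eq_mul,
              ← ENNReal.ofReal_natCast, ← ENNReal.ofReal_mul (by positivity),
              ← ENNReal.ofReal_mul (by positivity)]
            apply ENNReal.ofReal_le_ofReal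
            have h1 := hcount (z i) (r i + ρ) (by linarith [hr i])
            have h2 := real_step ht ht1 (by linarith : 0 < A) hL hL1 hθ hc (hr i) hρ (hri i hi) hρη hη1 hη2
            have hm0 : 0 < min (r i) ρ := lt_min (hr i) hρ
            calc _ ≤ (F.card * (A * (r i + ρ) / L + η * (r i + ρ) ^ t)) * min (r i) ρ ^ t := by
                  gcongr
              _ = F.card * (min (r i) ρ ^ t * (A * (r i + ρ) / L + η * (r i + ρ) ^ t)) := by ring
              _ ≤ F.card * ((ρ ^ t / (2 * L ^ t)) * r i ^ t) := by gcongr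
              _ = _ := by ring
          · rw [if_neg hi, mul_zero]
            apply le_of_eq
            apply Finset.sum_eq_zero
            intro P hP
            rw [if_neg]
            intro h
            apply hi
            have := hFU P hP
            rw [abs_le] at h
            constructor <;> linarith
      _ = ENNReal.ofReal (F.card * (ρ ^ t / (2 * L ^ t))) * wt t z r a b := by
          rw [ENNReal.tsum_mul_left]; rfl
      _ ≤ ENNReal.ofReal (F.card * (ρ ^ t / (2 * L ^ t))) * ENNReal.ofReal (c * L ^ t) := by gcongr
      _ = _ := by
          rw [Finset.sum_const, nsmul_eq_mul, ← ENNReal.ofReal_natCast,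
            ← ENNReal.ofReal_mul (by positivity), ← ENNReal.ofReal_mul (by positivity)]
          congr 1
          have : 0 < L ^ t := by positivity
          field_simp
  obtain ⟨P, hP, hWP⟩ : ∃ P ∈ F, W P ≤ ENNReal.ofReal (c * ρ ^ t / 2) := by
    by_contra hcon
    push Not at hcon
    exact absurd hWsum (not_le.2 (ENNReal.sum_lt_sum_of_nonempty hF hcon))
  refine ⟨P - ρ, P + ρ, (hFU P hP).1, by linarith, (hFU P hP).2.1, ?_, (hFU P hP).2.2, ?_⟩
  · have : 1 / (2 * ((j : ℝ) + 1)) = 1 / (j + 1) / 2 := by field_simp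
    linarith
  · have hsm : ∀ i, |P - z i| ≤ r i + ρ → r i ≤ ρ := by
      intro i hi
      by_contra hcon
      push Not at hcon
      have h1 : ENNReal.ofReal (ρ ^ t) ≤ W P := by
        have := ENNReal.le_tsum (f := fun i => if |P - z i| ≤ r i + ρ then
            ENNReal.ofReal (min (r i) ρ ^ t) else 0) i
        simpa [hi, min_eq_right hcon.le] using this
      have h2 := (ENNReal.ofReal_le_ofReal_iff (by positivity)).1 (h1.trans hWP)
      have : 0 < ρ ^ t := by positivity
      nlinarith
    calc wt t z r (P - ρ) (P + ρ) ≤ W P := by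
          apply ENNReal.tsum_le_tsum
          intro i
          by_cases hi : |P - z i| ≤ r i + ρ
          · rw [if_pos hi, min_eq_left (hsm i hi)]
            split_ifs <;> simp
          · rw [if_neg hi, if_neg]
            intro h
            apply hi
            rw [abs_le]; constructor <;> linarith
      _ ≤ _ := hWP
      _ ≤ _ := by
          apply ENNReal.ofReal_le_ofReal
          have : ρ ^ t ≤ (P + ρ - (P - ρ)) ^ t := by
            gcongr; linarith
          have : 0 < ρ ^ t := by positivity
          nlinarith

lemma lemmaA {t A : ℝ} (ht : 0 < t) (ht1 : t < 1) (hA : 1 ≤ A) : ∃ c > 0, ∀ {ι : Type} (U : ℕ → Set ℝ),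
    Sys t A U → ∀ z r : ι → ℝ, (∀ i, 0 < r i) → ∑' i, ENNReal.ofReal (r i ^ t) ≤ ENNReal.ofReal c →
    ∃ a : ℝ, (∀ j, a ∈ U j) ∧ ∀ i, r i < |a - z i| := by
  set θ := (1 / (8 * A)) ^ (1 / (1 - t)) with hθ
  set c := θ ^ t with hc
  have hθ0 : 0 < θ := by rw [hθ]; positivity
  have hc0 : 0 < c := by rw [hc]; positivity
  refine ⟨c, hc0, ?_⟩
  intro ι U hU z r hr hsum
  let Good := {p : ℝ × ℝ // 0 ≤ p.1 ∧ p.1 < p.2 ∧ p.2 ≤ 1 ∧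
    wt t z r p.1 p.2 ≤ ENNReal.ofReal (c * (p.2 - p.1) ^ t)}
  have hstep : ∀ (j : ℕ) (p : Good), ∃ p' : Good, p.1.1 ≤ p'.1.1 ∧ p'.1.2 ≤ p.1.2 ∧
      p'.1.2 - p'.1.1 ≤ 1 / (j + 1) ∧ Set.Icc p'.1.1 p'.1.2 ⊆ U j := by
    rintro j ⟨⟨a, b⟩, h1, h2, h3, h4⟩
    obtain ⟨a', b', k1, k2, k3, k4, k5, k6⟩ := step1 hU ht ht1 hA hθ hc z r hr j a b h1 h2 h3 h4
    exact ⟨⟨⟨a', b'⟩, h1.trans k1, k2, k3.trans h3, k6⟩, k1, k3, k4, k5⟩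
  choose nxt hn1 hn2 hn3 hn4 using hstep
  let p0 : Good := ⟨(0, 1), le_refl _, by norm_num, le_refl _, by
    simp only [sub_zero, Real.one_rpow, mul_one]
    refine le_trans ?_ hsum
    apply ENNReal.tsum_le_tsum
    intro i
    split_ifs <;> simp⟩
  let p : ℕ → Good := fun k => Nat.rec p0 (fun j q => nxt j q) k
  have hp : ∀ j, p (j + 1) = nxt j (p j) := fun j => rfl
  have hmono : Monotone fun j => (p j).1.1 := monotone_nat_of_le_succ fun j => by
    rw [hp]; exact hn1 j _
  have hanti : Antitone fun j => (p j).1.2 := antitone_nat_of_succ_le fun j => by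
    rw [hp]; exact hn2 j _
  have hle : ∀ i j, (p i).1.1 ≤ (p j).1.2 := by
    intro i j
    calc (p i).1.1 ≤ (p (max i j)).1.1 := hmono (le_max_left _ _)
      _ ≤ (p (max i j)).1.2 := (p (max i j)).2.2.1.le
      _ ≤ _ := hanti (le_max_right _ _)
  set x := ⨆ j, (p j).1.1 with hx
  have hbdd : BddAbove (Set.range fun j => (p j).1.1) := ⟨(p 0).1.2, by
    rintro _ ⟨i, rfl⟩; exact hle i 0⟩
  have hx1 : ∀ j, (p j).1.1 ≤ x := fun j => le_ciSup hbdd j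
  have hx2 : ∀ j, x ≤ (p j).1.2 := fun j => ciSup_le fun i => hle i j
  refine ⟨x, ?_, ?_⟩
  · intro j
    apply hn4 j (p j)
    exact ⟨hx1 (j + 1), hx2 (j + 1)⟩
  · intro i
    by_contra hcon
    push Not at hcon
    have hall : ∀ j : ℕ, r i ^ t ≤ c * (1 / ((j : ℝ) + 1)) ^ t := by
      intro j
      have h1 := (p (j + 1)).2.2.2.2
      have h0 := (p (j + 1)).2.2.1
      have h2 : ENNReal.ofReal (r i ^ t) ≤ wt t z r (p (j + 1)).1.1 (p (j + 1)).1.2 := by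
        have hc : (p (j + 1)).1.1 - r i ≤ z i ∧ z i ≤ (p (j + 1)).1.2 + r i := by
          have := hx1 (j + 1)
          have := hx2 (j + 1)
          rw [abs_le] at hcon
          constructor <;> linarith
        exact le_wt t z r _ _ i hc
      have hpos : 0 < (p (j + 1)).1.2 - (p (j + 1)).1.1 := by linarith
      have h3 := (ENNReal.ofReal_le_ofReal_iff (by positivity)).1 (h2.trans h1)
      refine h3.trans ?_
      gcongr
      exact hn3 j (p j)
    have hlim : Filter.Tendsto (fun j : ℕ => c * (1 / ((j : ℝ) + 1)) ^ t) Filter.atTop (nhds (c * 0 ^ t)) := by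
      apply Filter.Tendsto.const_mul
      exact tendsto_one_div_add_atTop_nhds_zero_nat.rpow_const (Or.inr ht.le)
    rw [Real.zero_rpow ht.ne', mul_zero] at hlim
    have := ge_of_tendsto' hlim hall
    have : 0 < r i ^ t := Real.rpow_pos_of_pos (hr i) t
    linarith

lemma near_int_1d {z : ℤ} (hz : z ≠ 0) (c h : ℝ) (h0 : 0 ≤ h) (h1 : h ≤ 1 / 2) :
    volume {b : ℝ | b ∈ Set.Icc (0:ℝ) 1 ∧ ∃ N : ℤ, |c + z * b - N| ≤ h} ≤ ENNReal.ofReal (6 * h) := by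
  have hz0 : (z : ℝ) ≠ 0 := by exact_mod_cast hz
  have hzabs : (1 : ℝ) ≤ |(z : ℝ)| := by
    rw [← Int.cast_abs]; exact_mod_cast Int.one_le_abs hz
  set lo := min c (c + z) with hlo
  set I := Finset.Icc ⌈lo - 1 / 2⌉ ⌊lo + |(z : ℝ)| + 1 / 2⌋ with hI
  have hsub : {b : ℝ | b ∈ Set.Icc (0:ℝ) 1 ∧ ∃ N : ℤ, |c + z * b - N| ≤ h} ⊆
      ⋃ N ∈ I, Metric.closedBall (((N : ℝ) - c) / z) (h / |(z : ℝ)|) := by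
    rintro b ⟨⟨hb0, hb1⟩, N, hN⟩
    simp only [Set.mem_iUnion]
    refine ⟨N, ?_, ?_⟩
    · rw [hI, Finset.mem_Icc, Int.ceil_le, Int.le_floor]
      have h2 := abs_le.1 hN
      rcases le_or_gt 0 (z : ℝ) with hs | hs
      · rw [hlo, min_eq_left (by linarith), abs_of_nonneg hs]
        constructor <;> nlinarith
      · rw [hlo, min_eq_right (by linarith), abs_of_neg hs]
        constructor <;> nlinarith
    · rw [Metric.mem_closedBall, Real.dist_eq, le_div_iff₀ (by linarith), ← abs_mul]
      have : (b - ((N : ℝ) - c) / z) * z = c + z * b - N := by field_simp; ring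
      rw [this]; exact hN
  have hcard : (I.card : ℝ) ≤ |(z : ℝ)| + 2 := by
    rw [hI, Int.card_Icc]
    have h3 := Int.floor_le (lo + |(z : ℝ)| + 1 / 2)
    have h4 := Int.le_ceil (lo - 1 / 2)
    rcases le_or_gt 0 (⌊lo + |(z : ℝ)| + 1 / 2⌋ + 1 - ⌈lo - 1 / 2⌉) with hs | hs
    · have : ((((⌊lo + |(z : ℝ)| + 1 / 2⌋ + 1 - ⌈lo - 1 / 2⌉).toNat : ℤ)) : ℝ) =
        ((⌊lo + |(z : ℝ)| + 1 / 2⌋ + 1 - ⌈lo - 1 / 2⌉ : ℤ) : ℝ) := by rw [Int.toNat_of_nonneg hs]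
      rw [← Int.cast_natCast, this]; push_cast; linarith
    · rw [Int.toNat_of_nonpos hs.le]; simp; positivity
  calc _ ≤ volume (⋃ N ∈ I, Metric.closedBall (((N : ℝ) - c) / z) (h / |(z : ℝ)|)) := measure_mono hsub
    _ ≤ ∑ N ∈ I, volume (Metric.closedBall (((N : ℝ) - c) / z) (h / |(z : ℝ)|)) :=
        measure_biUnion_finset_le _ _
    _ = ENNReal.ofReal (I.card * (2 * (h / |(z : ℝ)|))) := by
        simp_rw [Real.volume_closedBall]
        rw [Finset.sum_const, nsmul_eq_mul, ENNReal.ofReal_mul (p := (I.card : ℝ)) (by positivity),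
          ENNReal.ofReal_natCast]
    _ ≤ _ := by
        apply ENNReal.ofReal_le_ofReal
        calc (I.card : ℝ) * (2 * (h / |(z : ℝ)|)) ≤ (|(z : ℝ)| + 2) * (2 * (h / |(z : ℝ)|)) := by gcongr
          _ ≤ (3 * |(z : ℝ)|) * (2 * (h / |(z : ℝ)|)) := by gcongr; linarith
          _ = _ := by field_simp; ring

lemma near_int_meas {k : ℕ} (z : Fin k → ℤ) (h : ℝ) :
    MeasurableSet {β : Fin k → ℝ | ∃ N : ℤ, |∑ i, (z i : ℝ) * β i - N| ≤ h} := by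
  rw [Set.ofPred_exists]
  apply MeasurableSet.iUnion
  intro N
  apply IsClosed.measurableSet
  apply isClosed_le _ continuous_const
  fun_prop

lemma near_int {k : ℕ} {z : Fin k → ℤ} (hz : z ≠ 0) (h : ℝ) (h0 : 0 ≤ h) (h1 : h ≤ 1 / 2) :
    volume (Set.Icc (0 : Fin k → ℝ) 1 ∩ {β : Fin k → ℝ | ∃ N : ℤ, |∑ i, (z i : ℝ) * β i - N| ≤ h})
      ≤ ENNReal.ofReal (6 * h) := by
  obtain ⟨i, hi⟩ : ∃ i, z i ≠ 0 := by
    by_contra hcon; push Not at hcon; exact hz (funext hcon)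
  obtain _ | k := k
  · exact i.elim0
  set S := Set.Icc (0 : Fin (k+1) → ℝ) 1 ∩ {β | ∃ N : ℤ, |∑ i, (z i : ℝ) * β i - N| ≤ h} with hS
  have hSm : MeasurableSet S := measurableSet_Icc.inter (near_int_meas z h)
  have he : ∀ (b : ℝ) (y : Fin k → ℝ), (MeasurableEquiv.piFinSuccAbove (fun _ : Fin (k+1) => ℝ) i).symm (b, y)
      = i.insertNth b y := fun _ _ => rfl
  have hmp := (volume_preserving_piFinSuccAbove (fun _ : Fin (k+1) => ℝ) i).symm
  rw [← hmp.measure_preimage hSm.nullMeasurableSet]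
  have hm2 : MeasurableSet ((MeasurableEquiv.piFinSuccAbove (fun _ : Fin (k+1) => ℝ) i).symm ⁻¹' S) :=
    (MeasurableEquiv.measurable _) hSm
  rw [Measure.volume_eq_prod, Measure.prod_apply_symm hm2]
  calc _ ≤ ∫⁻ y : Fin k → ℝ, (Set.Icc (0 : Fin k → ℝ) 1).indicator (fun _ => ENNReal.ofReal (6 * h)) y := by
        apply lintegral_mono
        intro y
        by_cases hy : y ∈ Set.Icc (0 : Fin k → ℝ) 1
        · simp only [Set.indicator_of_mem hy]
          refine le_trans (measure_mono ?_) (near_int_1d hi (∑ j, (z (i.succAbove j) : ℝ) * y j) h h0 h1)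
          intro b hb
          simp only [hS, Set.mem_preimage, Set.mem_inter_iff, Set.mem_ofPred_eq] at hb
          obtain ⟨hb1, N, hN⟩ := hb
          refine ⟨⟨?_, ?_⟩, N, ?_⟩
          · simpa [he] using hb1.1 i
          · simpa [he] using hb1.2 i
          · rw [Fin.sum_univ_succAbove _ i] at hN
            simpa [he, add_comm] using hN
        · simp only [Set.indicator_of_notMem hy]
          rw [nonpos_iff_eq_zero]
          convert measure_empty (μ := (volume : Measure ℝ))
          ext b
          simp only [Set.mem_preimage, Set.mem_empty_iff_false, iff_false]
          rintro ⟨hb, -⟩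
          apply hy
          constructor
          · intro j; simpa [he] using hb.1 (i.succAbove j)
          · intro j; simpa [he] using hb.2 (i.succAbove j)
    _ = ENNReal.ofReal (6 * h) := by
        rw [lintegral_indicator_const measurableSet_Icc, Real.volume_Icc_pi]
        simp

/-- primes in `(Q, 4 Q]` -/
def qs (Q : ℕ) : Finset ℕ := (Finset.Ioc Q (4 * Q)).filter Nat.Prime

/-- labels -/
def lab (k Q : ℕ) : Finset (ℕ × (Fin k → ℕ)) := qs Q ×ˢ Fintype.piFinset (fun _ => Finset.range Q)

/-- the rational-type points -/
noncomputable def Pt {k : ℕ} (β : Fin k → ℝ) (l : ℕ × (Fin k → ℕ)) (p : ℕ) : ℝ :=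
  ((p : ℝ) - ∑ i, (l.2 i : ℝ) * β i) / l.1

/-- close pairs of numerators for a given pair of labels -/
noncomputable def prs (k Q : ℕ) (σ : ℝ) (β : Fin k → ℝ) (l l' : ℕ × (Fin k → ℕ)) : Finset (ℕ × ℕ) :=
  (Finset.range ((k + 5) * Q) ×ˢ Finset.range ((k + 5) * Q)).filter
    fun pp => ¬ l.1 ∣ pp.1 ∧ ¬ l'.1 ∣ pp.2 ∧ |Pt β l pp.1 - Pt β l' pp.2| ≤ σ

lemma mem_lab {k Q : ℕ} {l : ℕ × (Fin k → ℕ)} (h : l ∈ lab k Q) :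
    Q < l.1 ∧ l.1 ≤ 4 * Q ∧ l.1.Prime ∧ ∀ i, l.2 i < Q := by
  simp only [lab, qs, Finset.mem_product, Finset.mem_filter, Finset.mem_Ioc, Fintype.mem_piFinset,
    Finset.mem_range] at h
  tauto

lemma int_eq_of_close {a b : ℤ} {x h : ℝ} (hh : h ≤ 1 / 4) (ha : |(a : ℝ) - x| ≤ h)
    (hb : |(b : ℝ) - x| ≤ h) : a = b := by
  rw [abs_le] at ha hb
  have h1 : (a : ℝ) - b < 1 := by linarith
  have h2 : (b : ℝ) - a < 1 := by linarith
  have h1' : a - b < 1 := by exact_mod_cast h1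
  have h2' : b - a < 1 := by exact_mod_cast h2
  omega

open Classical in
lemma prs_bound {k Q : ℕ} {σ : ℝ} (hσ : 0 ≤ σ) (hσ1 : 16 * (Q : ℝ) ^ 2 * σ ≤ 1 / 4)
    {l l' : ℕ × (Fin k → ℕ)} (hl : l ∈ lab k Q) (hl' : l' ∈ lab k Q) :
    (∀ β, prs k Q σ β l l' = ∅) ∨ (l = l' ∧ ∀ β, ∀ pp ∈ prs k Q σ β l l', pp.1 = pp.2) ∨
    (l ≠ l' ∧ ∃ (C : ℕ) (h : ℝ) (w : Fin k → ℤ), w ≠ 0 ∧ 0 ≤ h ∧ h ≤ 1 / 2 ∧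
      C * (6 * h) ≤ 96 * (k + 6) * (Q : ℝ) ^ 2 * σ ∧
      ∀ β : Fin k → ℝ, (prs k Q σ β l l').card ≤
        if (∃ N : ℤ, |∑ i, (w i : ℝ) * β i - N| ≤ h) then C else 0) := by
  obtain ⟨q, x⟩ := l
  obtain ⟨q', x'⟩ := l'
  obtain ⟨hq1, hq2, hqp, hx⟩ := mem_lab hl
  obtain ⟨hq1', hq2', hqp', hx'⟩ := mem_lab hl'
  simp only at hq1 hq2 hqp hx hq1' hq2' hqp' hx'
  have hqR : (0 : ℝ) < q := by exact_mod_cast hqp.pos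
  have hqR' : (0 : ℝ) < q' := by exact_mod_cast hqp'.pos
  have hqle : (q : ℝ) ≤ 4 * Q := by exact_mod_cast hq2
  have hqle' : (q' : ℝ) ≤ 4 * Q := by exact_mod_cast hq2'
  have hQ1 : (1 : ℝ) ≤ Q := by
    have : 1 ≤ Q := by have := hqp.pos; omega
    exact_mod_cast this
  by_cases hqq : q = q'
  · subst hqq
    have hh : 4 * (Q : ℝ) * σ ≤ 1 / 4 := by nlinarith
    have key : ∀ β : Fin k → ℝ, ∀ pp ∈ prs k Q σ β (q, x) (q, x'),
        |(((pp.1 : ℤ) - (pp.2 : ℤ) : ℤ) : ℝ) - ∑ i, (((x i : ℤ) - (x' i : ℤ) : ℤ) : ℝ) * β i| ≤ 4 * Q * σ := by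
      intro β pp hpp
      simp only [prs, Finset.mem_filter, Pt] at hpp
      have h1 := hpp.2.2.2
      rw [← sub_div, abs_div, abs_of_pos hqR, div_le_iff₀ hqR] at h1
      have h2 : (((pp.1 : ℤ) - (pp.2 : ℤ) : ℤ) : ℝ) - ∑ i, (((x i : ℤ) - (x' i : ℤ) : ℤ) : ℝ) * β i
        = ((pp.1 : ℝ) - ∑ i, (x i : ℝ) * β i) - ((pp.2 : ℝ) - ∑ i, (x' i : ℝ) * β i) := by
        push_cast
        simp_rw [sub_mul]
        rw [Finset.sum_sub_distrib]; ring
      rw [h2]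
      nlinarith
    right
    by_cases hxx : x = x'
    · left
      subst hxx
      refine ⟨rfl, fun β pp hpp => ?_⟩
      have h1 := key β pp hpp
      have h2 := int_eq_of_close (a := (pp.1 : ℤ) - pp.2) (b := 0) (x := 0) hh (by simpa using h1)
        (by simp; positivity)
      omega
    · right
      refine ⟨by simpa using hxx, (k + 5) * Q, 4 * Q * σ, fun i => (x i : ℤ) - x' i, ?_, by positivity,
        by linarith, ?_, ?_⟩
      · intro h
        apply hxx
        funext i
        have := congrFun h i
        simp only [Pi.zero_apply] at this
        omega
      · push_cast
        have : 0 ≤ (Q : ℝ) ^ 2 * σ := by positivity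
        have hk : (0 : ℝ) ≤ k := by positivity
        nlinarith
      · intro β
        split_ifs with hN
        · calc _ ≤ (Finset.range ((k + 5) * Q)).card := by
                apply Finset.card_le_card_of_injOn (fun pp => pp.1)
                · intro pp hpp
                  simp only [prs, Finset.coe_filter, Finset.mem_product] at hpp
                  simpa using hpp.1.1
                · intro pp hpp pp' hpp' he
                  have := int_eq_of_close hh (key β pp hpp) (key β pp' hpp')
                  simp only at he
                  ext
                  · exact he
                  · omega
            _ = _ := by simp
        · rw [Nat.le_zero, Finset.card_eq_zero]
          by_contra hne
          obtain ⟨pp, hpp⟩ := Finset.nonempty_iff_ne_empty.2 hne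
          apply hN
          refine ⟨(pp.1 : ℤ) - pp.2, ?_⟩
          rw [abs_sub_comm]
          exact key β pp hpp
  · set z : Fin k → ℤ := fun i => (x i : ℤ) * q' - x' i * q with hz
    have key : ∀ β : Fin k → ℝ, ∀ pp ∈ prs k Q σ β (q, x) (q', x'),
        |(((pp.1 : ℤ) * q' - (pp.2 : ℤ) * q : ℤ) : ℝ) - ∑ i, (z i : ℝ) * β i| ≤ 16 * (Q : ℝ) ^ 2 * σ := by
      intro β pp hpp
      simp only [prs, Finset.mem_filter, Pt] at hpp
      have h1 := hpp.2.2.2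
      have h2 : (((pp.1 : ℤ) * q' - (pp.2 : ℤ) * q : ℤ) : ℝ) - ∑ i, (z i : ℝ) * β i
        = (((pp.1 : ℝ) - ∑ i, (x i : ℝ) * β i) / q - ((pp.2 : ℝ) - ∑ i, (x' i : ℝ) * β i) / q') * (q * q') := by
        have h3 : ∑ i, (z i : ℝ) * β i = (∑ i, (x i : ℝ) * β i) * q' - (∑ i, (x' i : ℝ) * β i) * q := by
          rw [Finset.sum_mul, Finset.sum_mul, ← Finset.sum_sub_distrib]
          apply Finset.sum_congr rfl
          intro i _
          rw [hz]; push_cast; ring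
        rw [h3]
        push_cast
        field_simp
        ring
      rw [h2, abs_mul, abs_of_pos (by positivity : (0:ℝ) < q * q')]
      have h4 : (q : ℝ) * q' ≤ 16 * (Q : ℝ) ^ 2 := by nlinarith
      calc _ ≤ σ * (16 * (Q : ℝ) ^ 2) := by gcongr
        _ = _ := by ring
    have hcop : IsCoprime (q : ℤ) (q' : ℤ) := by
      rw [Nat.isCoprime_iff_coprime]
      exact (Nat.coprime_primes hqp hqp').2 hqq
    by_cases hz0 : z = 0
    · left
      intro β
      by_contra hne
      obtain ⟨pp, hpp⟩ := Finset.nonempty_iff_ne_empty.2 hne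
      have h1 := key β pp hpp
      have h2 := int_eq_of_close (a := (pp.1 : ℤ) * q' - pp.2 * q) (b := 0) (x := 0) hσ1 (by simpa [hz0] using h1)
        (by simp; positivity)
      simp only [prs, Finset.mem_filter, Pt] at hpp
      apply hpp.2.1
      have h3 : (q : ℤ) ∣ (pp.1 : ℤ) * q' := ⟨pp.2, by linarith⟩
      have := hcop.dvd_of_dvd_mul_right h3
      exact_mod_cast this
    · right; right
      refine ⟨by simp [hqq], k + 5, 16 * (Q : ℝ) ^ 2 * σ, z, hz0, by positivity, by linarith, ?_, ?_⟩
      · push_cast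
        have : 0 ≤ (Q : ℝ) ^ 2 * σ := by positivity
        have hk : (0 : ℝ) ≤ k := by positivity
        nlinarith
      · intro β
        split_ifs with hN
        · calc _ ≤ (Finset.range (k + 5)).card := by
                apply Finset.card_le_card_of_injOn (fun pp => pp.1 / q)
                · intro pp hpp
                  simp only [prs, Finset.coe_filter, Finset.mem_product, Finset.mem_range] at hpp
                  simp only [Finset.coe_range, Set.mem_Iio]
                  rw [Nat.div_lt_iff_lt_mul hqp.pos]
                  calc pp.1 < (k + 5) * Q := hpp.1.1
                    _ ≤ (k + 5) * q := by gcongr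
                · intro pp hpp pp' hpp' he
                  have h1 := int_eq_of_close hσ1 (key β pp hpp) (key β pp' hpp')
                  simp only at he
                  have h2 : (q : ℤ) ∣ ((pp.1 : ℤ) - pp'.1) * q' := ⟨(pp.2 : ℤ) - pp'.2, by linarith⟩
                  have h3 : (q : ℤ) ∣ (pp.1 : ℤ) - pp'.1 := hcop.dvd_of_dvd_mul_right h2
                  have h4 : pp'.1 ≡ pp.1 [MOD q] := (Nat.modEq_iff_dvd).2 h3
                  have h5 : pp.1 = pp'.1 := by
                    rw [← Nat.div_add_mod pp.1 q, ← Nat.div_add_mod pp'.1 q, he, h4]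
                  ext
                  · exact h5
                  · rw [h5] at h1
                    have h6 : (pp.2 : ℤ) * q = pp'.2 * q := by linarith
                    have h7 : (q : ℤ) ≠ 0 := by exact_mod_cast hqp.ne_zero
                    exact_mod_cast mul_right_cancel₀ h7 h6
            _ = _ := by simp
        · rw [Nat.le_zero, Finset.card_eq_zero]
          by_contra hne
          obtain ⟨pp, hpp⟩ := Finset.nonempty_iff_ne_empty.2 hne
          apply hN
          refine ⟨(pp.1 : ℤ) * q' - pp.2 * q, ?_⟩
          rw [abs_sub_comm]
          exact key β pp hpp

lemma prs_meas (k Q : ℕ) (σ : ℝ) (l l' : ℕ × (Fin k → ℕ)) :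
    Measurable fun β : Fin k → ℝ => ((prs k Q σ β l l').card : ENNReal) := by
  unfold prs
  simp_rw [Finset.card_filter]
  push_cast
  apply Finset.measurable_sum
  intro pp _
  refine Measurable.ite ?_ measurable_const measurable_const
  refine (MeasurableSet.const _).inter ((MeasurableSet.const _).inter ?_)
  change MeasurableSet {a : Fin k → ℝ | |Pt a l pp.1 - Pt a l' pp.2| ≤ σ}
  apply IsClosed.measurableSet
  apply isClosed_le _ continuous_const
  unfold Pt
  fun_prop

/-- number of close pairs with distinct labels -/
noncomputable def cnt (k Q : ℕ) (σ : ℝ) (β : Fin k → ℝ) : ℕ :=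
  ∑ ll ∈ (lab k Q ×ˢ lab k Q).filter (fun ll => ll.1 ≠ ll.2), (prs k Q σ β ll.1 ll.2).card

lemma cnt_meas (k Q : ℕ) (σ : ℝ) : Measurable fun β : Fin k → ℝ => (cnt k Q σ β : ENNReal) := by
  unfold cnt
  push_cast
  apply Finset.measurable_sum
  intro ll _
  exact prs_meas _ _ _ _ _

lemma prs_int {k Q : ℕ} {σ : ℝ} (hσ : 0 ≤ σ) (hσ1 : 16 * (Q : ℝ) ^ 2 * σ ≤ 1 / 4)
    {l l' : ℕ × (Fin k → ℕ)} (hl : l ∈ lab k Q) (hl' : l' ∈ lab k Q) (hne : l ≠ l') :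
    ∫⁻ β in Set.Icc (0 : Fin k → ℝ) 1, ((prs k Q σ β l l').card : ENNReal) ≤
      ENNReal.ofReal (96 * (k + 6) * (Q : ℝ) ^ 2 * σ) := by
  classical
  rcases prs_bound hσ hσ1 hl hl' with h | h | ⟨-, C, h, w, hw, h0, h1, hb, hC⟩
  · simp [h]
  · exact absurd h.1 hne
  · calc _ ≤ ∫⁻ β in Set.Icc (0 : Fin k → ℝ) 1,
          ({β : Fin k → ℝ | ∃ N : ℤ, |∑ i, (w i : ℝ) * β i - N| ≤ h}.indicator (fun _ => (C : ENNReal)) β) := by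
          apply lintegral_mono
          intro β
          have := hC β
          simp only [Set.indicator]
          split_ifs with hN
          · rw [if_pos (by exact hN)] at this
            exact_mod_cast this
          · rw [if_neg (by exact hN)] at this
            exact_mod_cast this
      _ = C * volume (Set.Icc (0 : Fin k → ℝ) 1 ∩ {β : Fin k → ℝ | ∃ N : ℤ, |∑ i, (w i : ℝ) * β i - N| ≤ h}) := by
          rw [lintegral_indicator_const (near_int_meas w h), Measure.restrict_apply (near_int_meas w h),
            Set.inter_comm]
      _ ≤ C * ENNReal.ofReal (6 * h) := by gcongr; exact near_int hw h h0 h1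
      _ = ENNReal.ofReal (C * (6 * h)) := by
          rw [ENNReal.ofReal_mul (p := (C : ℝ)) (by positivity), ENNReal.ofReal_natCast]
      _ ≤ _ := ENNReal.ofReal_le_ofReal hb

lemma lab_card_le (k Q : ℕ) : (lab k Q).card ≤ 4 * Q ^ (k + 1) := by
  rw [lab, Finset.card_product, Fintype.card_piFinset]
  simp only [Finset.card_range, Finset.prod_const, Finset.card_univ, Fintype.card_fin]
  have : (qs Q).card ≤ 4 * Q := by
    calc _ ≤ (Finset.Ioc Q (4 * Q)).card := Finset.card_filter_le _ _
      _ ≤ 4 * Q := by simp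
  calc _ ≤ (4 * Q) * Q ^ k := by gcongr
    _ = _ := by ring

lemma cnt_int {k Q : ℕ} {σ : ℝ} (hσ : 0 ≤ σ) (hσ1 : 16 * (Q : ℝ) ^ 2 * σ ≤ 1 / 4) :
    ∫⁻ β in Set.Icc (0 : Fin k → ℝ) 1, (cnt k Q σ β : ENNReal) ≤
      ENNReal.ofReal (1536 * (k + 6) * (Q : ℝ) ^ (2 * k + 4) * σ) := by
  unfold cnt
  push_cast
  rw [lintegral_finsetSum _ (fun ll _ => prs_meas _ _ _ _ _)]
  calc _ ≤ ∑ ll ∈ (lab k Q ×ˢ lab k Q).filter (fun ll => ll.1 ≠ ll.2),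
        ENNReal.ofReal (96 * (k + 6) * (Q : ℝ) ^ 2 * σ) := by
        apply Finset.sum_le_sum
        intro ll hll
        rw [Finset.mem_filter, Finset.mem_product] at hll
        exact prs_int hσ hσ1 hll.1.1 hll.1.2 hll.2
    _ ≤ ((4 * Q ^ (k + 1) * (4 * Q ^ (k + 1)) : ℕ) : ENNReal) *
          ENNReal.ofReal (96 * (k + 6) * (Q : ℝ) ^ 2 * σ) := by
        rw [Finset.sum_const, nsmul_eq_mul]
        gcongr
        calc _ ≤ (lab k Q ×ˢ lab k Q).card := Finset.card_filter_le _ _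
          _ ≤ _ := by rw [Finset.card_product]; gcongr <;> exact lab_card_le k Q
    _ = _ := by
        rw [← ENNReal.ofReal_natCast, ← ENNReal.ofReal_mul (by positivity)]
        congr 1
        push_cast
        ring

/-- separation parameter -/
noncomputable def sg (k K : ℕ) : ℝ := 1 / ((2 : ℝ) ^ K) ^ (k + 2) / ((K : ℝ) + 1) ^ 5

lemma generic (k : ℕ) : ∀ᵐ β : Fin k → ℝ, β ∈ Set.Icc (0 : Fin k → ℝ) 1 →
    ∀ᶠ K : ℕ in Filter.atTop, (cnt k (2 ^ K) (sg k K) β : ℝ) ≤ ((2 : ℝ) ^ K) ^ (k + 2) / ((K : ℝ) + 1) ^ 3 := by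
  rw [← ae_restrict_iff' measurableSet_Icc]
  set s : ℕ → Set (Fin k → ℝ) := fun K => {β | ENNReal.ofReal (((2 : ℝ) ^ K) ^ (k + 2) / ((K : ℝ) + 1) ^ 3) ≤
    (cnt k (2 ^ K) (sg k K) β : ENNReal)} with hs
  have hbound : ∀ K : ℕ, 4 ≤ K →  (volume.restrict (Set.Icc (0 : Fin k → ℝ) 1)) (s K) ≤
      ENNReal.ofReal (1536 * (k + 6) * (1 / ((K : ℝ) + 1) ^ 2)) := by
    intro K hK
    have hpos : 0 < ((2 : ℝ) ^ K) ^ (k + 2) / ((K : ℝ) + 1) ^ 3 := by positivity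
    have h1 : 16 * ((2 ^ K : ℕ) : ℝ) ^ 2 * sg k K ≤ 1 / 4 := by
      unfold sg
      push_cast
      have h2 : (1 : ℝ) ≤ ((2 : ℝ) ^ K) ^ k := one_le_pow₀ (one_le_pow₀ (by norm_num))
      have h3 : (64 : ℝ) ≤ ((K : ℝ) + 1) ^ 5 := by
        have : (4 : ℝ) ≤ K := by exact_mod_cast hK
        calc (64 : ℝ) ≤ (4 + 1) ^ 5 := by norm_num
          _ ≤ _ := by gcongr
      rw [pow_add, div_div, mul_one_div, div_le_div_iff₀ (by positivity) (by norm_num)]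
      have h4 : 0 < ((2 : ℝ) ^ K) ^ 2 := by positivity
      have h5 : 64 ≤ ((2 : ℝ) ^ K) ^ k * ((K : ℝ) + 1) ^ 5 := by nlinarith
      nlinarith
    have h2 := cnt_int (k := k) (Q := 2 ^ K) (σ := sg k K) (by unfold sg; positivity) h1
    refine le_trans (meas_ge_le_lintegral_div (cnt_meas k (2 ^ K) (sg k K)).aemeasurable ?_ ENNReal.ofReal_ne_top) ?_
    · exact (ENNReal.ofReal_pos.2 hpos).ne'
    refine le_trans (ENNReal.div_le_div_right h2 _) ?_
    rw [← ENNReal.ofReal_div_of_pos hpos]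
    apply ENNReal.ofReal_le_ofReal
    apply le_of_eq
    unfold sg
    push_cast
    have : (2 : ℝ) ^ K ≠ 0 := by positivity
    rw [show 2 * k + 4 = (k + 2) + (k + 2) by ring, pow_add ((2 : ℝ) ^ K) (k + 2) (k + 2)]
    have : ((2 : ℝ) ^ K) ^ (k + 2) ≠ 0 := by positivity
    generalize ((2 : ℝ) ^ K) ^ (k + 2) = X at *
    field_simp
  have hsum : ∑' K, (volume.restrict (Set.Icc (0 : Fin k → ℝ) 1)) (s (K + 4)) ≠ ⊤ := by
    refine ne_top_of_le_ne_top ?_ (ENNReal.tsum_le_tsum fun K => hbound (K + 4) (by omega))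
    have hsm : Summable fun K : ℕ => 1536 * ((k : ℝ) + 6) * (1 / (((K + 4 : ℕ) : ℝ) + 1) ^ 2) := by
      apply Summable.mul_left
      have := (summable_nat_add_iff 5).2 (Real.summable_one_div_nat_pow.2 (by norm_num : 1 < 2))
      refine this.congr fun K => ?_
      push_cast; ring
    exact hsm.tsum_ofReal_ne_top
  have := ae_eventually_notMem hsum
  filter_upwards [this] with β hβ
  rw [Filter.eventually_atTop] at hβ ⊢
  obtain ⟨N, hN⟩ := hβ
  refine ⟨N + 4, fun K hK => ?_⟩
  have h1 := hN (K - 4) (by omega)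
  rw [show K - 4 + 4 = K by omega] at h1
  simp only [hs, Set.mem_ofPred_eq, not_le] at h1
  rw [← ENNReal.ofReal_natCast] at h1
  exact ((ENNReal.ofReal_lt_ofReal_iff_of_nonneg (by positivity)).1 h1).le

lemma polyexp (j : ℕ) {r : ℝ} (hr : 1 < r) (C : ℝ) :
    ∀ᶠ K : ℕ in Filter.atTop, C * ((K : ℝ) + 1) ^ j ≤ r ^ K := by
  have h1 := (Filter.tendsto_add_atTop_iff_nat 1).2 (tendsto_pow_const_div_const_pow_of_one_lt j hr)
  have h2 : (0 : ℝ) < 1 / ((|C| + 1) * r) := by positivity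
  filter_upwards [h1.eventually (gt_mem_nhds h2)] with K hK
  rw [div_lt_div_iff₀ (by positivity) (by positivity)] at hK
  push_cast at hK
  have h3 : 0 < ((K : ℝ) + 1) ^ j := by positivity
  have h4 : ((K : ℝ) + 1) ^ j * (|C| + 1) * r < r ^ K * r := by
    rw [pow_succ] at hK; linarith
  have h5 := lt_of_mul_lt_mul_right h4 (by linarith)
  have h6 := le_abs_self C
  nlinarith

lemma log_two_pow_le (K : ℕ) : Real.log ((2 : ℝ) ^ K) ≤ K := by
  rw [Real.log_pow]
  have := Real.log_two_lt_d9
  have h : (0:ℝ) ≤ K := by positivity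
  nlinarith

lemma qs_card : ∀ᶠ K : ℕ in Filter.atTop, (2 : ℝ) ^ K / ((K : ℝ) + 1) ^ 2 ≤ ((qs (2 ^ K)).card : ℝ) := by
  have hs : (1 : ℝ) < √2 := by
    rw [Real.lt_sqrt (by norm_num)]; norm_num
  filter_upwards [polyexp 1 hs 48, Filter.eventually_ge_atTop 1] with K hK hK1
  have hK1' : (1 : ℝ) ≤ K := by exact_mod_cast hK1
  have h1 := Chebyshev.theta_ge (4 * 2 ^ K)
  have h2 := Chebyshev.theta_le_log4_mul_x (x := ((2 ^ K : ℕ) : ℝ)) (by positivity)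
  have h3 : Chebyshev.theta ((4 * 2 ^ K : ℕ) : ℝ) = Chebyshev.theta ((2 ^ K : ℕ) : ℝ) +
      ∑ p ∈ qs (2 ^ K), Real.log p := by
    simp only [Chebyshev.theta, Nat.floor_natCast, qs]
    rw [← Finset.sum_union]
    · congr 1
      rw [← Finset.filter_union, Finset.Ioc_union_Ioc_eq_Ioc (by positivity)]
      have : 0 < 2 ^ K := by positivity
      omega
    · apply Finset.disjoint_filter_filter
      rw [Finset.disjoint_left]
      intro p hp hp'
      rw [Finset.mem_Ioc] at hp hp'
      omega
  have hQ : (4 : ℝ) * 2 ^ K = 2 ^ (K + 2) := by rw [pow_add]; ring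
  have h4 : ∑ p ∈ qs (2 ^ K), Real.log p ≤ (qs (2 ^ K)).card * ((K : ℝ) + 2) := by
    rw [← nsmul_eq_mul]
    apply Finset.sum_le_card_nsmul
    intro p hp
    simp only [qs, Finset.mem_filter, Finset.mem_Ioc] at hp
    have hp1 : (p : ℝ) ≤ 2 ^ (K + 2) := by rw [← hQ]; exact_mod_cast hp.1.2
    have hp2 : (0 : ℝ) < p := by exact_mod_cast hp.2.pos
    refine (Real.log_le_log hp2 hp1).trans ((log_two_pow_le (K + 2)).trans ?_)
    push_cast; rfl
  push_cast at h1 h2 h3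
  have h5 : Real.log (4 * 2 ^ K + 1) ≤ K + 3 := by
    have : (1 : ℝ) ≤ 2 ^ K := one_le_pow₀ (by norm_num)
    refine (Real.log_le_log (by positivity) (by rw [pow_add]; linarith : (4 * 2 ^ K + 1 : ℝ) ≤ 2 ^ (K + 3))).trans
      ((log_two_pow_le (K + 3)).trans ?_)
    push_cast; rfl
  have h6 : Real.log (4 * 2 ^ K) ≤ K + 2 := by
    rw [hQ]; refine (log_two_pow_le (K + 2)).trans ?_
    push_cast; rfl
  have h7 : √(4 * 2 ^ K) = 2 * (√2) ^ K := by
    rw [Real.sqrt_mul (by norm_num), show (4 : ℝ) = 2 ^ 2 by norm_num, Real.sqrt_sq (by norm_num)]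
    congr 1
    rw [Real.sqrt_eq_iff_mul_self_eq (by positivity) (by positivity), ← mul_pow, Real.mul_self_sqrt (by norm_num)]
  have h8 : (2 : ℝ) ^ K = (√2) ^ K * (√2) ^ K := by
    rw [← mul_pow, Real.mul_self_sqrt (by norm_num)]
  have h9 : (1 : ℝ) ≤ (√2) ^ K := one_le_pow₀ hs.le
  have hl4 : Real.log 4 = 2 * Real.log 2 := by
    rw [show (4 : ℝ) = 2 ^ 2 by norm_num, Real.log_pow]; norm_num
  have hl2 := Real.log_two_gt_d9
  rw [h7] at h1
  rw [hl4] at h2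
  have h10 : 2 * (2 * √2 ^ K) * Real.log (4 * 2 ^ K) ≤ 2 * (2 * √2 ^ K) * (K + 2) := by gcongr
  have h11 : (K : ℝ) + 3 + 2 * (2 * √2 ^ K) * (K + 2) ≤ 16 * √2 ^ K * (K + 1) := by nlinarith
  have h12 : 16 * √2 ^ K * ((K : ℝ) + 1) ≤ 2 ^ K / 3 := by
    rw [h8]; nlinarith
  have h13 : (2 : ℝ) ^ K ≤ (qs (2 ^ K)).card * ((K : ℝ) + 2) := by
    have : (0 : ℝ) < 2 ^ K := by positivity
    nlinarith
  rw [div_le_iff₀ (by positivity)]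
  refine h13.trans ?_
  gcongr
  nlinarith

lemma sep_count (F : Finset ℝ) {σ : ℝ} (hσ : 0 < σ) (hF : ∀ P ∈ F, ∀ P' ∈ F, P ≠ P' → σ ≤ |P - P'|)
    (z r : ℝ) (hr : 0 ≤ r) : (((F.filter fun P => |P - z| ≤ r).card : ℕ) : ℝ) ≤ 1 + 2 * r / σ := by
  have h1 : (F.filter fun P => |P - z| ≤ r).card ≤ (Finset.range (⌊2 * r / σ⌋₊ + 1)).card := by
    apply Finset.card_le_card_of_injOn (fun P => ⌊(P - (z - r)) / σ⌋₊)
    · intro P hP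
      simp only [Finset.coe_filter, Set.mem_ofPred_eq, abs_le] at hP
      simp only [Finset.coe_range, Set.mem_Iio, Nat.lt_succ_iff]
      apply Nat.floor_le_floor
      gcongr
      linarith
    · intro P hP P' hP' he
      simp only [Finset.coe_filter, Set.mem_ofPred_eq, abs_le] at hP hP'
      by_contra hne
      have h2 := hF P hP.1 P' hP'.1 hne
      simp only at he
      have h3 : 0 ≤ (P - (z - r)) / σ := by apply div_nonneg _ hσ.le; linarith
      have h3' : 0 ≤ (P' - (z - r)) / σ := by apply div_nonneg _ hσ.le; linarith
      have h4 := Nat.floor_le h3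
      have h5 := Nat.lt_floor_add_one ((P - (z - r)) / σ)
      have h4' := Nat.floor_le h3'
      have h5' := Nat.lt_floor_add_one ((P' - (z - r)) / σ)
      rw [he] at h4 h5
      have h6 : |(P - (z - r)) / σ - (P' - (z - r)) / σ| < 1 := by
        rw [abs_lt]; constructor <;> linarith
      rw [← sub_div, abs_div, abs_of_pos hσ, div_lt_one hσ] at h6
      have : P - (z - r) - (P' - (z - r)) = P - P' := by ring
      rw [this] at h6
      linarith
  rw [Finset.card_range] at h1
  calc _ ≤ ((⌊2 * r / σ⌋₊ + 1 : ℕ) : ℝ) := by exact_mod_cast h1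
    _ ≤ _ := by
      push_cast
      have := Nat.floor_le (by positivity : 0 ≤ 2 * r / σ)
      linarith

lemma nat_sep_count (S : Finset ℕ) {d : ℕ} (hd : 0 < d) (hS : ∀ p ∈ S, ∀ p' ∈ S, p < p' → p + d ≤ p')
    (z r : ℝ) (hr : 0 ≤ r) (hS' : ∀ p ∈ S, |(p : ℝ) - z| ≤ r) : (S.card : ℝ) ≤ 1 + 2 * r / d := by
  have := sep_count (S.image fun p : ℕ => (p : ℝ)) (σ := d) (by exact_mod_cast hd) ?_ z r hr
  · rw [Finset.filter_true_of_mem, Finset.card_image_of_injective _ Nat.cast_injective] at this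
    · exact this
    · intro P hP
      obtain ⟨p, hp, rfl⟩ := Finset.mem_image.1 hP
      exact hS' p hp
  · intro P hP P' hP' hne
    obtain ⟨p, hp, rfl⟩ := Finset.mem_image.1 hP
    obtain ⟨p', hp', rfl⟩ := Finset.mem_image.1 hP'
    rcases lt_trichotomy p p' with h | h | h
    · have := hS p hp p' hp' h
      have : (p : ℝ) + d ≤ p' := by exact_mod_cast this
      rw [abs_sub_comm]
      exact le_trans (by linarith) (le_abs_self _)
    · exact absurd (by rw [h]) hne
    · have := hS p' hp' p hp h
      have : (p' : ℝ) + d ≤ p := by exact_mod_cast this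
      exact le_trans (by linarith) (le_abs_self _)

lemma nat_count_ge (M q : ℕ) (hq : 0 < q) (u v : ℝ) (hu : 0 ≤ u) (huv : u ≤ v) (hv : v < M) (hvq : v - u ≤ q) :
    v - u - 3 ≤ (((Finset.range M).filter fun p : ℕ => ¬ q ∣ p ∧ u ≤ p ∧ (p : ℝ) ≤ v).card : ℝ) := by
  set S := (Finset.range M).filter fun p : ℕ => u ≤ p ∧ (p : ℝ) ≤ v with hS
  have h1 : v - u - 1 ≤ (S.card : ℝ) := by
    have hsub : Finset.Icc ⌈u⌉₊ ⌊v⌋₊ ⊆ S := by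
      intro p hp
      rw [Finset.mem_Icc] at hp
      have h2 : u ≤ p := Nat.ceil_le.1 hp.1
      have h3 : (p : ℝ) ≤ v := (Nat.le_floor_iff (by linarith)).1 hp.2
      rw [hS, Finset.mem_filter, Finset.mem_range]
      refine ⟨?_, h2, h3⟩
      exact_mod_cast lt_of_le_of_lt h3 hv
    have h2 := Finset.card_le_card hsub
    rw [Nat.card_Icc] at h2
    have h3 := Nat.ceil_lt_add_one hu
    have h4 := Nat.lt_floor_add_one v
    have h5 : ⌊v⌋₊ + 1 ≤ S.card + ⌈u⌉₊ := by omega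
    have h6 : (⌊v⌋₊ : ℝ) + 1 ≤ S.card + ⌈u⌉₊ := by exact_mod_cast h5
    linarith
  have h2 : ((S.filter fun p => q ∣ p).card : ℝ) ≤ 1 + 2 * ((v - u) / 2) / q := by
    apply nat_sep_count _ hq _ ((u + v) / 2) _ (by linarith)
    · intro p hp
      simp only [hS, Finset.mem_filter] at hp
      rw [abs_le]; constructor <;> linarith
    · intro p hp p' hp' hlt
      obtain ⟨c, hc⟩ := (Finset.mem_filter.1 hp).2
      obtain ⟨c', hc'⟩ := (Finset.mem_filter.1 hp').2
      subst hc hc'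
      have : c < c' := lt_of_mul_lt_mul_left hlt (Nat.zero_le _)
      calc q * c + q = q * (c + 1) := by ring
        _ ≤ q * c' := by gcongr; omega
  have h3 : 2 * ((v - u) / 2) / (q : ℝ) ≤ 1 := by
    rw [div_le_one (by exact_mod_cast hq)]; linarith
  have h4 := Finset.card_filter_add_card_filter_not (s := S) (fun p => q ∣ p)
  have h5 : (S.filter fun p => ¬ q ∣ p) =
      (Finset.range M).filter fun p : ℕ => ¬ q ∣ p ∧ u ≤ p ∧ (p : ℝ) ≤ v := by
    ext p; simp only [hS, Finset.mem_filter]; tauto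
  rw [h5] at h4
  have h6 : ((S.filter fun p => q ∣ p).card : ℝ) +
    ((Finset.range M).filter fun p : ℕ => ¬ q ∣ p ∧ u ≤ p ∧ (p : ℝ) ≤ v).card = S.card := by exact_mod_cast h4
  linarith

lemma det {k Q : ℕ} {β : Fin k → ℝ} (hβ : β ∈ Set.Icc (0 : Fin k → ℝ) 1) {a b ρ σ : ℝ}
    (ha : 0 ≤ a) (hb : b ≤ 1) (hρ : 0 < ρ) (hρL : 8 * ρ ≤ b - a) (hQL : 12 ≤ Q * (b - a))
    (hσ : 0 < σ) (hσ1 : 16 * (Q : ℝ) ^ 2 * σ ≤ 1 / 4)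
    (hcnt : 4 * (cnt k Q σ β : ℝ) ≤ (lab k Q).card * Q * (b - a)) :
    ∃ F : Finset ℝ, ((lab k Q).card : ℝ) * Q * (b - a) / 4 ≤ F.card ∧
      (∀ P ∈ F, ∃ l ∈ lab k Q, ∃ p : ℕ, P = Pt β l p ∧ a + ρ ≤ P ∧ P ≤ b - ρ) ∧
      (∀ P ∈ F, ∀ P' ∈ F, P ≠ P' → σ ≤ |P - P'|) ∧
      ∀ z r, 0 ≤ r → (((F.filter fun P => |P - z| ≤ r).card : ℕ) : ℝ) ≤ (lab k Q).card * (8 * Q * r + 1) := by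
  classical
  set L := b - a with hL
  have hL0 : 0 < L := by linarith
  have hQ0 : (0 : ℝ) ≤ Q := by positivity
  set M := (k + 5) * Q with hM
  set G : ℕ × (Fin k → ℕ) → Finset ℕ := fun l =>
    (Finset.range M).filter fun p => ¬ l.1 ∣ p ∧ a + ρ ≤ Pt β l p ∧ Pt β l p ≤ b - ρ with hG
  set Ω : Finset (Σ _ : ℕ × (Fin k → ℕ), ℕ) := (lab k Q).sigma G with hΩ
  set bad := Ω.filter fun ω => ∃ ω' ∈ Ω, ω' ≠ ω ∧ |Pt β ω.1 ω.2 - Pt β ω'.1 ω'.2| ≤ σ with hbad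
  have hs : ∀ l ∈ lab k Q, 0 ≤ ∑ i, (l.2 i : ℝ) * β i ∧ ∑ i, (l.2 i : ℝ) * β i ≤ k * Q := by
    intro l hl
    obtain ⟨-, -, -, h4⟩ := mem_lab hl
    constructor
    · apply Finset.sum_nonneg
      intro i _
      have := hβ.1 i
      simp only [Pi.zero_apply] at this
      positivity
    · calc _ ≤ ∑ i : Fin k, (Q : ℝ) * 1 := by
            apply Finset.sum_le_sum
            intro i _
            have h5 := hβ.1 i
            have h6 := hβ.2 i
            simp only [Pi.zero_apply, Pi.one_apply] at h5 h6
            have h7 : (l.2 i : ℝ) ≤ Q := by exact_mod_cast (h4 i).le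
            gcongr
        _ = _ := by simp
  have hGcard : ∀ l ∈ lab k Q, (Q : ℝ) * L / 2 ≤ ((G l).card : ℝ) := by
    intro l hl
    obtain ⟨h1, h2, h3, -⟩ := mem_lab hl
    obtain ⟨hs1, hs2⟩ := hs l hl
    set s := ∑ i, (l.2 i : ℝ) * β i with hsd
    have hq0 : (0 : ℝ) < l.1 := by exact_mod_cast h3.pos
    have hq1 : (Q : ℝ) ≤ l.1 := by exact_mod_cast h1.le
    have hq2 : (l.1 : ℝ) ≤ 4 * Q := by exact_mod_cast h2
    have hQp : (0 : ℝ) < Q := by nlinarith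
    have h4 := nat_count_ge M l.1 h3.pos (l.1 * (a + ρ) + s) (l.1 * (b - ρ) + s) (by positivity)
      (by nlinarith) (by rw [hM]; push_cast; nlinarith) (by nlinarith)
    have h5 : ((Finset.range M).filter fun p : ℕ => ¬ l.1 ∣ p ∧ l.1 * (a + ρ) + s ≤ p ∧ (p : ℝ) ≤ l.1 * (b - ρ) + s)
        = G l := by
      rw [hG]
      apply Finset.filter_congr
      intro p _
      unfold Pt
      rw [← hsd, le_div_iff₀ hq0, div_le_iff₀ hq0]
      constructor
      · rintro ⟨c1, c2, c3⟩; exact ⟨c1, by linarith, by linarith⟩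
      · rintro ⟨c1, c2, c3⟩; exact ⟨c1, by linarith, by linarith⟩
    rw [h5] at h4
    nlinarith
  have hΩcard : ((lab k Q).card : ℝ) * (Q * L / 2) ≤ Ω.card := by
    rw [hΩ, Finset.card_sigma]
    push_cast
    rw [← nsmul_eq_mul]
    exact Finset.card_nsmul_le_sum _ _ _ hGcard
  have hbadcard : bad.card ≤ cnt k Q σ β := by
    have hsub : bad ⊆ ((lab k Q ×ˢ lab k Q).filter (fun ll => ll.1 ≠ ll.2)).biUnion
        fun ll => (prs k Q σ β ll.1 ll.2).image fun pp => ⟨ll.1, pp.1⟩ := by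
      rintro ⟨l, p⟩ hω
      rw [hbad, Finset.mem_filter] at hω
      obtain ⟨hω, ⟨l', p'⟩, hω', hne, hc⟩ := hω
      simp only [hΩ, Finset.mem_sigma, hG, Finset.mem_filter] at hω hω' hc
      have hpp : (p, p') ∈ prs k Q σ β l l' := by
        simp only [prs, Finset.mem_filter, Finset.mem_product]
        exact ⟨⟨hω.2.1, hω'.2.1⟩, hω.2.2.1, hω'.2.2.1, hc⟩
      have hll : l ≠ l' := by
        rcases prs_bound hσ.le hσ1 hω.1 hω'.1 with h | h | h
        · rw [h] at hpp; simp at hpp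
        · exfalso
          apply hne
          have := h.2 β _ hpp
          simp only at this
          rw [h.1, this]
        · exact h.1
      rw [Finset.mem_biUnion]
      refine ⟨(l, l'), ?_, ?_⟩
      · rw [Finset.mem_filter, Finset.mem_product]
        exact ⟨⟨hω.1, hω'.1⟩, hll⟩
      · rw [Finset.mem_image]
        exact ⟨(p, p'), hpp, rfl⟩
    calc bad.card ≤ _ := Finset.card_le_card hsub
      _ ≤ _ := Finset.card_biUnion_le
      _ ≤ _ := Finset.sum_le_sum fun ll _ => Finset.card_image_le
  set F := (Ω \ bad).image fun ω => Pt β ω.1 ω.2 with hF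
  have hsep : ∀ ω ∈ Ω \ bad, ∀ ω' ∈ Ω \ bad, ω ≠ ω' → σ < |Pt β ω.1 ω.2 - Pt β ω'.1 ω'.2| := by
    intro ω hω ω' hω' hne
    rw [Finset.mem_sdiff] at hω hω'
    by_contra hcon
    push Not at hcon
    apply hω.2
    rw [hbad, Finset.mem_filter]
    exact ⟨hω.1, ω', hω'.1, hne.symm, hcon⟩
  refine ⟨F, ?_, ?_, ?_, ?_⟩
  · have hinj : F.card = (Ω \ bad).card := by
      rw [hF]
      apply Finset.card_image_of_injOn
      intro ω hω ω' hω' he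
      by_contra hne
      have := hsep ω hω ω' hω' hne
      simp only at he
      rw [he, sub_self, abs_zero] at this
      linarith
    rw [hinj]
    have h1 : Ω.card ≤ (Ω \ bad).card + bad.card := by
      have := Finset.le_card_sdiff bad Ω
      omega
    have h2 : (Ω.card : ℝ) ≤ (Ω \ bad).card + bad.card := by exact_mod_cast h1
    have h3 : (bad.card : ℝ) ≤ cnt k Q σ β := by exact_mod_cast hbadcard
    linarith
  · intro P hP
    obtain ⟨⟨l, p⟩, hω, rfl⟩ := Finset.mem_image.1 hP
    rw [Finset.mem_sdiff, hΩ, Finset.mem_sigma, hG, Finset.mem_filter] at hω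
    exact ⟨l, hω.1.1, p, rfl, hω.1.2.2.2⟩
  · intro P hP P' hP' hne
    obtain ⟨ω, hω, rfl⟩ := Finset.mem_image.1 hP
    obtain ⟨ω', hω', rfl⟩ := Finset.mem_image.1 hP'
    refine (hsep ω hω ω' hω' ?_).le
    rintro rfl
    exact hne rfl
  · intro z r hr
    set R : ℕ × (Fin k → ℕ) → Finset ℕ := fun l => (Finset.range M).filter fun p => |Pt β l p - z| ≤ r with hR
    have hsub : (F.filter fun P => |P - z| ≤ r) ⊆ ((lab k Q).sigma R).image fun ω => Pt β ω.1 ω.2 := by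
      intro P hP
      rw [Finset.mem_filter] at hP
      obtain ⟨⟨l, p⟩, hω, rfl⟩ := Finset.mem_image.1 hP.1
      rw [Finset.mem_sdiff, hΩ, Finset.mem_sigma, hG, Finset.mem_filter] at hω
      rw [Finset.mem_image]
      refine ⟨⟨l, p⟩, ?_, rfl⟩
      rw [Finset.mem_sigma, hR, Finset.mem_filter]
      exact ⟨hω.1.1, hω.1.2.1, hP.2⟩
    have h1 : (F.filter fun P => |P - z| ≤ r).card ≤ ∑ l ∈ lab k Q, (R l).card := by
      rw [← Finset.card_sigma]
      exact (Finset.card_le_card hsub).trans Finset.card_image_le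
    calc _ ≤ ((∑ l ∈ lab k Q, (R l).card : ℕ) : ℝ) := by exact_mod_cast h1
      _ = ∑ l ∈ lab k Q, ((R l).card : ℝ) := by push_cast; rfl
      _ ≤ _ := by
        rw [← nsmul_eq_mul]
        apply Finset.sum_le_card_nsmul
        intro l hl
        obtain ⟨h1, h2, h3, -⟩ := mem_lab hl
        have hq0 : (0 : ℝ) < l.1 := by exact_mod_cast h3.pos
        have hq2 : (l.1 : ℝ) ≤ 4 * Q := by exact_mod_cast h2
        have h4 := nat_sep_count (R l) one_pos (by intros; omega) (∑ i, (l.2 i : ℝ) * β i + l.1 * z) (l.1 * r)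
          (by positivity) (by
            intro p hp
            rw [hR, Finset.mem_filter] at hp
            have := hp.2
            have he : (p : ℝ) - (∑ i, (l.2 i : ℝ) * β i + l.1 * z) = l.1 * (Pt β l p - z) := by
              unfold Pt; field_simp; ring
            rw [he, abs_mul, abs_of_pos hq0]
            gcongr)
        push_cast at h4
        nlinarith

/-- first coordinates giving good approximations -/
def Uset (k : ℕ) (β : Fin k → ℝ) (v : ℕ → ℝ) (j : ℕ) : Set ℝ :=
  {a | ∃ x : Fin (k + 1) → ℤ, cone 1 x ∧ j ≤ Hgt x ∧
    dnint (∑ i, (x i : ℝ) * (Fin.cons a β : Fin (k + 1) → ℝ) i) ≤ (Hgt x : ℝ) ^ (-(v j))}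

lemma sg_small (k K : ℕ) (hK : 4 ≤ K) : 16 * ((2 ^ K : ℕ) : ℝ) ^ 2 * sg k K ≤ 1 / 4 := by
  unfold sg
  push_cast
  have h2 : (1 : ℝ) ≤ ((2 : ℝ) ^ K) ^ k := one_le_pow₀ (one_le_pow₀ (by norm_num))
  have h3 : (64 : ℝ) ≤ ((K : ℝ) + 1) ^ 5 := by
    have : (4 : ℝ) ≤ K := by exact_mod_cast hK
    calc (64 : ℝ) ≤ (4 + 1) ^ 5 := by norm_num
      _ ≤ _ := by gcongr
  rw [pow_add, div_div, mul_one_div, div_le_div_iff₀ (by positivity) (by norm_num)]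
  have h4 : 0 < ((2 : ℝ) ^ K) ^ 2 := by positivity
  have h5 : 64 ≤ ((2 : ℝ) ^ K) ^ k * ((K : ℝ) + 1) ^ 5 := by nlinarith
  nlinarith

lemma lab_card (k Q : ℕ) : (lab k Q).card = (qs Q).card * Q ^ k := by
  rw [lab, Finset.card_product, Fintype.card_piFinset]
  simp

lemma Uset_mem {k Q : ℕ} {β : Fin k → ℝ} {v : ℕ → ℝ} {j : ℕ} (hv : 0 ≤ v j) (hj : j ≤ Q)
    {l : ℕ × (Fin k → ℕ)} (hl : l ∈ lab k Q) (p : ℕ) {y : ℝ}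
    (hy : |y - Pt β l p| ≤ (4 * (Q : ℝ)) ^ (-(v j + 1))) : y ∈ Uset k β v j := by
  obtain ⟨h1, h2, h3, h4⟩ := mem_lab hl
  have hq0 : (0 : ℝ) < l.1 := by exact_mod_cast h3.pos
  have hq2 : (l.1 : ℝ) ≤ 4 * Q := by exact_mod_cast h2
  have hQ : 0 < 4 * (Q : ℝ) := by linarith
  set x : Fin (k + 1) → ℤ := Fin.cons (l.1 : ℤ) (fun i => (l.2 i : ℤ)) with hx
  have hH : Hgt x = l.1 := by
    apply le_antisymm
    · apply Finset.sup_le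
      intro i _
      refine Fin.cases ?_ (fun i => ?_) i
      · simp [hx]
      · have := h4 i
        simp [hx]; omega
    · have := Finset.le_sup (f := fun i => (x i).natAbs) (Finset.mem_univ 0)
      simpa [hx, Hgt] using this
  refine ⟨x, ?_, by rw [hH]; omega, ?_⟩
  · unfold cone
    have e1 : l.1 ≤ ((Finset.univ.filter fun i : Fin (k + 1) => (i : ℕ) < 1).sup fun i => (x i).natAbs) := by
      have := Finset.le_sup (f := fun i => (x i).natAbs)
        (show (0 : Fin (k + 1)) ∈ Finset.univ.filter fun i : Fin (k + 1) => (i : ℕ) < 1 by simp)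
      simpa [hx] using this
    refine lt_of_lt_of_le ?_ e1
    rw [Finset.sup_lt_iff (by simpa using h3.pos)]
    intro i
    refine Fin.cases ?_ (fun i => ?_) i
    · simp
    · intro _
      have := h4 i
      simp [hx]; omega
  · rw [hH]
    have e1 : ∑ i, (x i : ℝ) * (Fin.cons y β : Fin (k + 1) → ℝ) i - ((p : ℤ) : ℝ) = l.1 * (y - Pt β l p) := by
      rw [Fin.sum_univ_succ]
      simp only [hx, Fin.cons_zero, Fin.cons_succ, Pt]
      push_cast
      field_simp
      ring
    calc dnint _ ≤ |∑ i, (x i : ℝ) * (Fin.cons y β : Fin (k + 1) → ℝ) i - ((p : ℤ) : ℝ)| := round_le _ _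
      _ = l.1 * |y - Pt β l p| := by rw [e1, abs_mul, abs_of_pos hq0]
      _ ≤ (4 * (Q : ℝ)) * (4 * (Q : ℝ)) ^ (-(v j + 1)) := by gcongr
      _ = (4 * (Q : ℝ)) ^ (-(v j)) := by
          nth_rewrite 1 [← Real.rpow_one (4 * (Q : ℝ))]
          rw [← Real.rpow_add hQ]; congr 1; ring
      _ ≤ _ := Real.rpow_le_rpow_of_nonpos hq0 hq2 (by linarith)

set_option maxHeartbeats 1000000 in
lemma sys_of_generic {k : ℕ} {m t : ℝ} (ht : 0 < t) (ht1 : t < 1) (htm : t * (m + 1) = k + 2)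
    {v : ℕ → ℝ} (hv : ∀ j, 0 ≤ v j) (hvm : ∀ j, v j < m) {β : Fin k → ℝ} (hβ : β ∈ Set.Icc (0 : Fin k → ℝ) 1)
    (hgen : ∀ᶠ K : ℕ in Filter.atTop,
      (cnt k (2 ^ K) (sg k K) β : ℝ) ≤ ((2 : ℝ) ^ K) ^ (k + 2) / ((K : ℝ) + 1) ^ 3) :
    Sys t 36 (Uset k β v) := by
  intro j a b ha hab hb η hη
  set L := b - a with hL
  have hL0 : 0 < L := by linarith
  set e : ℝ := (v j + 1) * t with he
  set δ : ℝ := (k + 2) - e with hδ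
  have hδ0 : 0 < δ := by
    have := mul_lt_mul_of_pos_right (show v j + 1 < m + 1 by linarith [hvm j]) ht
    rw [hδ, he]; linarith
  set c0 : ℝ := (4 : ℝ) ^ (-e) with hc0
  have hc0p : 0 < c0 := by positivity
  have hr1 : (1 : ℝ) < 2 ^ δ := Real.one_lt_rpow (by norm_num) hδ0
  have hr2 : (1 : ℝ) < 2 ^ (1 - t) := Real.one_lt_rpow (by norm_num) (by linarith)
  obtain ⟨K, E1, E2, E3, E4, E5, E6, E7, E8, E9, E10⟩ := (hgen.and (qs_card.and ((polyexp 0 one_lt_two (1 / η)).and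
    ((polyexp 0 one_lt_two (12 / L)).and ((Filter.eventually_ge_atTop ⌈4 / L⌉₊).and
    ((polyexp 2 hr1 (8 / (L * η * c0))).and ((polyexp 7 hr2 (16 / (L * η))).and
    ((Filter.eventually_ge_atTop 4).and ((Filter.eventually_ge_atTop j).and
      (Filter.eventually_ge_atTop 0)))))))))).exists
  set Q : ℕ := 2 ^ K with hQ
  have hQR : (Q : ℝ) = 2 ^ K := by rw [hQ]; push_cast; rfl
  have hQ0 : (0 : ℝ) < Q := by rw [hQR]; positivity
  have hQ1 : (1 : ℝ) ≤ Q := by rw [hQR]; exact one_le_pow₀ (by norm_num)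
  rw [← hQR] at E1 E2 E3 E4
  rw [pow_zero, mul_one] at E3 E4
  set ρ : ℝ := (4 * (Q : ℝ)) ^ (-(v j + 1)) with hρ
  have hρ0 : 0 < ρ := by positivity
  have hρQ : ρ ≤ 1 / (4 * Q) := by
    rw [hρ, one_div, ← Real.rpow_neg_one]
    exact Real.rpow_le_rpow_of_exponent_le (by linarith) (by linarith [hv j])
  rw [div_le_iff₀ hη] at E3
  rw [div_le_iff₀ hL0] at E4
  rw [div_mul_eq_mul_div, div_le_iff₀ (by positivity)] at E6 E7
  have E5' : 4 ≤ L * ((K : ℝ) + 1) := by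
    have := (Nat.ceil_le).1 E5
    rw [div_le_iff₀ hL0] at this
    nlinarith
  have hρ4 : ρ * (4 * Q) ≤ 1 := by rwa [le_div_iff₀ (by positivity)] at hρQ
  set X : ℝ := (Q : ℝ) ^ (k + 2) with hX
  have hX0 : 0 < X := by positivity
  set κ : ℝ := (K : ℝ) + 1 with hκ
  have hκ0 : 0 < κ := by positivity
  have hlab : X / κ ^ 2 ≤ (lab k Q).card * Q := by
    rw [lab_card]
    push_cast
    calc X / κ ^ 2 = Q / κ ^ 2 * Q ^ k * Q := by rw [hX]; ring
      _ ≤ _ := by gcongr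
  have hσ0 : 0 < sg k K := by unfold sg; positivity
  have hσX : 1 / sg k K = X * κ ^ 5 := by
    unfold sg; rw [hX, ← hQR]; field_simp; rw [hκ]
  obtain ⟨F, F1, F2, F3, F4⟩ := det (Q := Q) hβ ha hb hρ0 (by
      rw [← hL]
      have : (48 * ρ) * Q ≤ L * Q := by linarith
      have := le_of_mul_le_mul_right this hQ0
      linarith) (by rw [← hL]; exact E4) hσ0 (sg_small k K E8) (by
      calc 4 * (cnt k Q (sg k K) β : ℝ) ≤ 4 * (X / κ ^ 3) := by gcongr
        _ = X / κ ^ 2 * (4 / κ) := by field_simp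
        _ ≤ X / κ ^ 2 * L := by
            gcongr
            rw [div_le_iff₀ hκ0]; exact E5'
        _ ≤ _ := by gcongr)
  rw [← hL] at F1
  have hF1 : X * L / (4 * κ ^ 2) ≤ F.card := by
    refine le_trans ?_ F1
    calc X * L / (4 * κ ^ 2) = X / κ ^ 2 * L / 4 := by field_simp
      _ ≤ _ := by gcongr
  have hFpos : (0 : ℝ) < F.card := lt_of_lt_of_le (by positivity) hF1
  refine ⟨F, ρ, ?_, hρ0, ?_, ?_, ?_⟩
  · rw [← Finset.card_pos]; exact_mod_cast hFpos
  · have : (4 * ρ) * Q ≤ η * Q := by linarith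
    have := le_of_mul_le_mul_right this hQ0
    linarith
  · intro P hP
    obtain ⟨l, hl, p, hPp, h1, h2⟩ := F2 P hP
    refine ⟨by linarith, by linarith, ?_⟩
    intro y hy
    apply Uset_mem (hv j) _ hl p
    · rw [← hPp, ← hρ, abs_le]; constructor <;> linarith [hy.1, hy.2]
    · calc j ≤ K := E9
        _ ≤ 2 ^ K := Nat.lt_two_pow_self.le
  · intro z r hr
    have hr0 : 0 < r := lt_of_lt_of_le hρ0 hr
    rcases le_or_gt (1 / (Q : ℝ)) r with hrQ | hrQ
    · have h1 : 1 ≤ Q * r := by rw [div_le_iff₀ hQ0] at hrQ; linarith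
      calc _ ≤ (lab k Q).card * (8 * Q * r + 1) := F4 z r hr0.le
        _ ≤ (lab k Q).card * (9 * (Q * r)) := by gcongr; linarith
        _ = ((lab k Q).card * Q * L / 4) * (36 * r / L) := by field_simp; ring
        _ ≤ F.card * (36 * r / L) := by gcongr
        _ ≤ _ := by
          gcongr
          have : 0 < η * r ^ t := by positivity
          linarith
    · have h1 := sep_count F hσ0 F3 z r hr0.le
      have hrt : 0 < r ^ t := by positivity
      set Y : ℝ := ((2 : ℝ) ^ (1 - t)) ^ K with hY
      have hY0 : 0 < Y := by positivity
      have hYQ : Y = (Q : ℝ) ^ (1 - t) := by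
        rw [hY, hQR, ← Real.rpow_natCast, ← Real.rpow_natCast, ← Real.rpow_mul (by norm_num),
          ← Real.rpow_mul (by norm_num), mul_comm]
      have hr2 : r ^ (1 - t) ≤ 1 / Y := by
        rw [hYQ, one_div, ← Real.inv_rpow hQ0.le, ← one_div]
        exact Real.rpow_le_rpow hr0.le hrQ.le (by linarith)
      have hrr : r = r ^ t * r ^ (1 - t) := by
        rw [← Real.rpow_add hr0]; simp
      have h2 : 2 * r / sg k K ≤ (X * L / (4 * κ ^ 2)) * (η * r ^ t) / 2 := by
        calc 2 * r / sg k K = 2 * r * (1 / sg k K) := by ring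
          _ = 2 * (r ^ t * r ^ (1 - t)) * (X * κ ^ 5) := by rw [hσX, ← hrr]
          _ ≤ 2 * (r ^ t * (1 / Y)) * (X * κ ^ 5) := by gcongr
          _ = X * r ^ t / (8 * κ ^ 2) * (16 * κ ^ 7 / Y) := by field_simp; norm_num
          _ ≤ X * r ^ t / (8 * κ ^ 2) * (L * η) := by
              gcongr
              rw [div_le_iff₀ hY0]; linarith
          _ = _ := by field_simp; norm_num
      have hXe : X * ρ ^ t = c0 * ((2 : ℝ) ^ δ) ^ K := by
        have e1 : ((2 : ℝ) ^ δ) ^ K = (Q : ℝ) ^ δ := by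
          rw [hQR, ← Real.rpow_natCast, ← Real.rpow_natCast, ← Real.rpow_mul (by norm_num),
            ← Real.rpow_mul (by norm_num), mul_comm]
        rw [e1, hρ, ← Real.rpow_mul (by positivity), show -(v j + 1) * t = -e by rw [he]; ring,
          Real.mul_rpow (by norm_num) hQ0.le, ← hc0, hX, ← Real.rpow_natCast,
          show δ = ((k + 2 : ℕ) : ℝ) + -e by rw [hδ]; push_cast; ring, Real.rpow_add hQ0]
        ring
      have h3 : 1 ≤ (X * L / (4 * κ ^ 2)) * (η * r ^ t) / 2 := by
        calc 1 ≤ L * η * (c0 * ((2 : ℝ) ^ δ) ^ K) / (8 * κ ^ 2) := by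
              rw [le_div_iff₀ (by positivity)]; linarith
          _ = L * η * (X * ρ ^ t) / (8 * κ ^ 2) := by rw [hXe]
          _ ≤ L * η * (X * r ^ t) / (8 * κ ^ 2) := by gcongr
          _ = _ := by field_simp; norm_num
      calc _ ≤ 1 + 2 * r / sg k K := h1
        _ ≤ (X * L / (4 * κ ^ 2)) * (η * r ^ t) := by linarith
        _ ≤ F.card * (η * r ^ t) := by gcongr
        _ ≤ _ := by
          have : 0 < 36 * r / L := by positivity
          exact mul_le_mul_of_nonneg_left (by linarith) hFpos.le

lemma EM_anti {n ℓ : ℕ} {M M' : ℝ} (h : M ≤ M') : EM n ℓ M' ⊆ EM n ℓ M := by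
  intro α hα
  refine Set.Infinite.mono ?_ hα
  rintro x ⟨h1, h2, h3⟩
  refine ⟨h1, h2, h3.trans ?_⟩
  have := Hgt_pos_of_cone h1
  exact Real.rpow_le_rpow_of_exponent_le (by exact_mod_cast this) (by linarith)

lemma mu_subset {n ℓ : ℕ} {m M : ℝ} (hm : 0 < m) (hM : M < m) : {α | mu n ℓ α = m} ⊆ EM n ℓ M := by
  intro α hα
  have hα' : mu n ℓ α = m := hα
  unfold mu at hα'
  obtain ⟨M', hM', hlt⟩ := exists_lt_of_lt_csSup (s := {m : ℝ | 0 ≤ m ∧ {x : Fin n → ℤ | cone ℓ x ∧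
    0 < dnint (∑ i, (x i : ℝ) * α i) ∧
    dnint (∑ i, (x i : ℝ) * α i) ≤ (Hgt x : ℝ) ^ (-m)}.Infinite}) (b := M) (by
      rw [Set.nonempty_iff_ne_empty]
      intro h
      rw [h, Real.sSup_empty] at hα'
      linarith) (by rw [hα']; exact hM)
  exact EM_anti hlt.le hM'.2

lemma upper {n ℓ : ℕ} (hn : 0 < n) {m : ℝ} (hm : (n : ℝ) < m) :
    dimH {α | mu n ℓ α = m} ≤ ENNReal.ofReal ((n : ℝ) - 1 + ((n : ℝ) + 1) / (m + 1)) := by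
  apply dimH_le
  intro d hd
  have hn1 : (1 : ℝ) ≤ n := by exact_mod_cast hn
  have hs0 : 0 ≤ (n : ℝ) - 1 + ((n : ℝ) + 1) / (m + 1) := by
    have : 0 < m + 1 := by linarith
    have : 0 < ((n : ℝ) + 1) / (m + 1) := by positivity
    linarith
  by_contra hcon
  push Not at hcon
  rw [← ENNReal.ofReal_coe_nnreal] at hcon
  have hlt := (ENNReal.ofReal_lt_ofReal_iff_of_nonneg hs0).1 hcon
  -- pick M below m
  have hcont : ContinuousAt (fun M : ℝ => (n : ℝ) - 1 + ((n : ℝ) + 1) / (M + 1)) m := by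
    apply ContinuousAt.add continuousAt_const
    apply ContinuousAt.div continuousAt_const (by fun_prop)
    linarith
  have hev := hcont.eventually (gt_mem_nhds hlt)
  have hev2 : ∀ᶠ M in nhdsWithin m (Set.Iio m), (n : ℝ) - 1 + ((n : ℝ) + 1) / (M + 1) < d :=
    nhdsWithin_le_nhds hev
  have hev3 : ∀ᶠ M in nhdsWithin m (Set.Iio m), 0 < M :=
    nhdsWithin_le_nhds (lt_mem_nhds (by linarith))
  obtain ⟨M, h1, h2, h3⟩ := (hev2.and (hev3.and self_mem_nhdsWithin)).exists
  have h4 := measure_mono_null (mu_subset (n := n) (ℓ := ℓ) (by linarith : 0 < m) h3) (EM_null hn h2.le h1)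
  rw [h4] at hd
  simp at hd

lemma cover_null {X : Type*} [MetricSpace X] [Nonempty X] [MeasurableSpace X] [BorelSpace X] {N : Set X} {d : ℝ}
    (hd : 0 < d) (hN : Measure.hausdorffMeasure d N = 0) {ε : ℝ} (hε : 0 < ε) :
    ∃ (z : ℕ → X) (r : ℕ → ℝ), (∀ i, 0 < r i) ∧ N ⊆ ⋃ i, Metric.closedBall (z i) (r i) ∧
      ∑' i, ENNReal.ofReal (r i ^ d) ≤ ENNReal.ofReal ε := by
  classical
  rw [Measure.hausdorffMeasure_apply] at hN
  have h1 : (⨅ (t : ℕ → Set X) (_ : N ⊆ ⋃ n, t n) (_ : ∀ n, Metric.ediam (t n) ≤ 1),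
          ∑' n, ⨆ _ : (t n).Nonempty, Metric.ediam (t n) ^ d) < ENNReal.ofReal (ε / 2) := by
    refine lt_of_le_of_lt ?_ (ENNReal.ofReal_pos.2 (by positivity : 0 < ε / 2))
    rw [← hN]
    exact le_iSup₂ (f := fun (r : ENNReal) (_ : 0 < r) => ⨅ (t : ℕ → Set X) (_ : N ⊆ ⋃ n, t n)
      (_ : ∀ n, Metric.ediam (t n) ≤ r), ∑' n, ⨆ _ : (t n).Nonempty, Metric.ediam (t n) ^ d) 1 one_pos
  simp only [iInf_lt_iff] at h1
  obtain ⟨t, ht1, ht2, ht3⟩ := h1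
  set D : ℕ → ℝ := fun i => (Metric.ediam (t i)).toReal with hD
  have hfin : ∀ i, Metric.ediam (t i) ≠ ⊤ := fun i => ne_top_of_le_ne_top ENNReal.one_ne_top (ht2 i)
  set δ : ℕ → ℝ := fun i => ε / 2 * (1 / 2) ^ i / 2 with hδ
  have hδ0 : ∀ i, 0 < δ i := fun i => by rw [hδ]; positivity
  have hD0 : ∀ i, 0 ≤ D i := fun i => ENNReal.toReal_nonneg
  have hpos : ∀ i, 0 < D i ^ d + δ i := fun i => by
    have := Real.rpow_nonneg (hD0 i) d
    linarith [hδ0 i]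
  have hrd : ∀ i, ((D i ^ d + δ i) ^ (1 / d)) ^ d = D i ^ d + δ i := fun i => by
    rw [← Real.rpow_mul (hpos i).le, one_div_mul_cancel hd.ne', Real.rpow_one]
  refine ⟨fun i => if h : (t i).Nonempty then h.some else Classical.arbitrary X,
    fun i => (D i ^ d + δ i) ^ (1 / d), fun i => Real.rpow_pos_of_pos (hpos i) _, ?_, ?_⟩
  · intro x hx
    obtain ⟨i, hi⟩ := Set.mem_iUnion.1 (ht1 hx)
    rw [Set.mem_iUnion]
    refine ⟨i, ?_⟩
    have hne : (t i).Nonempty := ⟨x, hi⟩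
    beta_reduce
    rw [dif_pos hne, Metric.mem_closedBall]
    have e1 : dist x hne.some ≤ D i := by
      rw [dist_edist]
      exact ENNReal.toReal_mono (hfin i) (Metric.edist_le_ediam_of_mem hi hne.some_mem)
    refine e1.trans ?_
    rw [← Real.rpow_le_rpow_iff (hD0 i) (Real.rpow_nonneg (hpos i).le _) hd, hrd]
    linarith [hδ0 i]
  · simp only [hrd]
    calc ∑' i, ENNReal.ofReal (D i ^ d + δ i)
        ≤ ∑' i, ((⨆ _ : (t i).Nonempty, Metric.ediam (t i) ^ d) + ENNReal.ofReal (δ i)) := by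
          apply ENNReal.tsum_le_tsum
          intro i
          rw [ENNReal.ofReal_add (Real.rpow_nonneg (hD0 i) d) (hδ0 i).le]
          gcongr
          rw [← ENNReal.ofReal_rpow_of_nonneg (hD0 i) hd.le, hD, ENNReal.ofReal_toReal (hfin i)]
          rcases (t i).eq_empty_or_nonempty with h | h
          · simp [h, hd]
          · simp [h]
      _ = (∑' i, ⨆ _ : (t i).Nonempty, Metric.ediam (t i) ^ d) + ∑' i, ENNReal.ofReal (δ i) := ENNReal.tsum_add
      _ ≤ ENNReal.ofReal (ε / 2) + ENNReal.ofReal (ε / 2) := by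
          gcongr
          have hs : HasSum δ (ε / 2) := by
            have := (hasSum_geometric_two' (ε / 2))
            convert this using 1
            funext i; rw [hδ]; simp only [one_div, inv_pow]; ring
          rw [← ENNReal.ofReal_tsum_of_nonneg (fun i => (hδ0 i).le) hs.summable, hs.tsum_eq]
      _ = _ := by
          rw [← ENNReal.ofReal_add (by positivity) (by positivity)]; congr 1; ring

lemma slice {k : ℕ} {t ε : ℝ} (ht : 0 < t) (z : ℕ → Fin (k + 1) → ℝ) (r : ℕ → ℝ) (hr : ∀ i, 0 < r i)
    (hsum : ∑' i, ENNReal.ofReal (r i ^ (k + t)) ≤ ENNReal.ofReal ε) (p : (Fin k → ℝ) → Prop)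
    (hp : ∀ᵐ β : Fin k → ℝ, β ∈ Set.Icc (0 : Fin k → ℝ) 1 → p β) :
    ∃ β ∈ Set.Icc (0 : Fin k → ℝ) 1, p β ∧
      ∑' i : {i // β ∈ Metric.closedBall (Fin.tail (z i)) (r i)}, ENNReal.ofReal (r i ^ t) ≤
        ENNReal.ofReal (2 ^ k * ε) := by
  classical
  set μ : Measure (Fin k → ℝ) := volume.restrict (Set.Icc (0 : Fin k → ℝ) 1) with hμ
  have hprob : IsProbabilityMeasure μ := ⟨by
    rw [hμ, Measure.restrict_apply_univ, Real.volume_Icc_pi]; simp⟩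
  set g : (Fin k → ℝ) → ENNReal := fun β => ∑' i, (Metric.closedBall (Fin.tail (z i)) (r i)).indicator
    (fun _ => ENNReal.ofReal (r i ^ t)) β with hg
  have hintg : ∫⁻ β, g β ∂μ ≤ ENNReal.ofReal (2 ^ k * ε) := by
    calc ∫⁻ β, g β ∂μ ≤ ∫⁻ β, g β := lintegral_mono' Measure.restrict_le_self le_rfl
      _ = ∑' i, ENNReal.ofReal (r i ^ t) * volume (Metric.closedBall (Fin.tail (z i)) (r i)) := by
          rw [hg, lintegral_tsum]
          · congr 1; funext i
            rw [lintegral_indicator_const Metric.isClosed_closedBall.measurableSet]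
          · intro i
            exact (measurable_const.indicator Metric.isClosed_closedBall.measurableSet).aemeasurable
      _ = ∑' i, ENNReal.ofReal (2 ^ k) * ENNReal.ofReal (r i ^ (k + t)) := by
          congr 1; funext i
          rw [Real.volume_pi_closedBall _ (hr i).le, ← ENNReal.ofReal_mul (by have := hr i; positivity),
            ← ENNReal.ofReal_mul (by positivity), Fintype.card_fin, Real.rpow_add (hr i), Real.rpow_natCast]
          congr 1; ring
      _ ≤ ENNReal.ofReal (2 ^ k) * ENNReal.ofReal ε := by
          rw [ENNReal.tsum_mul_left]; gcongr
      _ = _ := by rw [← ENNReal.ofReal_mul (by positivity)]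
  have hnull : μ {β | ¬ (β ∈ Set.Icc (0 : Fin k → ℝ) 1 ∧ p β)} = 0 := by
    have h1 : ∀ᵐ β ∂μ, β ∈ Set.Icc (0 : Fin k → ℝ) 1 := ae_restrict_mem measurableSet_Icc
    have h2 : ∀ᵐ β ∂μ, p β := (ae_restrict_iff' measurableSet_Icc).2 hp
    exact h1.and h2
  have hgm : AEMeasurable g μ :=
    (Measurable.ennreal_tsum fun i =>
      measurable_const.indicator Metric.isClosed_closedBall.measurableSet).aemeasurable
  obtain ⟨β, h1, h2⟩ := exists_notMem_null_le_lintegral hgm hnull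
  have h1' : β ∈ Set.Icc (0 : Fin k → ℝ) 1 ∧ p β := by
    by_contra hc; exact h1 hc
  refine ⟨β, h1'.1, h1'.2, ?_⟩
  refine le_trans (le_of_eq ?_) (h2.trans hintg)
  rw [hg]
  simp only
  refine (tsum_subtype {i | β ∈ Metric.closedBall (Fin.tail (z i)) (r i)}
    (fun i => ENNReal.ofReal (r i ^ t))).trans ?_
  congr 1

lemma cone_mono {n ℓ : ℕ} (hℓ : 1 ≤ ℓ) {x : Fin n → ℤ} (h : cone 1 x) : cone ℓ x := by
  unfold cone at *
  refine lt_of_le_of_lt (Finset.sup_mono ?_) (lt_of_lt_of_le h (Finset.sup_mono ?_))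
  · intro i hi; simp only [Finset.mem_filter, Finset.mem_univ, true_and] at *; omega
  · intro i hi; simp only [Finset.mem_filter, Finset.mem_univ, true_and] at *; omega

lemma lower {k ℓ : ℕ} (hℓ : 1 ≤ ℓ) {m : ℝ} (hm : (k : ℝ) + 1 < m) :
    Measure.hausdorffMeasure ((k : ℝ) + ((k : ℝ) + 2) / (m + 1))
      {α : Fin (k + 1) → ℝ | mu (k + 1) ℓ α = m} ≠ 0 := by
  intro hzero
  have hk : (0 : ℝ) ≤ k := Nat.cast_nonneg k
  have hm1 : 0 < m + 1 := by linarith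
  set t : ℝ := ((k : ℝ) + 2) / (m + 1) with ht
  have ht0 : 0 < t := by positivity
  have ht1 : t < 1 := by rw [ht, div_lt_one hm1]; linarith
  have htm : t * (m + 1) = k + 2 := div_mul_cancel₀ _ hm1.ne'
  set N : Set (Fin (k + 1) → ℝ) := {α | mu (k + 1) ℓ α = m} ∪
    ((⋃ j : ℕ, EM (k + 1) ℓ (m + 1 / ((j : ℝ) + 1))) ∪
    ⋃ y : {x : Fin (k + 1) → ℤ // x ≠ 0} × ℤ, {α | ∑ i, (y.1.1 i : ℝ) * α i = y.2}) with hNdef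
  have hN : Measure.hausdorffMeasure ((k : ℝ) + t) N = 0 := by
    refine measure_union_null hzero (measure_union_null (measure_iUnion_null fun j => ?_)
      (measure_iUnion_null fun y => ?_))
    · have hj : (0 : ℝ) < 1 / ((j : ℝ) + 1) := by positivity
      apply EM_null (Nat.succ_pos k) (by linarith)
      have : ((k : ℝ) + 2) / (m + 1 / ((j : ℝ) + 1) + 1) < t := by
        rw [ht]; apply div_lt_div_of_pos_left (by linarith) hm1; linarith
      push_cast
      rw [show (k : ℝ) + 1 + 1 = k + 2 by ring]
      linarith
    · apply hyperplane_null _ _ y.1.2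
      push_cast; linarith
  obtain ⟨c, hc, hA⟩ := lemmaA ht0 ht1 (by norm_num : (1 : ℝ) ≤ 36)
  obtain ⟨z, r, hr, hcov, hsum⟩ := cover_null (by linarith : (0 : ℝ) < k + t) hN
    (by positivity : 0 < c / 2 ^ k)
  obtain ⟨β, hβ, hgen, hβs⟩ := slice ht0 z r hr hsum _ (generic k)
  rw [mul_div_cancel₀ _ (by positivity)] at hβs
  set v : ℕ → ℝ := fun j => max 0 (m - 1 / ((j : ℝ) + 1)) with hv
  have hsys : Sys t 36 (Uset k β v) := by
    apply sys_of_generic ht0 ht1 htm (fun j => le_max_left _ _) (fun j => ?_) hβ hgen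
    have hj : (0 : ℝ) < 1 / ((j : ℝ) + 1) := by positivity
    exact max_lt (by linarith) (by linarith)
  obtain ⟨a, haU, haz⟩ := hA (ι := {i // β ∈ Metric.closedBall (Fin.tail (z i)) (r i)}) (Uset k β v) hsys
    (fun i => z i 0) (fun i => r i) (fun i => hr i) hβs
  set α : Fin (k + 1) → ℝ := Fin.cons a β with hα
  have hαN : α ∉ N := by
    intro h
    obtain ⟨i, hi⟩ := Set.mem_iUnion.1 (hcov h)
    rw [Metric.mem_closedBall] at hi
    have hb : β ∈ Metric.closedBall (Fin.tail (z i)) (r i) := by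
      rw [Metric.mem_closedBall, dist_pi_le_iff (hr i).le]
      intro j
      have := (dist_le_pi_dist α (z i) j.succ).trans hi
      simpa [hα, Fin.tail] using this
    have h1 := haz ⟨i, hb⟩
    have h2 := (dist_le_pi_dist α (z i) 0).trans hi
    rw [Real.dist_eq] at h2
    simp only [hα, Fin.cons_zero] at h2
    exact absurd h2 (not_le.2 h1)
  simp only [hNdef, Set.mem_union, Set.mem_iUnion, not_or, not_exists] at hαN
  obtain ⟨hn1, hn2, hn3⟩ := hαN
  apply hn1
  show mu (k + 1) ℓ α = m
  have hlow : ∀ M : ℝ, M < m → α ∈ EM (k + 1) ℓ M := by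
    intro M hM
    obtain ⟨J, hJ⟩ := exists_nat_one_div_lt (sub_pos.2 hM)
    by_contra hfin
    have hfin' := Set.not_infinite.1 hfin
    obtain ⟨B, hB⟩ := (hfin'.image Hgt).bddAbove
    obtain ⟨x, hx1, hx2, hx3⟩ := haU (max J (B + 1))
    have hH : 1 ≤ Hgt x := Hgt_pos_of_cone hx1
    have hxB : Hgt x ≤ B := by
      apply hB
      refine ⟨x, ⟨cone_mono hℓ hx1, ?_, hx3.trans ?_⟩, rfl⟩
      · rw [dnint, abs_pos, sub_ne_zero]
        have hx0 : x ≠ 0 := by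
          rintro rfl
          simp [Hgt] at hH
        exact hn3 (⟨x, hx0⟩, _)
      · refine Real.rpow_le_rpow_of_exponent_le (by exact_mod_cast hH) (neg_le_neg ?_)
        refine le_trans ?_ (le_max_right _ _)
        have : 1 / (((max J (B + 1) : ℕ) : ℝ) + 1) ≤ 1 / ((J : ℝ) + 1) := by
          apply one_div_le_one_div_of_le (by positivity)
          have : (J : ℝ) ≤ ((max J (B + 1) : ℕ) : ℝ) := by exact_mod_cast le_max_left _ _
          linarith
        linarith
    have := le_max_right J (B + 1)
    omega
  unfold mu
  apply csSup_eq_of_forall_le_of_forall_lt_exists_gt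
  · exact ⟨0, le_rfl, hlow 0 (by linarith)⟩
  · rintro M ⟨_, hM⟩
    by_contra hlt
    push Not at hlt
    obtain ⟨j, hj⟩ := exists_nat_one_div_lt (sub_pos.2 hlt)
    exact hn2 j (EM_anti (by linarith) hM)
  · intro w hw
    refine ⟨(max 0 w + m) / 2, ⟨?_, hlow _ ?_⟩, ?_⟩
    · have := le_max_left 0 w; linarith
    · have := max_lt (by linarith : 0 < m) hw; linarith
    · have := le_max_right 0 w; linarith

theorem dimH_exact_order (n ℓ : ℕ) (hℓ : 1 ≤ ℓ) (hn : ℓ ≤ n) (m : ℝ) (hm : (n : ℝ) < m) :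
    dimH {α : Fin n → ℝ | mu n ℓ α = m} =
      ENNReal.ofReal ((n : ℝ) - 1 + ((n : ℝ) + 1) / (m + 1)) ∧
    {α : Fin n → ℝ | mu n ℓ α = m}.Nonempty := by
  obtain ⟨k, rfl⟩ : ∃ k, n = k + 1 := ⟨n - 1, by omega⟩
  have hlow := lower (k := k) hℓ (m := m) (by exact_mod_cast hm)
  have hk : (0 : ℝ) ≤ k := Nat.cast_nonneg k
  have hm0 : 0 < m + 1 := by push_cast at hm; linarith
  have e : ((k + 1 : ℕ) : ℝ) - 1 + (((k + 1 : ℕ) : ℝ) + 1) / (m + 1) = (k : ℝ) + ((k : ℝ) + 2) / (m + 1) := by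
    push_cast
    rw [show (k : ℝ) + 1 + 1 = k + 2 by ring]; ring
  refine ⟨le_antisymm (upper (Nat.succ_pos k) hm) ?_, ?_⟩
  · rw [e]
    apply le_dimH_of_hausdorffMeasure_ne_zero
    rw [Real.coe_toNNReal _ (by positivity)]
    exact hlow
  · rw [Set.nonempty_iff_ne_empty]
    intro h
    rw [h] at hlow
    simp at hlow
end
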